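/- arXiv:2407.08671 — 13 statements merged into one kernel-verified Lean document; each statement's English description precedes it below -/
import Mathlib

section
/- For every real number t > 0 and every ν ∈ [0, 1), the series ∑_{k ∈ ℤ} exp(−t·|k − ν|) converges and equals cosh(t(ν − 1/2)) / sinh(t/2). -/
open Real

/-! The integers split into `k = -n` and `k = n + 1` with `n : ℕ`. Since `0 ≤ ν < 1`, the absolute
value is `n + ν` on the first half and `n + (1 - ν)` on the second, so both halves are geometric
series of ratio `exp (-t)`, and the sum is `(exp (-tν) + exp (-t(1 - ν))) / (1 - exp (-t))`.
Multiplying numerator and denominator by `exp (t/2)` gives the hyperbolic form. -/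

lemma hasSum_exp_neg_mul_nat_add (t a : ℝ) (ht : 0 < t) :
    HasSum (fun n : ℕ => Real.exp (-t * (n + a))) (Real.exp (-t * a) / (1 - Real.exp (-t))) := by
  have h := (hasSum_geometric_of_lt_one (Real.exp_pos (-t)).le
    (Real.exp_lt_one_iff.mpr (by linarith : -t < 0))).mul_left (Real.exp (-t * a))
  rw [← div_eq_mul_inv] at h
  refine h.congr_fun fun n => ?_
  rw [← Real.exp_nat_mul, ← Real.exp_add]
  congr 1
  ring

/-- The heat trace of the D-to-N map of the Aharonov–Bohm magnetic Laplacian on the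
unit disk: for `t > 0` and `ν ∈ [0,1)`, the series `∑_{k ∈ ℤ} exp (-t * |k - ν|)`
converges and equals `cosh (t*(ν - 1/2)) / sinh (t/2)`. -/
theorem stmt_0 (t ν : ℝ) (ht : 0 < t) (hν : ν ∈ Set.Ico (0:ℝ) 1) :
    Summable (fun k : ℤ => Real.exp (-t * |(k : ℝ) - ν|)) ∧
    ∑' k : ℤ, Real.exp (-t * |(k : ℝ) - ν|)
      = Real.cosh (t * (ν - 1/2)) / Real.sinh (t/2) := by
  obtain ⟨h0, h1⟩ := hν
  suffices h : HasSum (fun k : ℤ => Real.exp (-t * |(k : ℝ) - ν|))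
      (Real.cosh (t * (ν - 1/2)) / Real.sinh (t/2)) from ⟨h.summable, h.tsum_eq⟩
  -- After `k ↦ -k`, the term `k = 0` belongs to the half-line on which `|k - ν| = n + ν`.
  rw [← (Equiv.neg ℤ).hasSum_iff]
  have hval : Real.cosh (t * (ν - 1/2)) / Real.sinh (t/2)
      = Real.exp (-t * ν) / (1 - Real.exp (-t))
        + Real.exp (-t * (1 - ν)) / (1 - Real.exp (-t)) := by
    have hs : Real.sinh (t/2) = Real.exp (t/2) * (1 - Real.exp (-t)) / 2 := by
      rw [Real.sinh_eq, mul_sub, ← Real.exp_add]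
      ring_nf
    have hc : Real.cosh (t * (ν - 1/2))
        = Real.exp (t/2) * (Real.exp (-t * ν) + Real.exp (-t * (1 - ν))) / 2 := by
      rw [Real.cosh_eq, mul_add, ← Real.exp_add, ← Real.exp_add]
      ring_nf
    have hne : 1 - Real.exp (-t) ≠ 0 := by
      have := Real.exp_lt_one_iff.mpr (by linarith : -t < 0)
      linarith
    rw [hs, hc]
    field_simp
  rw [hval]
  refine HasSum.of_nat_of_neg_add_one
    ((hasSum_exp_neg_mul_nat_add t ν ht).congr_fun fun n => ?_)
    ((hasSum_exp_neg_mul_nat_add t (1 - ν) ht).congr_fun fun n => ?_)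
  · have hn : (0 : ℝ) ≤ n := n.cast_nonneg
    simp only [Function.comp_apply, Equiv.neg_apply]
    push_cast
    rw [abs_of_nonpos (by linarith)]
    ring_nf
  · have hn : (0 : ℝ) ≤ n := n.cast_nonneg
    simp only [Function.comp_apply, Equiv.neg_apply]
    push_cast
    rw [abs_of_nonneg (by linarith)]
    ring_nf
end

section
/- Fix ν ∈ [0, 1) and let 𝔗(t) = cosh(t(ν − 1/2)) / sinh(t/2) for t > 0. Then, as t → 0⁺, 𝔗(t) − 2/t − (1/6 − ν + ν²)·t = O(t³). -/
/-!
Write `a = ν - 1/2` and `b = 1/6 - ν + ν² = a² - 1/12`. By Taylor's formula for `exp`,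
`cosh (t a) = 1 + a² t²/2 + e₂` with `e₂ = O(t⁴)` and `sinh (t/2) = t/2 + t³/48 + e₁` with
`e₁ = O(t⁵)`. Multiplying the remainder of the expansion by `t * sinh (t/2)`, the terms of order
`t` and `t³` cancel, which leaves `t e₂ - 2 e₁ - b t⁵/48 - b t² e₁ = O(t⁵)`. Since
`t * sinh (t/2) ≥ t²/2`, dividing back gives `O(t³)`.
-/

theorem abs_cosh_sub_taylor_le {x : ℝ} (hx : |x| ≤ 1) :
    |Real.cosh x - (1 + x ^ 2 / 2)| ≤ 5 / 96 * |x| ^ 4 := by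
  have h1 := Real.exp_bound hx (n := 4) (by norm_num)
  have h2 := Real.exp_bound (x := -x) (by simpa using hx) (n := 4) (by norm_num)
  simp only [Finset.sum_range_succ, Finset.sum_range_zero, abs_neg] at h1 h2
  norm_num [Nat.factorial] at h1 h2
  rw [Real.cosh_eq]
  rw [abs_le] at *
  constructor <;> nlinarith

theorem abs_sinh_sub_taylor_le {x : ℝ} (hx : |x| ≤ 1) :
    |Real.sinh x - (x + x ^ 3 / 6)| ≤ 1 / 100 * |x| ^ 5 := by
  have h1 := Real.exp_bound hx (n := 5) (by norm_num)
  have h2 := Real.exp_bound (x := -x) (by simpa using hx) (n := 5) (by norm_num)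
  simp only [Finset.sum_range_succ, Finset.sum_range_zero, abs_neg] at h1 h2
  norm_num [Nat.factorial] at h1 h2
  rw [Real.sinh_eq]
  rw [abs_le] at *
  constructor <;> nlinarith

open Real Filter Asymptotics Topology

/-- Small-`t` expansion of the Aharonov–Bohm heat trace on the disk:
for `ν ∈ [0,1)`, `cosh (t*(ν-1/2))/sinh (t/2) - 2/t - (1/6 - ν + ν²) t = O(t³)`
as `t → 0⁺`. -/
theorem stmt_1 (ν : ℝ) (hν : ν ∈ Set.Ico (0:ℝ) 1) :
    (fun t : ℝ =>
        Real.cosh (t * (ν - 1/2)) / Real.sinh (t/2) - 2/t - (1/6 - ν + ν^2) * t)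
      =O[𝓝[>] (0:ℝ)] fun t : ℝ => t^3 := by
  obtain ⟨h0, h1⟩ := hν
  refine IsBigO.of_bound 1 ?_
  filter_upwards [Ioo_mem_nhdsGT (zero_lt_one' ℝ)] with t ht
  obtain ⟨ht0, ht1⟩ := ht
  have ha : |t * (ν - 1/2)| ≤ t := by
    rw [abs_le]; constructor <;> nlinarith
  have hb : |1/6 - ν + ν^2| ≤ 1/6 := by
    rw [abs_le]; constructor <;> nlinarith [sq_nonneg (ν - 1/2)]
  have hx : |t/2| ≤ t := by
    rw [abs_le]; constructor <;> linarith
  have hc := (abs_cosh_sub_taylor_le (ha.trans ht1.le)).trans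
    (mul_le_mul_of_nonneg_left (pow_le_pow_left₀ (abs_nonneg _) ha 4) (by norm_num))
  have hs := (abs_sinh_sub_taylor_le (hx.trans ht1.le)).trans
    (mul_le_mul_of_nonneg_left (pow_le_pow_left₀ (abs_nonneg _) hx 5) (by norm_num))
  have hs0 : t / 2 ≤ Real.sinh (t/2) := Real.self_le_sinh_iff.2 (by linarith)
  generalize Real.cosh (t * (ν - 1/2)) = c at *
  generalize Real.sinh (t/2) = s at *
  have hspos : 0 < s := by linarith
  obtain ⟨e₂, he₂⟩ : ∃ e, e = c - (1 + (t * (ν - 1/2)) ^ 2 / 2) := ⟨_, rfl⟩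
  obtain ⟨e₁, he₁⟩ : ∃ e, e = s - (t / 2 + (t / 2) ^ 3 / 6) := ⟨_, rfl⟩
  rw [← he₂] at hc
  rw [← he₁] at hs
  have key : c / s - 2/t - (1/6 - ν + ν^2) * t
      = (t * e₂ - 2 * e₁ - (1/6 - ν + ν^2) * (t^5/48 + t^2 * e₁)) / (t * s) := by
    rw [eq_div_iff (by positivity)]
    have : (c / s - 2/t - (1/6 - ν + ν^2) * t) * (t * s)
        = t * c - 2 * s - (1/6 - ν + ν^2) * t^2 * s := by
      field_simp
    rw [this, he₁, he₂]
    ring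
  have ht5 : 0 < t^5 := by positivity
  have b1 : |t * e₂| ≤ 5/96 * t^5 := by
    rw [abs_mul, abs_of_pos ht0]
    nlinarith
  have b2 : |t^5/48 + t^2 * e₁| ≤ t^5/24 := by
    have : |t^2 * e₁| ≤ 1/100 * t^5 := by
      rw [abs_mul, abs_of_pos (by positivity : 0 < t^2)]
      have : t^2 ≤ 1 := by nlinarith
      nlinarith [abs_nonneg e₁]
    rw [abs_le] at *
    constructor <;> linarith
  have b3 : |(1/6 - ν + ν^2) * (t^5/48 + t^2 * e₁)| ≤ 1/6 * (t^5/24) := by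
    rw [abs_mul]
    exact mul_le_mul hb b2 (abs_nonneg _) (by norm_num)
  rw [key, Real.norm_eq_abs, Real.norm_eq_abs, abs_div, abs_of_pos (by positivity : 0 < t * s),
    abs_of_pos (by positivity : 0 < t^3), div_le_iff₀ (by positivity)]
  have b4 : t^5 / 2 ≤ 1 * t^3 * (t * s) := by
    have := mul_le_mul_of_nonneg_left hs0 (by positivity : 0 ≤ t^4)
    nlinarith
  refine le_trans ?_ b4
  rw [abs_le] at *
  constructor <;> linarith
end

section
/- Let k₁, k₂ > 0 and b ∈ ℝ, and set λ± = (1/2)(k₁² + k₂² + b²) ± (1/2)·√(((k₁ − k₂)² + b²)·((k₁ + k₂)² + b²)). Then λ₊·λ₋ = k₁²·k₂², and as t → 0⁺ one has 1/(4·sinh(√λ₊·t)·sinh(√λ₋·t)) − 1/(4·sinh(k₁·t)·sinh(k₂·t)) = −b²/(24·k₁·k₂) + O(t²). -/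
/-!
Everything follows from the expansion `1 / sinh x = 1/x - x/6 + O(x³)` at `0⁺`. Multiplying two
copies gives, for `p, q > 0`,
`1 / (4 sinh (p t) sinh (q t)) = 1 / (4 p q t²) - (p² + q²) / (24 p q) + O(t²)`
(`heatTrace_expansion`). With `p = √λ₊`, `q = √λ₋` one has `p q = k₁ k₂` (determinant) and
`p² + q² = k₁² + k₂² + b²` (trace), so the singular terms of the two heat traces cancel and the
constant terms differ by `-b² / (24 k₁ k₂)`.
-/

open Real Filter Asymptotics Topology

lemma abs_sinh_sub_cubic_le {x : ℝ} (hx : |x| ≤ 1) :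
    |Real.sinh x - x - x ^ 3 / 6| ≤ |x| ^ 5 / 100 := by
  -- Average the degree-4 Taylor estimates of `exp` at `x` and at `-x`.
  have h1 := Real.exp_bound hx (n := 5) (by norm_num)
  have h2 := Real.exp_bound (x := -x) (by simpa using hx) (n := 5) (by norm_num)
  rw [abs_neg] at h2
  norm_num [Finset.sum_range_succ, Nat.factorial] at h1 h2
  rw [Real.sinh_eq]
  rw [abs_le] at *
  constructor <;> nlinarith

lemma abs_inv_sinh_sub_le {x : ℝ} (hx0 : 0 < x) (hx1 : x ≤ 1) :
    |1 / Real.sinh x - (1 / x - x / 6)| ≤ x ^ 3 := by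
  have he := abs_sinh_sub_cubic_le (x := x) (by rwa [abs_of_pos hx0])
  have hs : x ≤ Real.sinh x := Real.self_le_sinh_iff.2 hx0.le
  have hs0 : 0 < Real.sinh x := hx0.trans_le hs
  rw [abs_of_pos hx0] at he
  obtain ⟨e, hes⟩ : ∃ e, e = Real.sinh x - x - x ^ 3 / 6 := ⟨_, rfl⟩
  rw [← hes] at he
  have key : 1 / Real.sinh x - (1 / x - x / 6)
      = (x ^ 5 / 36 - e * (1 - x ^ 2 / 6)) / (x * Real.sinh x) := by
    rw [hes]
    field_simp
    ring
  have hx5 : 0 < x ^ 5 := by positivity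
  have hx2 : x ^ 2 ≤ 1 := pow_le_one₀ hx0.le hx1
  have hnum : |x ^ 5 / 36 - e * (1 - x ^ 2 / 6)| ≤ x ^ 5 := by
    have h : |e * (1 - x ^ 2 / 6)| ≤ x ^ 5 / 100 := by
      rw [abs_mul, abs_of_nonneg (by linarith : 0 ≤ 1 - x ^ 2 / 6)]
      exact (mul_le_of_le_one_right (abs_nonneg e) (by nlinarith)).trans he
    rw [abs_le] at *
    constructor <;> linarith
  rw [key, abs_div, abs_of_pos (mul_pos hx0 hs0), div_le_iff₀ (mul_pos hx0 hs0)]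
  calc _ ≤ x ^ 5 := hnum
    _ = x ^ 3 * (x * x) := by ring
    _ ≤ x ^ 3 * (x * Real.sinh x) := by gcongr

lemma abs_inv_sinh_mul_sinh_sub_le {x y : ℝ} (hx0 : 0 < x) (hx1 : x ≤ 1) (hy0 : 0 < y)
    (hy1 : y ≤ 1) :
    |1 / (Real.sinh x * Real.sinh y) - (1 / (x * y) - x / (6 * y) - y / (6 * x))|
      ≤ x ^ 3 / y + y ^ 3 / x + x * y / 36 := by
  have hrx := abs_inv_sinh_sub_le hx0 hx1
  have hry := abs_inv_sinh_sub_le hy0 hy1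
  have hsy : y ≤ Real.sinh y := Real.self_le_sinh_iff.2 hy0.le
  have hsy0 : 0 < Real.sinh y := hy0.trans_le hsy
  have hsx0 : 0 < Real.sinh x := Real.sinh_pos_iff.2 hx0
  have hv : |1 / Real.sinh y| ≤ 1 / y := by
    rw [abs_of_pos (by positivity)]
    gcongr
  have hA : |1 / x - x / 6| ≤ 1 / x := by
    have : 1 ≤ 1 / x := (one_le_div hx0).2 hx1
    rw [abs_le]
    constructor <;> linarith
  -- Telescoping `u v - A B = (u - A) v + A (v - B)`; the product `A B` contributes `x y / 36`.
  have key : 1 / (Real.sinh x * Real.sinh y) - (1 / (x * y) - x / (6 * y) - y / (6 * x))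
      = (1 / Real.sinh x - (1 / x - x / 6)) * (1 / Real.sinh y)
        + (1 / x - x / 6) * (1 / Real.sinh y - (1 / y - y / 6)) + x * y / 36 := by
    field_simp
    ring
  rw [key]
  refine (abs_add_three _ _ _).trans ?_
  rw [abs_mul, abs_mul, abs_of_pos (by positivity : 0 < x * y / 36)]
  have h1 := mul_le_mul hrx hv (abs_nonneg _) (by positivity)
  have h2 := mul_le_mul hA hry (abs_nonneg _) (by positivity)
  have e1 : x ^ 3 * (1 / y) = x ^ 3 / y := by ring
  have e2 : 1 / x * y ^ 3 = y ^ 3 / x := by ring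
  linarith

/-- Short-time expansion of the heat trace of a two-dimensional harmonic oscillator with
frequencies `p` and `q`. -/
lemma heatTrace_expansion {p q : ℝ} (hp : 0 < p) (hq : 0 < q) :
    (fun t : ℝ => 1 / (4 * Real.sinh (p * t) * Real.sinh (q * t))
        - (1 / (4 * (p * q) * t ^ 2) - (p ^ 2 + q ^ 2) / (24 * (p * q))))
      =O[𝓝[>] (0:ℝ)] fun t : ℝ => t ^ 2 := by
  have small : ∀ r : ℝ, 0 < r → ∀ᶠ t in 𝓝[>] (0:ℝ), r * t ≤ 1 := by
    intro r hr
    filter_upwards [Ioo_mem_nhdsGT (show (0:ℝ) < 1 / r by positivity)] with t ht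
    have := (lt_div_iff₀ hr).1 ht.2
    linarith
  refine IsBigO.of_bound ((p ^ 3 / q + q ^ 3 / p + p * q / 36) / 4) ?_
  filter_upwards [small p hp, small q hq, self_mem_nhdsWithin] with t hpt hqt ht
  have ht : 0 < t := ht
  have h := abs_inv_sinh_mul_sinh_sub_le (mul_pos hp ht) hpt (mul_pos hq ht) hqt
  have hs1 : 0 < Real.sinh (p * t) := Real.sinh_pos_iff.2 (mul_pos hp ht)
  have hs2 : 0 < Real.sinh (q * t) := Real.sinh_pos_iff.2 (mul_pos hq ht)
  have e : 1 / (4 * Real.sinh (p * t) * Real.sinh (q * t))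
        - (1 / (4 * (p * q) * t ^ 2) - (p ^ 2 + q ^ 2) / (24 * (p * q)))
      = (1 / (Real.sinh (p * t) * Real.sinh (q * t))
        - (1 / (p * t * (q * t)) - p * t / (6 * (q * t)) - q * t / (6 * (p * t)))) / 4 := by
    field_simp
    ring
  have e2 : (p * t) ^ 3 / (q * t) + (q * t) ^ 3 / (p * t) + p * t * (q * t) / 36
      = (p ^ 3 / q + q ^ 3 / p + p * q / 36) * t ^ 2 := by
    field_simp
  rw [e2] at h
  rw [Real.norm_eq_abs, Real.norm_eq_abs, e, abs_div, abs_of_pos (by norm_num : (0:ℝ) < 4),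
    abs_of_pos (by positivity : 0 < t ^ 2)]
  linarith

/-- Anisotropic magnetic harmonic oscillator in `ℝ²`: with
`λ± = (1/2)(k₁² + k₂² + b²) ± (1/2)√(((k₁-k₂)² + b²)((k₁+k₂)² + b²))`, one has
`λ₊ λ₋ = k₁² k₂²`, and the relative heat trace satisfies
`1/(4 sinh(√λ₊ t) sinh(√λ₋ t)) - 1/(4 sinh(k₁ t) sinh(k₂ t)) = -b²/(24 k₁ k₂) + O(t²)`
as `t → 0⁺`. -/
theorem stmt_4 (k₁ k₂ b : ℝ) (hk₁ : 0 < k₁) (hk₂ : 0 < k₂) (lp lm : ℝ)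
    (hlp : lp = (1/2) * (k₁^2 + k₂^2 + b^2)
        + (1/2) * Real.sqrt (((k₁ - k₂)^2 + b^2) * ((k₁ + k₂)^2 + b^2)))
    (hlm : lm = (1/2) * (k₁^2 + k₂^2 + b^2)
        - (1/2) * Real.sqrt (((k₁ - k₂)^2 + b^2) * ((k₁ + k₂)^2 + b^2))) :
    lp * lm = k₁^2 * k₂^2 ∧
    (fun t : ℝ =>
        1 / (4 * Real.sinh (Real.sqrt lp * t) * Real.sinh (Real.sqrt lm * t))
          - 1 / (4 * Real.sinh (k₁ * t) * Real.sinh (k₂ * t))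
          + b^2 / (24 * k₁ * k₂))
      =O[𝓝[>] (0:ℝ)] fun t : ℝ => t^2 := by
  have hS := Real.sq_sqrt
    (show 0 ≤ ((k₁ - k₂)^2 + b^2) * ((k₁ + k₂)^2 + b^2) by positivity)
  have hprod : lp * lm = k₁^2 * k₂^2 := by
    rw [hlp, hlm]
    linear_combination (-1/4) * hS
  have hsum : lp + lm = k₁^2 + k₂^2 + b^2 := by
    rw [hlp, hlm]
    ring
  have hlp0 : 0 < lp := by
    rw [hlp]
    positivity
  have hlm0 : 0 < lm := by
    have : 0 < lp * lm := by
      rw [hprod]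
      positivity
    exact (pos_iff_pos_of_mul_pos this).1 hlp0
  have hpq : √lp * √lm = k₁ * k₂ := by
    rw [← Real.sqrt_mul hlp0.le, hprod, ← mul_pow, Real.sqrt_sq (by positivity)]
  refine ⟨hprod, ?_⟩
  have h := (heatTrace_expansion (Real.sqrt_pos.2 hlp0) (Real.sqrt_pos.2 hlm0)).sub
    (heatTrace_expansion hk₁ hk₂)
  rw [hpq, Real.sq_sqrt hlp0.le, Real.sq_sqrt hlm0.le, hsum] at h
  refine h.congr_left fun t => ?_
  ring
end

section
/- Let β > 0 and ν ∈ ℝ, and let {ν} = ν − ⌊ν⌋ denote the fractional part of ν. Then for every t > 0 the double series ∑_{m ∈ ℤ} ∑_{n ≥ 0} exp(−2√β·t·(1 + |m − ν| + 2n)) converges and equals exp(−2√β·t) · cosh(2√β·t·({ν} − 1/2)) / (sinh(√β·t)·(1 − exp(−4√β·t))). -/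
open Real

/-! The exponential factors as `exp (-a) * exp (-a |m - ν|) * exp (-2 a n)` with `a = 2√β t`, so the
double series is a product of two geometric-type series. The sum over `n` is
`1 / (1 - exp (-2a))`. In the sum over `m`, substituting `m = ⌊ν⌋ - j` turns `|m - ν|` into
`|j + {ν}|`, and splitting at `j = 0` leaves two geometric series with total
`(exp (-a {ν}) + exp (-a (1 - {ν}))) / (1 - exp (-a)) = cosh (a ({ν} - 1/2)) / sinh (a / 2)`. -/

lemma hasSum_exp_neg_mul_nat {a : ℝ} (ha : 0 < a) :
    HasSum (fun n : ℕ => Real.exp (-a * n)) (1 - Real.exp (-a))⁻¹ := by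
  have h := hasSum_geometric_of_lt_one (Real.exp_pos (-a)).le
    (Real.exp_lt_one_iff.mpr (neg_lt_zero.mpr ha))
  refine h.congr_fun fun n => ?_
  rw [← Real.exp_nat_mul]
  ring_nf

/-- The sum over the angular momentum `m`, with `2 * s` in the role of `2√β t`. -/
lemma hasSum_exp_neg_mul_abs_int_sub (ν : ℝ) {s : ℝ} (hs : 0 < s) :
    HasSum (fun m : ℤ => Real.exp (-(2 * s) * |(m : ℝ) - ν|))
      (Real.cosh (2 * s * (Int.fract ν - 1 / 2)) / Real.sinh s) := by
  have hgeom := hasSum_exp_neg_mul_nat (mul_pos two_pos hs)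
  have hf0 := Int.fract_nonneg ν
  have hf1 := (Int.fract_lt_one ν).le
  have hν : (⌊ν⌋ : ℝ) = ν - Int.fract ν := by rw [Int.fract]; ring
  rw [← (Equiv.subLeft ⌊ν⌋).hasSum_iff]
  have hval : Real.cosh (2 * s * (Int.fract ν - 1 / 2)) / Real.sinh s
      = Real.exp (-(2 * s) * Int.fract ν) * (1 - Real.exp (-(2 * s)))⁻¹
        + Real.exp (-(2 * s) * (1 - Int.fract ν)) * (1 - Real.exp (-(2 * s)))⁻¹ := by
    have hsinh : Real.sinh s = Real.exp s * (1 - Real.exp (-(2 * s))) / 2 := by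
      rw [Real.sinh_eq, mul_sub, ← Real.exp_add]
      ring_nf
    have h1 : Real.exp (-(2 * s) * Int.fract ν)
        = Real.exp (-(2 * s * (Int.fract ν - 1 / 2))) * (Real.exp s)⁻¹ := by
      rw [← Real.exp_neg, ← Real.exp_add]
      ring_nf
    have h2 : Real.exp (-(2 * s) * (1 - Int.fract ν))
        = Real.exp (2 * s * (Int.fract ν - 1 / 2)) * (Real.exp s)⁻¹ := by
      rw [← Real.exp_neg, ← Real.exp_add]
      ring_nf
    have hne : 1 - Real.exp (-(2 * s)) ≠ 0 :=
      (sub_pos.mpr (Real.exp_lt_one_iff.mpr (by linarith))).ne'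
    rw [h1, h2, hsinh, Real.cosh_eq]
    field_simp
    ring
  rw [hval]
  apply HasSum.of_nat_of_neg_add_one
  · refine (hgeom.mul_left (Real.exp (-(2 * s) * Int.fract ν))).congr_fun fun n => ?_
    have habs : |((⌊ν⌋ - (n : ℤ) : ℤ) : ℝ) - ν| = Int.fract ν + n := by
      push_cast
      rw [hν, show ν - Int.fract ν - (n : ℝ) - ν = -(Int.fract ν + n) by ring, abs_neg,
        abs_of_nonneg (by positivity)]
    simp only [Function.comp_apply, Equiv.subLeft_apply]
    rw [habs, ← Real.exp_add]
    ring_nf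
  · refine (hgeom.mul_left (Real.exp (-(2 * s) * (1 - Int.fract ν)))).congr_fun fun n => ?_
    have habs : |((⌊ν⌋ - -((n : ℤ) + 1) : ℤ) : ℝ) - ν| = 1 - Int.fract ν + n := by
      have hn : (0 : ℝ) ≤ n := n.cast_nonneg
      push_cast
      rw [hν, show ν - Int.fract ν - -((n : ℝ) + 1) - ν = 1 - Int.fract ν + n by ring,
        abs_of_nonneg (by linarith)]
    simp only [Function.comp_apply, Equiv.subLeft_apply]
    rw [habs, ← Real.exp_add]
    ring_nf

/-- Heat trace of the Aharonov–Bohm harmonic oscillator `H_{ν,β}` in `ℝ²`: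
for `β > 0`, `ν ∈ ℝ` and `t > 0`, the double series
`∑_{m ∈ ℤ} ∑_{n ≥ 0} exp (-2√β t (1 + |m-ν| + 2n))` converges and equals
`exp (-2√β t) cosh (2√β t ({ν} - 1/2)) / (sinh (√β t) (1 - exp (-4√β t)))`,
where `{ν} = ν - ⌊ν⌋` is the fractional part of `ν`. -/
theorem stmt_5 (β ν t : ℝ) (hβ : 0 < β) (ht : 0 < t) :
    Summable (fun p : ℤ × ℕ =>
      Real.exp (-2 * Real.sqrt β * t * (1 + |(p.1 : ℝ) - ν| + 2 * p.2))) ∧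
    ∑' p : ℤ × ℕ,
        Real.exp (-2 * Real.sqrt β * t * (1 + |(p.1 : ℝ) - ν| + 2 * p.2))
      = Real.exp (-2 * Real.sqrt β * t)
          * Real.cosh (2 * Real.sqrt β * t * (Int.fract ν - 1/2))
          / (Real.sinh (Real.sqrt β * t) * (1 - Real.exp (-4 * Real.sqrt β * t))) := by
  have hs : 0 < Real.sqrt β * t := mul_pos (Real.sqrt_pos.mpr hβ) ht
  have hm := hasSum_exp_neg_mul_abs_int_sub ν hs
  have hn := hasSum_exp_neg_mul_nat (mul_pos four_pos hs)
  have hprod := (hm.mul hn (hm.summable.mul_of_nonneg hn.summable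
    (fun _ => (Real.exp_pos _).le) (fun _ => (Real.exp_pos _).le))).mul_left
      (Real.exp (-2 * Real.sqrt β * t))
  have key : HasSum (fun p : ℤ × ℕ =>
      Real.exp (-2 * Real.sqrt β * t * (1 + |(p.1 : ℝ) - ν| + 2 * p.2)))
      (Real.exp (-2 * Real.sqrt β * t)
          * Real.cosh (2 * Real.sqrt β * t * (Int.fract ν - 1/2))
          / (Real.sinh (Real.sqrt β * t) * (1 - Real.exp (-4 * Real.sqrt β * t)))) := by
    convert hprod using 1
    · rfl
    · funext p
      rw [← Real.exp_add, ← Real.exp_add]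
      ring_nf
    · rw [show -(4 * (Real.sqrt β * t)) = -4 * Real.sqrt β * t by ring,
        show 2 * (Real.sqrt β * t) = 2 * Real.sqrt β * t by ring, div_mul_eq_div_div]
      simp only [div_eq_mul_inv]
      ring
  exact ⟨key.summable, key.tsum_eq⟩
end

section
/- Let m ∈ ℕ and N ∈ ℕ. Then, as t → 0⁺, exp(−t·(m² + 1)/4) · ∑_{n ≥ 0} (m + 2n + 1)·exp(−t·(n(n+1) + (m/2)(2n+1))) = 1/t − ∑_{k=0}^{N} ((−t)^k/(k+1)!)·B_{2k+2}((m+1)/2) + O(t^{N+1}), where B_j denotes the j-th Bernoulli polynomial. -/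
open Real Filter Asymptotics Topology

/-!
Completing the square, `n(n+1) + (m/2)(2n+1) + (m²+1)/4 = (n+a)²` with `a = (m+1)/2`, so the
quantity to expand is `∑ 2(n+a) exp(-t(n+a)²) = -(1/t) ∑ F'(n+a)` with `F x = exp(-t x²)`.

The expansion is a form of the Euler–Maclaurin formula. Put `P_k = B_k / k!`, so that
`P_{k+1}' = P_k` and `P_k(1) - P_k(0) = δ_{k,1}`, and consider
`E_b(x) = ∑_{k ≤ K} P_k(b-x) F⁽ᵏ⁾(x)`. Its derivative telescopes to `P_K(b-x) F⁽ᴷ⁺¹⁾(x)`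
(`hasDerivAt_bernSum`), so `E_b` is nearly constant when `F⁽ᴷ⁺¹⁾` is small (`bernSum_sub_le`).
This is used twice, with `G(x) = E_x(x)`:

* on `[c, c+1]` with `b = c+1`: since `E_{c+1}(c) = G(c) + F'(c)`, the difference
  `G(c+1) - G(c) - F'(c)` is small; summing over `c = n+a` gives `-∑ F'(n+a) ≈ G(a)`
  (`tsum_add_bernSum_le`);
* on `[0, a]` with `b = a`: `G(a) = E_a(a) ≈ E_a(0) = ∑ P_k(a) F⁽ᵏ⁾(0)`, and since
  `F⁽²ʲ⁾(0) = (-t)ʲ (2j)!/j!` and odd derivatives vanish, this is `∑ B_{2j}(a) (-t)ʲ/j!`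
  (`bernSum_zero`).

With `s = √(2t)` one has `F⁽ᵏ⁾(x) = sᵏ ψ_k(s x)`, where `ψ_k` is the `k`-th derivative of
`exp(-y²/2)`, a Hermite polynomial times a Gaussian. The bound `|ψ_k(y)| (1+y²) ≤ C` makes both
errors `O(s^{K-1})`, which is `O(t^{N+2})` for `K = 2N+5`.
-/

namespace HeatTrace

/-- The `k`-th derivative of `exp (-y²/2)`, written with the Hermite polynomial. -/
noncomputable def psi (k : ℕ) (y : ℝ) : ℝ :=
  (-1) ^ k * Polynomial.aeval y (Polynomial.hermite k) * Real.exp (-(y ^ 2 / 2))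

/-- The normalized Bernoulli polynomial `B_k(x) / k!`. -/
noncomputable def bern (k : ℕ) (x : ℝ) : ℝ :=
  Polynomial.aeval x (Polynomial.bernoulli k) / (Nat.factorial k : ℝ)

/-- The sum `∑_{k ≤ K} (B_k(b-x)/k!) F⁽ᵏ⁾(x)` for `F x = exp (-(s x)²/2)`. -/
noncomputable def bernSum (K : ℕ) (s b x : ℝ) : ℝ :=
  ∑ k ∈ Finset.range (K + 1), bern k (b - x) * (s ^ k * psi k (s * x))

/-! ### Derivatives of the Gaussian and of Bernoulli polynomials -/

lemma hasDerivAt_psi (k : ℕ) (y : ℝ) : HasDerivAt (psi k) (psi (k + 1) y) y := by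
  have h1 := Polynomial.hasDerivAt_aeval (Polynomial.hermite k) y
  have h2 : HasDerivAt (fun y : ℝ => Real.exp (-(y ^ 2 / 2)))
      (Real.exp (-(y ^ 2 / 2)) * (-y)) y := by
    have h3 : HasDerivAt (fun y : ℝ => -(y ^ 2 / 2)) (-y) y := by
      have h4 := ((hasDerivAt_pow 2 y).div_const 2).neg
      refine h4.congr_deriv ?_
      simp
    exact h3.exp
  have h := (h1.const_mul ((-1 : ℝ) ^ k)).mul h2
  refine HasDerivAt.congr_deriv (f := psi k) h ?_
  simp only [psi, Polynomial.hermite_succ, map_sub, map_mul, Polynomial.aeval_X]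
  ring

lemma hasDerivAt_bern (k : ℕ) (x : ℝ) : HasDerivAt (bern (k + 1)) (bern k x) x := by
  have h1 := (Polynomial.hasDerivAt_aeval (Polynomial.bernoulli (k + 1)) x).div_const
    (Nat.factorial (k + 1) : ℝ)
  refine HasDerivAt.congr_deriv (f := bern (k + 1)) h1 ?_
  have h0 : (Nat.factorial k : ℝ) ≠ 0 := by positivity
  have h2 : (k : ℝ) + 1 ≠ 0 := by positivity
  simp only [bern, Polynomial.derivative_bernoulli_add_one, map_mul, map_add, map_natCast, map_one,
    Nat.factorial_succ]
  push_cast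
  field_simp

lemma bern_zero (x : ℝ) : bern 0 x = 1 := by simp [bern]

lemma bern_at_one (k : ℕ) : bern k 1 = bern k 0 + if k = 1 then 1 else 0 := by
  have h1 : Polynomial.aeval (1 : ℝ) (Polynomial.bernoulli k) = ((bernoulli' k : ℚ) : ℝ) := by
    rw [← Polynomial.bernoulli_eval_one]
    simpa using Polynomial.aeval_algebraMap_apply ℝ (1 : ℚ) (Polynomial.bernoulli k)
  have h0 : Polynomial.aeval (0 : ℝ) (Polynomial.bernoulli k) = ((bernoulli k : ℚ) : ℝ) := by
    rw [← Polynomial.bernoulli_eval_zero]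
    simpa using Polynomial.aeval_algebraMap_apply ℝ (0 : ℚ) (Polynomial.bernoulli k)
  unfold bern
  rw [h1, h0]
  split_ifs with hk
  · subst hk
    norm_num
  · rw [bernoulli_eq_bernoulli'_of_ne_one hk, add_zero]

lemma exists_poly_gaussian_bound (p : Polynomial ℤ) :
    ∃ C : ℝ, ∀ y : ℝ, |Polynomial.aeval y p| * Real.exp (-(y ^ 2 / 2)) ≤ C := by
  induction p using Polynomial.induction_on' with
  | add p q hp hq =>
    obtain ⟨C, hC⟩ := hp
    obtain ⟨D, hD⟩ := hq
    refine ⟨C + D, fun y => ?_⟩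
    have h := abs_add_le (Polynomial.aeval y p) (Polynomial.aeval y q)
    have he := Real.exp_pos (-(y ^ 2 / 2))
    rw [map_add]
    nlinarith [hC y, hD y]
  | monomial n c =>
    refine ⟨|(c : ℝ)| * (Nat.factorial n * Real.exp (1 / 2)), fun y => ?_⟩
    have h0 : (0 : ℝ) < Nat.factorial n := by positivity
    have h := Real.pow_div_factorial_le_exp |y| (abs_nonneg y) n
    rw [div_le_iff₀ h0] at h
    have h2 : Real.exp |y| * Real.exp (-(y ^ 2 / 2)) ≤ Real.exp (1 / 2) := by
      rw [← Real.exp_add]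
      apply Real.exp_le_exp.mpr
      nlinarith [sq_nonneg (|y| - 1), sq_abs y]
    have he := Real.exp_pos (-(y ^ 2 / 2))
    rw [Polynomial.aeval_monomial, abs_mul, abs_pow, mul_assoc]
    simp only [algebraMap_int_eq, eq_intCast]
    refine mul_le_mul_of_nonneg_left ?_ (abs_nonneg _)
    calc |y| ^ n * Real.exp (-(y ^ 2 / 2))
        ≤ (Real.exp |y| * Nat.factorial n) * Real.exp (-(y ^ 2 / 2)) := by gcongr
      _ = Nat.factorial n * (Real.exp |y| * Real.exp (-(y ^ 2 / 2))) := by ring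
      _ ≤ Nat.factorial n * Real.exp (1 / 2) := by gcongr

lemma exists_psi_bound (k : ℕ) : ∃ C : ℝ, 0 ≤ C ∧ ∀ y : ℝ, |psi k y| ≤ C / (1 + y ^ 2) := by
  obtain ⟨C, hC⟩ := exists_poly_gaussian_bound (Polynomial.hermite k * (1 + Polynomial.X ^ 2))
  refine ⟨C, le_trans (by positivity) (hC 0), fun y => ?_⟩
  have hy : (0 : ℝ) < 1 + y ^ 2 := by positivity
  rw [le_div_iff₀ hy]
  refine le_trans (le_of_eq ?_) (hC y)
  simp only [psi, map_mul, map_add, map_one, map_pow, Polynomial.aeval_X, abs_mul, abs_pow,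
    abs_neg, abs_one, one_pow, one_mul, Real.abs_exp, abs_of_pos hy]
  ring

/-! ### Euler–Maclaurin summation -/

lemma hasDerivAt_bernSum (K : ℕ) (s b x : ℝ) :
    HasDerivAt (bernSum K s b) (bern K (b - x) * (s ^ (K + 1) * psi (K + 1) (s * x))) x := by
  have hpsi : ∀ k, HasDerivAt (fun x => s ^ k * psi k (s * x))
      (s ^ (k + 1) * psi (k + 1) (s * x)) x := by
    intro k
    have h1 : HasDerivAt (fun x : ℝ => s * x) s x := by
      simpa using (hasDerivAt_id x).const_mul s
    have h2 := ((hasDerivAt_psi k (s * x)).comp x h1).const_mul (s ^ k)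
    refine h2.congr_deriv ?_
    ring
  induction K with
  | zero =>
    have h := hpsi 0
    have hf : bernSum 0 s b = fun x => s ^ 0 * psi 0 (s * x) := by
      funext x
      simp [bernSum, bern_zero]
    rw [hf, bern_zero, one_mul]
    exact h
  | succ K ih =>
    have hb : HasDerivAt (fun x : ℝ => bern (K + 1) (b - x)) (-bern K (b - x)) x := by
      have h1 : HasDerivAt (fun x : ℝ => b - x) (-1) x := by
        simpa using (hasDerivAt_id x).const_sub b
      have h2 := (hasDerivAt_bern K (b - x)).comp x h1
      refine h2.congr_deriv ?_
      ring
    have hf : bernSum (K + 1) s b = fun x =>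
        bernSum K s b x + bern (K + 1) (b - x) * (s ^ (K + 1) * psi (K + 1) (s * x)) := by
      funext x
      simp [bernSum, Finset.sum_range_succ]
    rw [hf]
    refine (ih.add (hb.mul (hpsi (K + 1)))).congr_deriv ?_
    ring

lemma bernSum_sub_le {K : ℕ} {s b c B D : ℝ} (hcb : c ≤ b)
    (hB : ∀ x ∈ Set.Icc 0 (b - c), |bern K x| ≤ B)
    (hD : ∀ x ∈ Set.Icc c b, |s ^ (K + 1) * psi (K + 1) (s * x)| ≤ D) :
    |bernSum K s b b - bernSum K s b c| ≤ B * D * (b - c) := by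
  have h := Convex.norm_image_sub_le_of_norm_hasDerivWithin_le (f := bernSum K s b)
    (s := Set.Icc c b) (x := c) (y := b) (C := B * D)
    (fun x _ => (hasDerivAt_bernSum K s b x).hasDerivWithinAt) (fun x hx => ?_)
    (convex_Icc c b) (Set.left_mem_Icc.mpr hcb) (Set.right_mem_Icc.mpr hcb)
  · rwa [Real.norm_eq_abs, Real.norm_eq_abs, abs_of_nonneg (sub_nonneg.mpr hcb)] at h
  · have h1 := hB (b - x) ⟨by linarith [hx.2], by linarith [hx.1]⟩
    rw [Real.norm_eq_abs, abs_mul]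
    exact mul_le_mul h1 (hD x hx) (abs_nonneg _) ((abs_nonneg _).trans h1)

lemma exists_bern_bound (K : ℕ) (a : ℝ) :
    ∃ B : ℝ, 0 ≤ B ∧ ∀ x ∈ Set.Icc 0 a, |bern K x| ≤ B := by
  have hc : Continuous (bern K) := by
    unfold bern
    exact (Polynomial.continuous_aeval _).div_const _
  obtain ⟨B, hB⟩ := isCompact_Icc.exists_bound_of_continuousOn (s := Set.Icc 0 a) hc.continuousOn
  exact ⟨|B|, abs_nonneg _, fun x hx => (hB x hx).trans (le_abs_self B)⟩

/-- Moving the argument of the Bernoulli polynomials by one picks up exactly `F'(c)`. -/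
lemma bernSum_add_one {K : ℕ} (hK : 1 ≤ K) (s c : ℝ) :
    bernSum K s (c + 1) c = bernSum K s c c + s * psi 1 (s * c) := by
  simp only [bernSum, add_sub_cancel_left, sub_self, bern_at_one, add_mul, Finset.sum_add_distrib]
  congr 1
  rw [Finset.sum_eq_single 1]
  · simp
  · intro k _ hk
    simp [hk]
  · intro h
    simp only [Finset.mem_range] at h
    omega

/-- For `s ≤ 1` the decay of `psi` in `s x` is turned into an `s`-independent summable
decay in `n`, at the cost of two powers of `s`. -/
lemma pow_mul_psi_le {k : ℕ} {C s x : ℝ} (n : ℕ) (hC0 : 0 ≤ C)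
    (hC : ∀ y : ℝ, |psi (k + 2) y| ≤ C / (1 + y ^ 2)) (hs : 0 < s) (hs1 : s ≤ 1)
    (hx : (n : ℝ) ≤ x) :
    |s ^ (k + 2) * psi (k + 2) (s * x)| ≤ C * s ^ k * (1 / (1 + (n : ℝ) ^ 2)) := by
  have hn : (0 : ℝ) ≤ n := Nat.cast_nonneg n
  rw [abs_mul, abs_of_pos (pow_pos hs _)]
  calc s ^ (k + 2) * |psi (k + 2) (s * x)| ≤ s ^ (k + 2) * (C / (1 + (s * x) ^ 2)) := by
        gcongr
        exact hC _
    _ ≤ s ^ (k + 2) * (C / (s ^ 2 * (1 + (n : ℝ) ^ 2))) := by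
        gcongr
        have h1 : s ^ 2 ≤ 1 := by nlinarith
        have h2 : (n : ℝ) ^ 2 ≤ x ^ 2 := by gcongr
        nlinarith [sq_nonneg s]
    _ = C * s ^ k * (1 / (1 + (n : ℝ) ^ 2)) := by
        field_simp
        ring

lemma summable_one_div_one_add_sq : Summable fun n : ℕ => 1 / (1 + (n : ℝ) ^ 2) := by
  refine (summable_nat_add_iff 1).mp ?_
  have h := (summable_nat_add_iff 1).mpr (Real.summable_one_div_nat_pow.mpr (one_lt_two))
  refine h.of_nonneg_of_le (fun n => by positivity) (fun n => ?_)
  apply one_div_le_one_div_of_le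
  · positivity
  · linarith

lemma summable_psi (k : ℕ) {s a : ℝ} (hs : 0 < s) (ha : 0 ≤ a) :
    Summable fun n : ℕ => psi k (s * (n + a)) := by
  obtain ⟨C, hC0, hC⟩ := exists_psi_bound k
  have h1 := (summable_nat_add_iff 1).mpr
    ((Real.summable_one_div_nat_pow.mpr (one_lt_two)).mul_left (C / s ^ 2))
  refine (summable_nat_add_iff 1).mp (Summable.of_norm_bounded h1 fun n => ?_)
  rw [Real.norm_eq_abs]
  refine (hC _).trans ?_
  rw [div_mul_div_comm, mul_one]
  gcongr
  have h2 : ((n + 1 : ℕ) : ℝ) ^ 2 ≤ (((n + 1 : ℕ) : ℝ) + a) ^ 2 := by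
    gcongr
    linarith
  nlinarith [sq_nonneg s]

/-- The telescoped Euler–Maclaurin estimate on the half-line, with order `K = k + 1`. -/
lemma tsum_add_bernSum_le (k : ℕ) {a : ℝ} (ha : 0 ≤ a) :
    ∃ C : ℝ, ∀ s : ℝ, 0 < s → s ≤ 1 →
      |(∑' n : ℕ, s * psi 1 (s * (n + a))) + bernSum (k + 1) s a a| ≤ C * s ^ k := by
  obtain ⟨C, hC0, hC⟩ := exists_psi_bound (k + 2)
  obtain ⟨B, hB0, hB⟩ := exists_bern_bound (k + 1) 1
  refine ⟨B * C * ∑' n : ℕ, 1 / (1 + (n : ℝ) ^ 2), fun s hs hs1 => ?_⟩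
  have hstep : ∀ n : ℕ, |bernSum (k + 1) s ((n : ℝ) + a + 1) ((n : ℝ) + a + 1)
      - (bernSum (k + 1) s (n + a) (n + a) + s * psi 1 (s * (n + a)))|
      ≤ B * C * s ^ k * (1 / (1 + (n : ℝ) ^ 2)) := by
    intro n
    rw [← bernSum_add_one (by omega)]
    have h := bernSum_sub_le (K := k + 1) (s := s) (b := (n : ℝ) + a + 1) (c := n + a) (B := B)
      (D := C * s ^ k * (1 / (1 + (n : ℝ) ^ 2))) (by linarith)
      (by simpa using hB) (fun x hx => pow_mul_psi_le n hC0 hC hs hs1 (by linarith [hx.1]))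
    refine h.trans (le_of_eq ?_)
    ring
  have hpart : ∀ M : ℕ, |(∑ n ∈ Finset.range M, s * psi 1 (s * (n + a)))
      + bernSum (k + 1) s a a - bernSum (k + 1) s (M + a) (M + a)|
      ≤ B * C * (∑' n : ℕ, 1 / (1 + (n : ℝ) ^ 2)) * s ^ k := by
    intro M
    have htel := Finset.sum_range_sub
      (fun n : ℕ => bernSum (k + 1) s ((n : ℝ) + a) ((n : ℝ) + a)) M
    have heq : (∑ n ∈ Finset.range M, s * psi 1 (s * (n + a)))
        + bernSum (k + 1) s a a - bernSum (k + 1) s (M + a) (M + a)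
        = -∑ n ∈ Finset.range M, (bernSum (k + 1) s ((n : ℝ) + a + 1) ((n : ℝ) + a + 1)
          - (bernSum (k + 1) s (n + a) (n + a) + s * psi 1 (s * (n + a)))) := by
      simp only [← sub_sub, Finset.sum_sub_distrib] at htel ⊢
      have hc : ∀ n : ℕ, ((n + 1 : ℕ) : ℝ) + a = n + a + 1 := fun n => by
        push_cast
        ring
      simp only [hc, Nat.cast_zero, zero_add] at htel
      linarith
    rw [heq, abs_neg]
    calc _ ≤ ∑ n ∈ Finset.range M, B * C * s ^ k * (1 / (1 + (n : ℝ) ^ 2)) :=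
          (Finset.abs_sum_le_sum_abs _ _).trans (Finset.sum_le_sum fun n _ => hstep n)
      _ = B * C * s ^ k * ∑ n ∈ Finset.range M, 1 / (1 + (n : ℝ) ^ 2) := by
          rw [Finset.mul_sum]
      _ ≤ B * C * s ^ k * ∑' n : ℕ, 1 / (1 + (n : ℝ) ^ 2) := by
          gcongr
          exact summable_one_div_one_add_sq.sum_le_tsum _ (fun n _ => by positivity)
      _ = _ := by ring
  have hG : Tendsto (fun M : ℕ => bernSum (k + 1) s (M + a) (M + a)) atTop (𝓝 0) := by
    simp only [bernSum, sub_self]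
    rw [← Finset.sum_const_zero (s := Finset.range (k + 1 + 1)) (M := ℝ)]
    refine tendsto_finsetSum _ fun j _ => ?_
    have h := (summable_psi j hs ha).tendsto_atTop_zero
    simpa using (h.const_mul (s ^ j)).const_mul (bern j 0)
  have hS := ((summable_psi 1 hs ha).mul_left s).hasSum.tendsto_sum_nat
  have hlim := ((hS.add_const (bernSum (k + 1) s a a)).sub hG).abs
  rw [sub_zero] at hlim
  exact le_of_tendsto' hlim hpart

/-! ### The expansion at the origin -/

lemma psi_zero_odd (j : ℕ) : psi (2 * j + 1) 0 = 0 := by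
  have h : Polynomial.aeval (0 : ℝ) (Polynomial.hermite (2 * j + 1)) = 0 := by
    rw [← map_zero (algebraMap ℤ ℝ), Polynomial.aeval_algebraMap_apply,
      ← Polynomial.coeff_zero_eq_aeval_zero, Polynomial.coeff_hermite_of_odd_add ⟨j, by ring⟩]
  rw [psi, h, mul_zero, zero_mul]

lemma psi_zero_even (j : ℕ) :
    2 ^ j * psi (2 * j) 0 = (-1) ^ j * (Nat.factorial (2 * j) / Nat.factorial j : ℝ) := by
  have h : Polynomial.aeval (0 : ℝ) (Polynomial.hermite (2 * j))
      = (-1) ^ j * (Nat.doubleFactorial (2 * j - 1) : ℝ) := by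
    have h2 := Polynomial.coeff_hermite_explicit j 0
    simp only [add_zero, Nat.choose_zero_right, Nat.cast_one, mul_one] at h2
    rw [← map_zero (algebraMap ℤ ℝ), Polynomial.aeval_algebraMap_apply,
      ← Polynomial.coeff_zero_eq_aeval_zero, h2]
    simp
  have hf : Nat.factorial (2 * j) = Nat.doubleFactorial (2 * j - 1) * (2 ^ j * Nat.factorial j) := by
    rcases j with _ | j
    · simp
    · have h3 := Nat.factorial_eq_mul_doubleFactorial (2 * j + 1)
      rw [show 2 * j + 1 + 1 = 2 * (j + 1) by ring, Nat.doubleFactorial_two_mul] at h3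
      rw [h3, show 2 * (j + 1) - 1 = 2 * j + 1 by omega, mul_comm]
  have h0 : (Nat.factorial j : ℝ) ≠ 0 := by positivity
  rw [psi, h, hf]
  push_cast
  field_simp
  simp

lemma sum_range_two_mul (f : ℕ → ℝ) (J : ℕ) :
    ∑ k ∈ Finset.range (2 * J), f k = ∑ j ∈ Finset.range J, (f (2 * j) + f (2 * j + 1)) := by
  induction J with
  | zero => simp
  | succ J ih =>
    rw [show 2 * (J + 1) = 2 * J + 1 + 1 by ring, Finset.sum_range_succ, Finset.sum_range_succ, ih,
      Finset.sum_range_succ]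
    ring

/-- The value at the origin is the truncated Bernoulli expansion in `t = s²/2`. -/
lemma bernSum_zero (J : ℕ) {s t : ℝ} (hst : s ^ 2 = 2 * t) (a : ℝ) :
    bernSum (2 * J + 1) s a 0 = ∑ j ∈ Finset.range (J + 1),
      (-t) ^ j / (Nat.factorial j : ℝ) * Polynomial.aeval a (Polynomial.bernoulli (2 * j)) := by
  rw [bernSum, show 2 * J + 1 + 1 = 2 * (J + 1) by ring, sum_range_two_mul]
  refine Finset.sum_congr rfl fun j _ => ?_
  have h0 : (Nat.factorial j : ℝ) ≠ 0 := by positivity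
  have h1 : (Nat.factorial (2 * j) : ℝ) ≠ 0 := by positivity
  have h2 : s ^ (2 * j) * psi (2 * j) 0
      = (-t) ^ j * (Nat.factorial (2 * j) / Nat.factorial j : ℝ) := by
    rw [pow_mul, hst, mul_pow, mul_right_comm, psi_zero_even, neg_pow]
    ring
  rw [mul_zero, psi_zero_odd, mul_zero, mul_zero, add_zero, h2, sub_zero, bern]
  field_simp

/-! ### The heat trace -/

/-- Both uses of `bernSum_sub_le` combined: `-∑ F'(n+a)` is the Bernoulli expansion up to
`O(t^{N+2})`, stated for `s = √(2t)`. -/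
lemma tsum_add_expansion_le (N : ℕ) {a : ℝ} (ha : 0 ≤ a) :
    ∃ C : ℝ, ∀ s : ℝ, 0 < s → s ≤ 1 →
      |(∑' n : ℕ, s * psi 1 (s * (n + a))) + bernSum (2 * (N + 2) + 1) s a 0|
        ≤ C * s ^ (2 * (N + 2)) := by
  obtain ⟨C₁, hC₁⟩ := tsum_add_bernSum_le (2 * (N + 2)) ha
  obtain ⟨C, hC0, hC⟩ := exists_psi_bound (2 * (N + 2) + 2)
  obtain ⟨B, hB0, hB⟩ := exists_bern_bound (2 * (N + 2) + 1) a
  refine ⟨C₁ + B * C * a, fun s hs hs1 => ?_⟩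
  have h1 := hC₁ s hs hs1
  have h2 := bernSum_sub_le (K := 2 * (N + 2) + 1) (s := s) (b := a) (c := 0) (B := B)
    (D := C * s ^ (2 * (N + 2)) * (1 / (1 + ((0 : ℕ) : ℝ) ^ 2))) ha
    (by simpa using hB) (fun x hx => pow_mul_psi_le 0 hC0 hC hs hs1 (by simpa using hx.1))
  have h3 : B * (C * s ^ (2 * (N + 2)) * (1 / (1 + ((0 : ℕ) : ℝ) ^ 2))) * (a - 0)
      = B * C * a * s ^ (2 * (N + 2)) := by
    simp
    ring
  rw [h3] at h2
  rw [abs_le] at h1 h2 ⊢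
  constructor <;> linarith [h1.1, h1.2, h2.1, h2.2]

/-- Completing the square rewrites the heat trace as `-(1/t) ∑ F'(n+a)`. -/
lemma heat_trace_eq (m : ℕ) {s t : ℝ} (ht : 0 < t) (hst : s ^ 2 = 2 * t) :
    Real.exp (-t * ((m:ℝ)^2 + 1) / 4)
          * (∑' n : ℕ, ((m:ℝ) + 2*n + 1)
              * Real.exp (-t * ((n:ℝ) * (n+1) + ((m:ℝ)/2) * (2*n + 1))))
      = -(1 / t) * ∑' n : ℕ, s * psi 1 (s * (n + ((m:ℝ) + 1)/2)) := by
  rw [← tsum_mul_left, ← tsum_mul_left]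
  refine tsum_congr fun n => ?_
  have h1 : psi 1 (s * (n + ((m:ℝ) + 1)/2)) = -(s * (n + ((m:ℝ) + 1)/2))
      * Real.exp (-t * (n + ((m:ℝ) + 1)/2) ^ 2) := by
    simp only [psi, Polynomial.hermite_one, Polynomial.aeval_X, mul_pow, hst]
    ring_nf
  have h2 : Real.exp (-t * ((m:ℝ)^2 + 1) / 4)
      * Real.exp (-t * ((n:ℝ) * (n+1) + ((m:ℝ)/2) * (2*n + 1)))
      = Real.exp (-t * (n + ((m:ℝ) + 1)/2) ^ 2) := by
    rw [← Real.exp_add]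
    congr 1
    ring
  rw [h1, ← h2]
  generalize Real.exp (-t * ((m:ℝ)^2 + 1) / 4) = e₁
  generalize Real.exp (-t * ((n:ℝ) * (n+1) + ((m:ℝ)/2) * (2*n + 1))) = e₂
  have h3 : -(1 / t) * (s * (-(s * (n + ((m:ℝ) + 1)/2)) * (e₁ * e₂)))
      = s ^ 2 / t * (n + ((m:ℝ) + 1)/2) * (e₁ * e₂) := by ring
  rw [h3, hst]
  field_simp
  ring

end HeatTrace

/-- Heat trace expansion for the magnetic Laplacian on `S²` with flux `m`:
as `t → 0⁺`,
`exp (-t(m²+1)/4) ∑_{n ≥ 0} (m+2n+1) exp (-t (n(n+1) + (m/2)(2n+1)))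
  = 1/t - ∑_{k=0}^{N} ((-t)^k/(k+1)!) B_{2k+2}((m+1)/2) + O(t^{N+1})`,
where `B_j` is the `j`-th Bernoulli polynomial. -/
theorem stmt_6 (m N : ℕ) :
    (fun t : ℝ =>
        Real.exp (-t * ((m:ℝ)^2 + 1) / 4)
          * (∑' n : ℕ, ((m:ℝ) + 2*n + 1)
              * Real.exp (-t * ((n:ℝ) * (n+1) + ((m:ℝ)/2) * (2*n + 1))))
          - 1/t
          + ∑ k ∈ Finset.range (N+1),
              ((-t)^k / (Nat.factorial (k+1)))
                * Polynomial.aeval (((m:ℝ) + 1)/2) (Polynomial.bernoulli (2*k + 2)))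
      =O[𝓝[>] (0:ℝ)] fun t : ℝ => t^(N+1) := by
  obtain ⟨C, hC⟩ := HeatTrace.tsum_add_expansion_le N (a := ((m:ℝ) + 1)/2) (by positivity)
  -- The expansion of order `K = 2N+5` carries one term beyond those displayed, of size `t^{N+1}`.
  set β : ℝ := Polynomial.aeval (((m:ℝ) + 1)/2) (Polynomial.bernoulli (2 * (N + 2)))
    / (Nat.factorial (N + 2) : ℝ) with hβ
  refine IsBigO.of_bound (C * 2 ^ (N + 2) + |β|) ?_
  filter_upwards [Ioc_mem_nhdsGT (show (0:ℝ) < 1 / 2 by norm_num)] with t ht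
  have ht0 : 0 < t := ht.1
  have hst : Real.sqrt (2 * t) ^ 2 = 2 * t := Real.sq_sqrt (by linarith)
  have hs : 0 < Real.sqrt (2 * t) := Real.sqrt_pos.mpr (by linarith)
  have hs1 : Real.sqrt (2 * t) ≤ 1 := Real.sqrt_le_one.mpr (by linarith [ht.2])
  have hmain := hC _ hs hs1
  rw [HeatTrace.bernSum_zero (N + 2) hst, pow_mul, hst] at hmain
  rw [HeatTrace.heat_trace_eq m ht0 hst]
  generalize (∑' n : ℕ, Real.sqrt (2 * t)
    * HeatTrace.psi 1 (Real.sqrt (2 * t) * (n + ((m:ℝ) + 1)/2))) = S at hmain ⊢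
  rw [Finset.sum_range_succ, Finset.sum_range_succ'] at hmain
  have hsum : ∑ k ∈ Finset.range (N + 1), (-t) ^ (k + 1) / (Nat.factorial (k + 1) : ℝ)
      * Polynomial.aeval (((m:ℝ) + 1)/2) (Polynomial.bernoulli (2 * (k + 1)))
      = -t * ∑ k ∈ Finset.range (N+1), ((-t)^k / (Nat.factorial (k+1)))
        * Polynomial.aeval (((m:ℝ) + 1)/2) (Polynomial.bernoulli (2*k + 2)) := by
    rw [Finset.mul_sum]
    refine Finset.sum_congr rfl fun k _ => ?_
    rw [show 2 * (k + 1) = 2 * k + 2 by ring, pow_succ]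
    ring
  have hlast : (-t) ^ (N + 2) / (Nat.factorial (N + 2) : ℝ)
      * Polynomial.aeval (((m:ℝ) + 1)/2) (Polynomial.bernoulli (2 * (N + 2)))
      = (-t) ^ (N + 2) * β := by
    rw [hβ]
    ring
  rw [hsum, hlast] at hmain
  simp only [pow_zero, Nat.factorial_zero, Nat.cast_one, div_one, mul_zero, one_mul,
    Polynomial.bernoulli_zero, map_one] at hmain
  generalize (∑ k ∈ Finset.range (N+1), ((-t)^k / (Nat.factorial (k+1)))
        * Polynomial.aeval (((m:ℝ) + 1)/2) (Polynomial.bernoulli (2*k + 2))) = T at hmain ⊢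
  have heq : -(1 / t) * S - 1 / t + T
      = -(1 / t) * (S + (-t * T + 1 + (-t) ^ (N + 2) * β)) + (1 / t) * ((-t) ^ (N + 2) * β) := by
    field_simp
    ring
  rw [heq, Real.norm_eq_abs, Real.norm_eq_abs, abs_of_pos (pow_pos ht0 _)]
  refine (abs_add_le _ _).trans ?_
  rw [abs_mul, abs_mul, abs_mul, abs_neg, abs_of_pos (one_div_pos.mpr ht0), abs_pow, abs_neg,
    abs_of_pos ht0]
  calc _ ≤ 1 / t * (C * (2 * t) ^ (N + 2)) + 1 / t * (t ^ (N + 2) * |β|) := by gcongr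
    _ = (C * 2 ^ (N + 2) + |β|) * t ^ (N + 1) := by
      rw [mul_pow]
      field_simp
      ring
end

section
/- Let m ∈ ℕ. Then, as t → 0⁺, ∑_{n ≥ 0} (m + 2n + 1)·exp(−t·(n(n+1) + (m/2)(2n+1))) = 1/t + 1/3 + (1/15 − m²/24)·t + (4/315 − m²/40)·t² + ((128 − 432m² + 49m⁴)/40320)·t³ + O(t⁴). In particular, the difference of the traces for parameters m and 0 equals −(m²/24)·t + O(t²) as t → 0⁺. -/
open Real Filter Asymptotics Topology

/-!
Completing the square with `x = n + (m+1)/2` turns the trace into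
`exp (t (m²+1)/4) ∑ 2x exp (-t x²)` (`trace_eq`), and `2x exp (-t x²) = -g'(x) / t` for the
Gaussian `g(x) = exp (-t x²)`. The sum of `-g'` over the shifted integers is evaluated by
Euler–Maclaurin summation: the function `F = ∑_{k ≤ 10} (B_k / k!) g^{(k)}` satisfies
`F(x+1) - F(x) = g'(x) + O(sup_{[x,x+1]} |g^{(12)}|)` by Taylor's formula (`emSum_step`).
Because `|g^{(12)}(x)| ≤ C t⁵ / x²` uniformly in `t` (`gd_bound`), telescoping gives
`∑ -g'(n+a) = F(a) + O(t⁵)` (`sum_approx`). Finally `exp (t (m²+1)/4) F((m+1)/2)` is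
`exp (-mt/2)` times a polynomial in `t`, which is expanded to order `t⁴` (`main_term`);
dividing by `t` yields the expansion. The relative trace is the difference of the expansions for
`m` and `0`.
-/

/-- The `k`-th derivative in `x` of the Gaussian `exp (-t x²)`, given by the Hermite recursion
`g^{(k+2)} = -2t (x g^{(k+1)} + (k+1) g^{(k)})`. -/
noncomputable def gd (t : ℝ) : ℕ → ℝ → ℝ
  | 0, x => exp (-t * x ^ 2)
  | 1, x => -2 * t * (x * exp (-t * x ^ 2))
  | k + 2, x => -2 * t * (x * gd t (k + 1) x + (k + 1) * gd t k x)

lemma gd_hasDerivAt (t : ℝ) (k : ℕ) (x : ℝ) : HasDerivAt (gd t k) (gd t (k + 1) x) x := by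
  have h0 : ∀ x, HasDerivAt (gd t 0) (gd t 1 x) x := by
    intro x
    have : HasDerivAt (fun x : ℝ => exp (-t * x ^ 2)) _ x :=
      ((hasDerivAt_pow 2 x).const_mul (-t)).exp
    refine this.congr_deriv ?_
    simp only [gd]
    push_cast
    ring
  induction k using Nat.twoStepInduction generalizing x with
  | zero => exact h0 x
  | one =>
    have : HasDerivAt (fun x => -2 * t * (x * gd t 0 x)) _ x :=
      ((hasDerivAt_id x).mul (h0 x)).const_mul (-2 * t)
    refine this.congr_deriv ?_
    simp only [gd, id]
    push_cast
    ring
  | more k ih0 ih1 =>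
    have : HasDerivAt (fun x => -2 * t * (x * gd t (k + 1) x + (k + 1) * gd t k x)) _ x :=
      (((hasDerivAt_id x).mul (ih1 x)).add ((ih0 x).const_mul ((k : ℝ) + 1))).const_mul (-2 * t)
    refine this.congr_deriv ?_
    rw [show gd t (k + 2 + 1) x
      = -2 * t * (x * gd t (k + 2) x + ((k + 1 : ℕ) + 1) * gd t (k + 1) x) from rfl]
    push_cast
    simp only [id]
    ring

/-- Scale-invariant decay: with `t = s²`, the function `(s|x|)^j |g^{(k)}(x)|` is at most a constant
times `s^k = t^{k/2}`, uniformly in `x` and `t`. -/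
lemma gd_bound (k : ℕ) : ∀ j : ℕ, ∃ C : ℝ, 0 ≤ C ∧ ∀ s : ℝ, 0 < s → ∀ x : ℝ,
    (s * |x|) ^ j * |gd (s ^ 2) k x| ≤ C * s ^ k := by
  -- `u^j ≤ 1 + (u²)^j` and `(u²)^j ≤ j! exp (u²)` with `u = s|x|`
  have h0 : ∀ j : ℕ, ∀ s : ℝ, 0 < s → ∀ x : ℝ,
      (s * |x|) ^ j * exp (-s ^ 2 * x ^ 2) ≤ 1 + (j.factorial : ℝ) := by
    intro j s hs x
    have hu : 0 ≤ s * |x| := by positivity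
    have hx : -s ^ 2 * x ^ 2 = -((s * |x|) ^ 2) := by rw [mul_pow, sq_abs]; ring
    rw [hx]
    generalize s * |x| = u at hu
    have h1 : u ^ j ≤ 1 + (u ^ 2) ^ j := by
      rw [← pow_mul, mul_comm, pow_mul]
      nlinarith [sq_nonneg (u ^ j - 1)]
    have h2 := Real.pow_div_factorial_le_exp (u ^ 2) (sq_nonneg u) j
    have hf : (0 : ℝ) < j.factorial := by exact_mod_cast j.factorial_pos
    rw [div_le_iff₀ hf] at h2
    have h3 : 1 ≤ exp (u ^ 2) := Real.one_le_exp (sq_nonneg u)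
    rw [Real.exp_neg, ← div_eq_mul_inv, div_le_iff₀ (Real.exp_pos _)]
    linarith
  induction k using Nat.twoStepInduction with
  | zero =>
    intro j
    refine ⟨1 + j.factorial, by positivity, fun s hs x => ?_⟩
    simpa [gd, abs_of_pos (Real.exp_pos _)] using h0 j s hs x
  | one =>
    intro j
    refine ⟨2 * (1 + (j + 1).factorial), by positivity, fun s hs x => ?_⟩
    have := mul_le_mul_of_nonneg_left (h0 (j + 1) s hs x) (by positivity : 0 ≤ 2 * s)
    simp only [gd, abs_mul, abs_of_pos (Real.exp_pos _), abs_neg, abs_two,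
      abs_of_pos (pow_pos hs 2)]
    rw [pow_succ] at this
    nlinarith [this]
  | more k ih0 ih1 =>
    intro j
    obtain ⟨C0, hC0, h0⟩ := ih0 j
    obtain ⟨C1, hC1, h1⟩ := ih1 (j + 1)
    refine ⟨2 * C1 + 2 * (k + 1) * C0, by positivity, fun s hs x => ?_⟩
    have e1 := mul_le_mul_of_nonneg_left (h1 s hs x) (by positivity : 0 ≤ 2 * s)
    have e0 := mul_le_mul_of_nonneg_left (h0 s hs x)
      (by positivity : (0 : ℝ) ≤ 2 * (k + 1) * s ^ 2)
    have e2 : |gd (s ^ 2) (k + 2) x| ≤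
        2 * s ^ 2 * (|x| * |gd (s ^ 2) (k + 1) x| + (k + 1) * |gd (s ^ 2) k x|) := by
      rw [gd, abs_mul]
      have : |(-2 : ℝ) * s ^ 2| = 2 * s ^ 2 := by
        rw [abs_mul, abs_neg, abs_two, abs_of_pos (pow_pos hs 2)]
      rw [this]
      gcongr
      refine (abs_add_le _ _).trans (le_of_eq ?_)
      rw [abs_mul, abs_mul, abs_of_pos (by positivity : (0 : ℝ) < k + 1)]
    calc _ ≤ (s * |x|) ^ j * (2 * s ^ 2 *
          (|x| * |gd (s ^ 2) (k + 1) x| + (k + 1) * |gd (s ^ 2) k x|)) := by gcongr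
      _ = 2 * s * ((s * |x|) ^ (j + 1) * |gd (s ^ 2) (k + 1) x|)
          + 2 * (k + 1) * s ^ 2 * ((s * |x|) ^ j * |gd (s ^ 2) k x|) := by ring
      _ ≤ _ := add_le_add e1 e0
      _ = _ := by ring

/-- Taylor's formula with a crude remainder bound, for a sequence of functions each of which is
the derivative of the previous one. -/
lemma taylor_le (n : ℕ) : ∀ (h : ℕ → ℝ → ℝ), (∀ k x, HasDerivAt (h k) (h (k + 1) x) x) →
    ∀ x M : ℝ, (∀ y ∈ Set.Icc x (x + 1), |h n y| ≤ M) → ∀ s ∈ Set.Icc (0 : ℝ) 1,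
    |h 0 (x + s) - ∑ j ∈ Finset.range n, s ^ j / (j.factorial : ℝ) * h j x| ≤ M := by
  induction n with
  | zero =>
    intro h _ x M hM s hs
    simpa using hM (x + s) ⟨by linarith [hs.1], by linarith [hs.2]⟩
  | succ n ih =>
    intro h hd x M hM s hs
    have hM0 : 0 ≤ M := (abs_nonneg _).trans (hM x ⟨le_rfl, by linarith⟩)
    have hder : ∀ s ∈ Set.Icc (0 : ℝ) 1, HasDerivWithinAt
        (fun s => h 0 (x + s) - ∑ j ∈ Finset.range (n + 1), s ^ j / (j.factorial : ℝ) * h j x)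
        (h 1 (x + s) - ∑ j ∈ Finset.range n, s ^ j / (j.factorial : ℝ) * h (j + 1) x)
        (Set.Icc 0 1) s := by
      intro s _
      refine HasDerivAt.hasDerivWithinAt (HasDerivAt.sub ?_ ?_)
      · exact HasDerivAt.comp_const_add x s (hd 0 (x + s))
      · simp only [Finset.sum_range_succ' _ n]
        simp only [pow_zero]
        refine (HasDerivAt.fun_sum fun j _ => ?_).add_const _
        have := ((hasDerivAt_pow (j + 1) s).div_const ((j + 1).factorial : ℝ)).mul_const
          (h (j + 1) x)
        refine this.congr_deriv ?_
        rw [Nat.factorial_succ]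
        have hf : (j.factorial : ℝ) ≠ 0 := by exact_mod_cast j.factorial_ne_zero
        push_cast
        field_simp
    have := (convex_Icc (0 : ℝ) 1).norm_image_sub_le_of_norm_hasDerivWithin_le (C := M) hder
      (fun y hy => ih (fun k => h (k + 1)) (fun k => hd (k + 1)) x M hM y hy)
      (Set.left_mem_Icc.2 zero_le_one) hs
    simp only [Finset.sum_range_succ' _ n] at this ⊢
    simp [Real.norm_eq_abs, abs_of_nonneg hs.1] at this
    simp
    nlinarith [hs.2]

/-- The Euler–Maclaurin sum `∑_{k ≤ 10} (B_k / k!) g^{(k)}(x)` of the Gaussian, with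
`B_1 = -1/2`; the odd terms beyond `k = 1` vanish. -/
noncomputable def emSum (t x : ℝ) : ℝ :=
  gd t 0 x - 1 / 2 * gd t 1 x + 1 / 12 * gd t 2 x - 1 / 720 * gd t 4 x
    + 1 / 30240 * gd t 6 x - 1 / 1209600 * gd t 8 x + 1 / 47900160 * gd t 10 x

/-- By the defining recursion of the Bernoulli numbers, the forward difference of `emSum`
reproduces `g'` up to the twelfth derivative of the Gaussian. -/
lemma emSum_step (t x M : ℝ) (hM : ∀ y ∈ Set.Icc x (x + 1), |gd t 12 y| ≤ M) :
    |emSum t (x + 1) - emSum t x - gd t 1 x| ≤ 2 * M := by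
  have key : ∀ k n : ℕ, k + n = 12 →
      |gd t k (x + 1) - ∑ j ∈ Finset.range n, 1 / (j.factorial : ℝ) * gd t (k + j) x| ≤ M := by
    intro k n hkn
    have := taylor_le n (fun i => gd t (k + i)) (fun i => gd_hasDerivAt t (k + i)) x M
      (by simpa [hkn] using hM) 1 (by simp)
    simpa using this
  have h0 := abs_le.1 (key 0 12 rfl)
  have h1 := abs_le.1 (key 1 11 rfl)
  have h2 := abs_le.1 (key 2 10 rfl)
  have h4 := abs_le.1 (key 4 8 rfl)
  have h6 := abs_le.1 (key 6 6 rfl)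
  have h8 := abs_le.1 (key 8 4 rfl)
  have h10 := abs_le.1 (key 10 2 rfl)
  simp only [Finset.sum_range_succ, Finset.sum_range_zero, Nat.factorial, Nat.reduceAdd,
    Nat.reduceMul, Nat.succ_eq_add_one, Nat.cast_ofNat, Nat.cast_one] at h0 h1 h2 h4 h6 h8 h10
  rw [emSum, emSum, abs_le]
  constructor <;> linarith

/-- Telescoping `emSum_step`: the steps sum to an error `O(t⁵)`, since
`|g^{(12)}(x)| ≤ C t⁵ / x²` by `gd_bound`. -/
lemma sum_approx (a : ℝ) (ha : 0 < a) : ∃ C : ℝ, ∀ t : ℝ, 0 < t →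
    |(∑' n : ℕ, -gd t 1 (n + a)) - emSum t a| ≤ C * t ^ 5 := by
  obtain ⟨C12, hC12, h12⟩ := gd_bound 12 2
  obtain ⟨C1, hC1, h1⟩ := gd_bound 1 2
  have hsum : Summable fun n : ℕ => 1 / ((n : ℝ) + a) ^ 2 := by
    have := (Real.summable_one_div_nat_add_rpow a 2).2 (by norm_num)
    refine this.congr fun n => ?_
    rw [abs_of_pos (by positivity)]
    norm_cast
  refine ⟨2 * C12 * ∑' n : ℕ, 1 / ((n : ℝ) + a) ^ 2, fun t ht => ?_⟩
  obtain ⟨s, hs, rfl⟩ : ∃ s : ℝ, 0 < s ∧ s ^ 2 = t :=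
    ⟨√t, Real.sqrt_pos.2 ht, Real.sq_sqrt ht.le⟩
  have hsm : Summable fun n : ℕ => -gd (s ^ 2) 1 (n + a) := by
    refine Summable.of_norm_bounded (hsum.mul_left (C1 / s)) fun n => ?_
    have hx : 0 < (n : ℝ) + a := by positivity
    have := h1 s hs (n + a)
    rw [abs_of_pos hx] at this
    rw [norm_neg, Real.norm_eq_abs, div_mul_div_comm, le_div_iff₀ (by positivity)]
    refine le_of_mul_le_mul_left ?_ hs
    calc _ = _ := by ring
      _ ≤ _ := this
      _ = _ := by ring
  have hzero : ∀ k, Tendsto (fun N : ℕ => gd (s ^ 2) k (N + a)) atTop (𝓝 0) := by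
    intro k
    obtain ⟨C, hC, h⟩ := gd_bound k 1
    have hlim : Tendsto (fun N : ℕ => (C * s ^ k / s) / ((N : ℝ) + a)) atTop (𝓝 0) :=
      Tendsto.div_atTop tendsto_const_nhds
        (tendsto_atTop_add_const_right _ _ tendsto_natCast_atTop_atTop)
    refine squeeze_zero_norm (fun N => ?_) hlim
    have hx : 0 < (N : ℝ) + a := by positivity
    have := h s hs (N + a)
    rw [abs_of_pos hx] at this
    rw [Real.norm_eq_abs, div_div, le_div_iff₀ (by positivity)]
    linarith
  have hFlim : Tendsto (fun N : ℕ => emSum (s ^ 2) (N + a)) atTop (𝓝 0) := by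
    have := ((((((hzero 0).sub ((hzero 1).const_mul (1 / 2))).add
      ((hzero 2).const_mul (1 / 12))).sub ((hzero 4).const_mul (1 / 720))).add
      ((hzero 6).const_mul (1 / 30240))).sub ((hzero 8).const_mul (1 / 1209600))).add
      ((hzero 10).const_mul (1 / 47900160))
    simpa [emSum] using this
  have hstep : ∀ n : ℕ, |emSum (s ^ 2) (n + a + 1) - emSum (s ^ 2) (n + a)
      - gd (s ^ 2) 1 (n + a)| ≤ 2 * C12 * (s ^ 2) ^ 5 * (1 / ((n : ℝ) + a) ^ 2) := by
    intro n
    have hx : 0 < (n : ℝ) + a := by positivity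
    have := emSum_step (s ^ 2) (n + a) (C12 * s ^ 10 / ((n : ℝ) + a) ^ 2) ?_
    · refine this.trans (le_of_eq ?_)
      ring
    · intro y hy
      have hy0 : 0 < y := hx.trans_le hy.1
      have := h12 s hs y
      rw [abs_of_pos hy0] at this
      rw [le_div_iff₀ (by positivity)]
      have hyy : ((n : ℝ) + a) ^ 2 ≤ y ^ 2 := by gcongr; exact hy.1
      have h2 : |gd (s ^ 2) 12 y| * ((n : ℝ) + a) ^ 2 ≤ |gd (s ^ 2) 12 y| * y ^ 2 := by gcongr
      refine h2.trans (le_of_mul_le_mul_left ?_ (pow_pos hs 2))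
      calc _ = _ := by ring
        _ ≤ _ := this
        _ = _ := by ring
  have hfin : ∀ N : ℕ, |(∑ n ∈ Finset.range N, -gd (s ^ 2) 1 (n + a))
      + emSum (s ^ 2) (N + a) - emSum (s ^ 2) a|
      ≤ 2 * C12 * (∑' n : ℕ, 1 / ((n : ℝ) + a) ^ 2) * (s ^ 2) ^ 5 := by
    intro N
    have htel : (∑ n ∈ Finset.range N, -gd (s ^ 2) 1 (n + a))
        + emSum (s ^ 2) (N + a) - emSum (s ^ 2) a
        = ∑ n ∈ Finset.range N, (emSum (s ^ 2) (n + a + 1) - emSum (s ^ 2) (n + a)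
          - gd (s ^ 2) 1 (n + a)) := by
      have := Finset.sum_range_sub (fun n : ℕ => emSum (s ^ 2) (n + a)) N
      simp only [Nat.cast_zero, zero_add, Nat.cast_add, Nat.cast_one, add_right_comm _ (1 : ℝ) a]
        at this
      rw [Finset.sum_sub_distrib, this, Finset.sum_neg_distrib]
      ring
    rw [htel]
    refine (Finset.abs_sum_le_sum_abs _ _).trans ((Finset.sum_le_sum fun n _ => hstep n).trans ?_)
    rw [← Finset.mul_sum]
    have := hsum.sum_le_tsum (Finset.range N) (fun n _ => by positivity)
    calc _ ≤ 2 * C12 * (s ^ 2) ^ 5 * ∑' n : ℕ, 1 / ((n : ℝ) + a) ^ 2 := by gcongr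
      _ = _ := by ring
  have hlim := ((hsm.hasSum.tendsto_sum_nat.add hFlim).sub_const (emSum (s ^ 2) a)).abs
  rw [add_zero] at hlim
  exact le_of_tendsto' hlim hfin

/-- The polynomial factor of `emSum`, sorted by powers of `t` with the part of order `t⁵` split off. -/
lemma emSum_expansion (t x : ℝ) : emSum t x = exp (-t * x ^ 2) *
    (1 + (x - 1 / 6) * t + (x ^ 2 / 3 - 1 / 60) * t ^ 2 + (x ^ 2 / 15 - 1 / 252) * t ^ 3
      + (-x ^ 4 / 45 + x ^ 2 / 42 - 1 / 720) * t ^ 4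
      + t ^ 5 * ((-x ^ 4 / 63 + x ^ 2 / 90 - 1 / 1584)
        + (2 * x ^ 6 / 945 - x ^ 4 / 90 + 5 * x ^ 2 / 792) * t
        + (2 * x ^ 6 / 675 - 5 * x ^ 4 / 594) * t ^ 2
        + (-x ^ 8 / 4725 + x ^ 6 / 297) * t ^ 3
        - x ^ 8 / 2079 * t ^ 4 + 2 * x ^ 10 / 93555 * t ^ 5)) := by
  simp only [emSum, gd]
  push_cast
  ring

/-- Completing the square: with `x = n + (m+1)/2` the eigenvalue is `x² - (m²+1)/4` and the
multiplicity is `2x`. -/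
lemma trace_eq (m : ℕ) (t : ℝ) (ht : t ≠ 0) :
    (∑' n : ℕ, ((m:ℝ) + 2*n + 1)
            * Real.exp (-t * ((n:ℝ) * (n+1) + ((m:ℝ)/2) * (2*n + 1))))
      = 1 / t * exp (t * ((m ^ 2 + 1) / 4)) * ∑' n : ℕ, -gd t 1 (n + ((m : ℝ) + 1) / 2) := by
  rw [← tsum_mul_left]
  refine tsum_congr fun n => ?_
  have : exp (-t * ((n:ℝ) * (n+1) + ((m:ℝ)/2) * (2*n + 1)))
      = exp (t * ((m ^ 2 + 1) / 4)) * exp (-t * (n + ((m : ℝ) + 1) / 2) ^ 2) := by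
    rw [← Real.exp_add]
    congr 1
    ring
  rw [this, gd]
  field_simp
  ring

lemma exp_taylor (c : ℝ) : (fun t : ℝ => exp (c * t) - (1 + c * t + (c * t) ^ 2 / 2
    + (c * t) ^ 3 / 6 + (c * t) ^ 4 / 24)) =O[𝓝[>] (0:ℝ)] fun t => t ^ 5 := by
  have h := Real.exp_sub_sum_range_isBigO_pow 5
  have hc : Tendsto (fun t : ℝ => c * t) (𝓝[>] 0) (𝓝 0) := by
    have : Tendsto (fun t : ℝ => c * t) (𝓝 0) (𝓝 (c * 0)) := (continuous_const_mul c).tendsto 0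
    rw [mul_zero] at this
    exact this.mono_left nhdsWithin_le_nhds
  have h2 := h.comp_tendsto hc
  refine (h2.congr (fun t => ?_) (fun t => ?_)).trans
    (isBigO_const_mul_self (c ^ 5) (fun t : ℝ => t ^ 5) _)
  · simp [Finset.sum_range_succ, Nat.factorial]
  · simp [mul_pow]

lemma pow_mul_isBigO (n : ℕ) (f : ℝ → ℝ) (hf : Continuous f) :
    (fun t : ℝ => t ^ n * f t) =O[𝓝[>] (0:ℝ)] fun t => t ^ n := by
  have h1 : f =O[𝓝[>] (0:ℝ)] fun _ => (1 : ℝ) :=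
    ((hf.tendsto 0).mono_left nhdsWithin_le_nhds).isBigO_one ℝ
  simpa using (isBigO_refl (fun t : ℝ => t ^ n) (𝓝[>] (0:ℝ))).mul h1

/-- Since `((m+1)/2)² - (m²+1)/4 = m/2`, the main term is a polynomial in `t` times
`exp (-mt/2)`, whose expansion up to `t⁴` gives the heat coefficients. -/
lemma main_term (m : ℝ) :
    (fun t : ℝ => exp (t * ((m ^ 2 + 1) / 4)) * emSum t ((m + 1) / 2)
      - (1 + t / 3 + (1/15 - m^2/24) * t^2 + (4/315 - m^2/40) * t^3
        + ((128 - 432 * m^2 + 49 * m^4)/40320) * t^4)) =O[𝓝[>] (0:ℝ)] fun t => t ^ 5 := by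
  let lo : ℝ → ℝ := fun t => 1 + ((m + 1) / 2 - 1 / 6) * t
      + (((m + 1) / 2) ^ 2 / 3 - 1 / 60) * t ^ 2
      + (((m + 1) / 2) ^ 2 / 15 - 1 / 252) * t ^ 3
      + (-((m + 1) / 2) ^ 4 / 45 + ((m + 1) / 2) ^ 2 / 42 - 1 / 720) * t ^ 4
  obtain ⟨hi, hhi, hF⟩ : ∃ hi : ℝ → ℝ, Continuous hi ∧ ∀ t,
      emSum t ((m + 1) / 2) = exp (-t * ((m + 1) / 2) ^ 2) * (lo t + t ^ 5 * hi t) :=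
    ⟨_, by fun_prop, fun t => emSum_expansion t ((m + 1) / 2)⟩
  have h1 := pow_mul_isBigO 5 (fun t => exp (-(m / 2) * t) * hi t) (by fun_prop)
  have h2 : (fun t => (exp (-(m / 2) * t) - (1 + -(m / 2) * t + (-(m / 2) * t) ^ 2 / 2
      + (-(m / 2) * t) ^ 3 / 6 + (-(m / 2) * t) ^ 4 / 24)) * lo t)
      =O[𝓝[>] (0:ℝ)] fun t => t ^ 5 := by
    have hlo : lo =O[𝓝[>] (0:ℝ)] fun _ => (1 : ℝ) := by
      simpa using pow_mul_isBigO 0 lo (by fun_prop)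
    simpa using (exp_taylor (-(m / 2))).mul hlo
  -- the terms of degree at least five in the product of `lo` and the quartic Taylor polynomial
  -- of `exp (-mt/2)`
  have h3 := pow_mul_isBigO 5 (fun t => (-m/630 - m^2/630 + m^3/252 + 13*m^4/5760 + m^5/3840)
    + (m^2/2520 + m^3/1890 - 11*m^4/13440 - 7*m^5/11520 + m^6/23040) * t
    + (-m^3/15120 - m^4/10080 + 11*m^5/80640 + 11*m^6/69120 + m^7/34560) * t^2
    + (m^4/120960 + m^5/60480 - m^6/161280 - m^7/69120 - m^8/276480) * t^3) (by fun_prop)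
  refine ((h1.add h2).add h3).congr_left fun t => ?_
  have he : exp (t * ((m ^ 2 + 1) / 4)) * emSum t ((m + 1) / 2)
      = exp (-(m / 2) * t) * (lo t + t ^ 5 * hi t) := by
    rw [hF, ← mul_assoc, ← Real.exp_add]
    congr 2
    ring
  rw [he]
  simp only [lo]
  ring

theorem trace_expansion (m : ℕ) :
    (fun t : ℝ =>
        (∑' n : ℕ, ((m:ℝ) + 2*n + 1)
            * Real.exp (-t * ((n:ℝ) * (n+1) + ((m:ℝ)/2) * (2*n + 1))))
          - 1/t - 1/3 - (1/15 - (m:ℝ)^2/24) * t - (4/315 - (m:ℝ)^2/40) * t^2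
          - ((128 - 432 * (m:ℝ)^2 + 49 * (m:ℝ)^4)/40320) * t^3)
      =O[𝓝[>] (0:ℝ)] fun t : ℝ => t^4 := by
  obtain ⟨C, hC⟩ := sum_approx (((m : ℝ) + 1) / 2) (by positivity)
  have hS : (fun t : ℝ => (∑' n : ℕ, -gd t 1 (n + ((m : ℝ) + 1) / 2))
      - emSum t (((m : ℝ) + 1) / 2)) =O[𝓝[>] (0:ℝ)] fun t => t ^ 5 := by
    refine IsBigO.of_bound C ?_
    filter_upwards [self_mem_nhdsWithin] with t (ht : 0 < t)
    rw [Real.norm_eq_abs, Real.norm_eq_abs, abs_of_pos (pow_pos ht 5)]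
    exact hC t ht
  have hexp : (fun t : ℝ => exp (t * (((m : ℝ) ^ 2 + 1) / 4))) =O[𝓝[>] (0:ℝ)]
      fun _ => (1 : ℝ) := by
    simpa using pow_mul_isBigO 0 (fun t : ℝ => exp (t * (((m : ℝ) ^ 2 + 1) / 4))) (by fun_prop)
  have h1 := hexp.mul hS
  simp only [one_mul] at h1
  have h2 := (isBigO_refl (fun t : ℝ => 1 / t) (𝓝[>] (0:ℝ))).mul (h1.add (main_term m))
  refine h2.congr' ?_ ?_
  · filter_upwards [self_mem_nhdsWithin] with t (ht : 0 < t)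
    rw [trace_eq m t ht.ne']
    generalize (∑' n : ℕ, -gd t 1 (n + ((m : ℝ) + 1) / 2)) = S
    field_simp
    ring
  · filter_upwards [self_mem_nhdsWithin] with t (ht : 0 < t)
    field_simp

/-- Explicit heat trace expansion for the magnetic Laplacian on `S²` with flux `m`:
`Tr (e^{-tH_m}) = 1/t + 1/3 + (1/15 - m²/24) t + (4/315 - m²/40) t²
  + ((128 - 432m² + 49m⁴)/40320) t³ + O(t⁴)` as `t → 0⁺`; and the relative trace
satisfies `Tr (e^{-tH_m}) - Tr (e^{-tH_0}) = -(m²/24) t + O(t²)`. -/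
theorem stmt_7 (m : ℕ) :
    ((fun t : ℝ =>
        (∑' n : ℕ, ((m:ℝ) + 2*n + 1)
            * Real.exp (-t * ((n:ℝ) * (n+1) + ((m:ℝ)/2) * (2*n + 1))))
          - 1/t - 1/3 - (1/15 - (m:ℝ)^2/24) * t - (4/315 - (m:ℝ)^2/40) * t^2
          - ((128 - 432 * (m:ℝ)^2 + 49 * (m:ℝ)^4)/40320) * t^3)
      =O[𝓝[>] (0:ℝ)] fun t : ℝ => t^4) ∧
    ((fun t : ℝ =>
        (∑' n : ℕ, ((m:ℝ) + 2*n + 1)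
            * Real.exp (-t * ((n:ℝ) * (n+1) + ((m:ℝ)/2) * (2*n + 1))))
          - (∑' n : ℕ, ((0:ℝ) + 2*n + 1) * Real.exp (-t * ((n:ℝ) * (n+1))))
          + ((m:ℝ)^2/24) * t)
      =O[𝓝[>] (0:ℝ)] fun t : ℝ => t^2) := by
  refine ⟨trace_expansion m, ?_⟩
  have h42 : (fun t : ℝ => t ^ 4) =O[𝓝[>] (0:ℝ)] fun t : ℝ => t ^ 2 :=
    (pow_mul_isBigO 2 (fun t => t ^ 2) (by fun_prop)).congr_left fun t => by ring
  have h := ((trace_expansion m).sub (trace_expansion 0)).trans h42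
  have hp := pow_mul_isBigO 2 (fun t => -(m : ℝ)^2/40
    + ((- 432 * (m:ℝ)^2 + 49 * (m:ℝ)^4)/40320) * t) (by fun_prop)
  refine (h.add hp).congr_left fun t => ?_
  simp only [Nat.cast_zero, zero_div, zero_mul, add_zero]
  ring
end

section
/- Let d > 0 be real, let ℓ be a positive integer, and let N ∈ ℕ. Then, as t → 0⁺, ∑_{n ≥ 0} exp(−t·(ℓn + d)²) = √π/(2ℓ√t) − ∑_{k=0}^{N} ((−ℓ²t)^k/k!)·B_{2k+1}(d/ℓ)/(2k+1) + O(t^{N+1}), where B_j denotes the j-th Bernoulli polynomial. -/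
open Real Filter Asymptotics Topology

/-!
The expansion is the Euler-Maclaurin formula for `x ↦ exp (-s x²)`, with `s = ℓ² t` and
`x = d / ℓ`, so that the sum becomes `∑ exp (-s (n + x)²)`.

On `[0, 1]`, subtracting from a smooth `g` its mean and the combination
`∑ B_{j+1}(x) / (j+1)! (g^{(j)}(1) - g^{(j)}(0))` leaves a remainder which has mean zero and whose
derivative is the remainder of one order less for `g'`. Since a mean-zero function is bounded by
the `L¹` norm of its derivative, the remainder of order `M` is at most `∫₀¹ |g^{(M+1)}|`
(`abs_emRem_le`). Adding the estimates over unit intervals telescopes the boundary terms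
(`abs_euler_maclaurin_le`).

For the Gaussian `exp (-(σ y)²)`, `σ = √s`, the boundary terms at infinity vanish, those at `0` are
the coefficients of the asserted expansion, and `∫₀^∞ |g^{(2N+3)}|` scales as
`σ^{2N+2} = s^{N+1}`. This proves the claim, uniformly in `s`, for `x ∈ [0, 1]`
(`abs_thetaErr_le`). Replacing `x` by `x + 1` changes the error by the Taylor remainder
`exp (-s x²) - ∑_{k ≤ N} (-s x²)^k / k!`, because `B_n(x + 1) - B_n(x) = n x^{n-1}`; this remainder
is `O(s^{N+1})`, which gives every `x ≥ 0`.
-/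

/-! ### Euler-Maclaurin summation with remainder bound -/

/-- `F x` is the average over `y ∈ [0, 1]` of `F x - F y`. -/
lemma abs_le_integral_abs_deriv {F F' : ℝ → ℝ} (hF : ∀ x, HasDerivAt F (F' x) x)
    (hF' : Continuous F') (h0 : ∫ y in (0:ℝ)..1, F y = 0) {x : ℝ} (hx : x ∈ Set.Icc (0:ℝ) 1) :
    |F x| ≤ ∫ y in (0:ℝ)..1, |F' y| := by
  have hFc : Continuous F := continuous_iff_continuousAt.2 fun y => (hF y).continuousAt
  have key : ∀ y ∈ Set.uIoc (0:ℝ) 1, ‖F x - F y‖ ≤ ∫ y in (0:ℝ)..1, |F' y| := by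
    intro y hy
    rw [Set.uIoc_of_le zero_le_one] at hy
    rw [← intervalIntegral.integral_eq_sub_of_hasDerivAt (fun z _ => hF z)
      (hF'.intervalIntegrable _ _)]
    refine intervalIntegral.norm_integral_le_abs_integral_norm.trans ?_
    refine (intervalIntegral.abs_integral_mono_interval (c := 0) (d := 1) ?_ ?_ ?_).trans ?_
    · rw [Set.uIoc_of_le zero_le_one]
      intro z hz
      rw [Set.mem_uIoc] at hz
      obtain ⟨h1, h2⟩ := hx
      obtain ⟨h3, h4⟩ := hy
      constructor <;> rcases hz with hz | hz <;> linarith [hz.1, hz.2]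
    · exact MeasureTheory.ae_of_all _ fun z => norm_nonneg _
    · exact hF'.norm.intervalIntegrable _ _
    · rw [abs_of_nonneg]
      · simp only [Real.norm_eq_abs, le_refl]
      · exact intervalIntegral.integral_nonneg zero_le_one fun z _ => norm_nonneg _
  have h := intervalIntegral.norm_integral_le_of_norm_le_const key
  rw [intervalIntegral.integral_sub (by simp) (hFc.intervalIntegrable _ _), h0] at h
  simpa using h

/-- The Euler-Maclaurin remainder of order `M` on `[0, 1]` of the function `G 0`, where `G j` plays
the role of its `j`-th derivative. -/
noncomputable def emRem (G : ℕ → ℝ → ℝ) (M : ℕ) (x : ℝ) : ℝ :=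
  G 0 x - (∫ y in (0:ℝ)..1, G 0 y)
    - ∑ j ∈ Finset.range M, bernoulliFun (j + 1) x / (j + 1).factorial * (G j 1 - G j 0)

section
variable {G : ℕ → ℝ → ℝ}

lemma continuous_of_hasDerivAt (hG : ∀ j x, HasDerivAt (G j) (G (j + 1) x) x) (j : ℕ) :
    Continuous (G j) :=
  continuous_iff_continuousAt.2 fun y => (hG j y).continuousAt

lemma continuous_emRem (hG : ∀ j x, HasDerivAt (G j) (G (j + 1) x) x) (M : ℕ) :
    Continuous (emRem G M) := by
  have := continuous_of_hasDerivAt hG 0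
  unfold emRem
  fun_prop

lemma integral_emRem (hG : ∀ j x, HasDerivAt (G j) (G (j + 1) x) x) (M : ℕ) :
    ∫ x in (0:ℝ)..1, emRem G M x = 0 := by
  have := continuous_of_hasDerivAt hG 0
  unfold emRem
  rw [intervalIntegral.integral_sub, intervalIntegral.integral_sub,
    intervalIntegral.integral_finsetSum]
  · simp [integral_bernoulliFun_eq_zero]
  all_goals intros; exact Continuous.intervalIntegrable (by fun_prop) _ _

lemma hasDerivAt_emRem_succ (hG : ∀ j x, HasDerivAt (G j) (G (j + 1) x) x) (M : ℕ) (x : ℝ) :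
    HasDerivAt (emRem G (M + 1)) (emRem (fun j => G (j + 1)) M x) x := by
  have hint : ∫ y in (0:ℝ)..1, G 1 y = G 0 1 - G 0 0 :=
    intervalIntegral.integral_eq_sub_of_hasDerivAt (fun z _ => hG 0 z)
      ((continuous_of_hasDerivAt hG 1).intervalIntegrable _ _)
  have hs : HasDerivAt (fun x => ∑ j ∈ Finset.range (M + 1),
      bernoulliFun (j + 1) x / (j + 1).factorial * (G j 1 - G j 0))
      (∑ j ∈ Finset.range (M + 1), bernoulliFun j x / j.factorial * (G j 1 - G j 0)) x := by
    refine HasDerivAt.fun_sum fun j _ => ?_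
    refine HasDerivAt.mul_const ?_ _
    convert! (hasDerivAt_bernoulliFun (j + 1) x).div_const ((j + 1).factorial : ℝ) using 1
    rw [Nat.factorial_succ]
    push_cast
    have : (j.factorial : ℝ) ≠ 0 := by positivity
    have : (j : ℝ) + 1 ≠ 0 := by positivity
    field_simp
  convert! ((hG 0 x).sub_const (∫ y in (0:ℝ)..1, G 0 y)).sub hs using 1
  unfold emRem
  rw [Finset.sum_range_succ', hint]
  simp
  ring

lemma abs_emRem_le (M : ℕ) : ∀ {G : ℕ → ℝ → ℝ},
    (∀ j x, HasDerivAt (G j) (G (j + 1) x) x) → ∀ {x : ℝ}, x ∈ Set.Icc (0:ℝ) 1 →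
    |emRem G M x| ≤ ∫ y in (0:ℝ)..1, |G (M + 1) y| := by
  induction M with
  | zero =>
    intro G hG x hx
    refine abs_le_integral_abs_deriv (fun y => ?_) (continuous_of_hasDerivAt hG 1)
      (integral_emRem hG 0) hx
    have := (hG 0 y).sub_const (∫ y in (0:ℝ)..1, G 0 y)
    simpa +unfoldPartialApp [emRem] using this
  | succ M ih =>
    intro G hG x hx
    have hG' : ∀ j x, HasDerivAt (G (j + 1)) (G (j + 1 + 1) x) x := fun j => hG (j + 1)
    refine (abs_le_integral_abs_deriv (hasDerivAt_emRem_succ hG M)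
      (continuous_emRem (G := fun j => G (j + 1)) hG' M) (integral_emRem hG (M + 1)) hx).trans ?_
    have h : ∀ y ∈ Set.Icc (0:ℝ) 1, |emRem (fun j => G (j + 1)) M y| ≤
        ∫ y in (0:ℝ)..1, |G (M + 1 + 1) y| := fun y hy => ih (G := fun j => G (j + 1)) hG' hy
    refine (intervalIntegral.integral_mono_on zero_le_one ?_ ?_ h).trans ?_
    · exact (continuous_emRem (G := fun j => G (j + 1)) hG' M).abs.intervalIntegrable _ _
    · simp
    · simp

/-- Euler-Maclaurin on `[0, K]` with sample points `n + x`, from `abs_emRem_le` on each unit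
interval. -/
lemma abs_euler_maclaurin_le (hG : ∀ j x, HasDerivAt (G j) (G (j + 1) x) x) (M K : ℕ) {x : ℝ}
    (hx : x ∈ Set.Icc (0:ℝ) 1) :
    |∑ n ∈ Finset.range K, G 0 (n + x) - (∫ y in (0:ℝ)..K, G 0 y)
      - ∑ j ∈ Finset.range M, bernoulliFun (j + 1) x / (j + 1).factorial * (G j K - G j 0)|
    ≤ ∫ y in (0:ℝ)..K, |G (M + 1) y| := by
  have hc := continuous_of_hasDerivAt hG
  induction K with
  | zero => simp
  | succ K ih =>
    have h := abs_emRem_le M (G := fun j y => G j (K + y))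
      (fun j y => by simpa using (hG j (K + y)).comp_const_add (K:ℝ) y) hx
    rw [intervalIntegral.integral_comp_add_left (fun y => |G (M + 1) y|)] at h
    unfold emRem at h
    rw [intervalIntegral.integral_comp_add_left (fun y => G 0 y)] at h
    simp only [add_zero] at h
    push_cast
    rw [← intervalIntegral.integral_add_adjacent_intervals (b := (K:ℝ)) (c := (K:ℝ) + 1)
      ((hc 0).intervalIntegrable _ _) ((hc 0).intervalIntegrable _ _),
      ← intervalIntegral.integral_add_adjacent_intervals (b := (K:ℝ)) (c := (K:ℝ) + 1)
      ((hc _).abs.intervalIntegrable _ _) ((hc _).abs.intervalIntegrable _ _)]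
    refine le_trans (le_of_eq ?_) ((abs_add_le _ _).trans (add_le_add ih h))
    congr 1
    have : ∀ j, bernoulliFun (j + 1) x / (j + 1).factorial * (G j (K + 1) - G j 0) =
      bernoulliFun (j + 1) x / (j + 1).factorial * (G j K - G j 0) +
      bernoulliFun (j + 1) x / (j + 1).factorial * (G j (K + 1) - G j K) := fun j => by ring
    simp only [this, Finset.sum_add_distrib, Finset.sum_range_succ]
    ring
end

/-! ### Derivatives of the Gaussian -/

open Polynomial in
/-- The polynomial `p_j` with `(d/dx)^j exp (-x²) = p_j(x) exp (-x²)`: up to the sign `(-1)^j`, the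
physicists' Hermite polynomial. -/
noncomputable def gaussPoly : ℕ → ℝ[X]
  | 0 => 1
  | j + 1 => derivative (gaussPoly j) - 2 * X * gaussPoly j

/-- The `j`-th derivative of `exp (-x²)`. -/
noncomputable def gaussDeriv (j : ℕ) (x : ℝ) : ℝ := (gaussPoly j).eval x * Real.exp (-x ^ 2)

lemma hasDerivAt_gaussDeriv (j : ℕ) (x : ℝ) :
    HasDerivAt (gaussDeriv j) (gaussDeriv (j + 1) x) x := by
  convert! ((gaussPoly j).hasDerivAt x).mul ((hasDerivAt_pow 2 x).neg.exp) using 1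
  simp [gaussDeriv, gaussPoly]
  ring

open Polynomial in
lemma derivative_gaussPoly_succ (j : ℕ) :
    derivative (gaussPoly (j + 1)) = -2 * (j + 1) * gaussPoly j := by
  induction j with
  | zero => simp [gaussPoly]
  | succ j ih =>
    rw [gaussPoly, derivative_sub, ih]
    simp only [derivative_mul, derivative_X, derivative_ofNat, derivative_neg, derivative_add,
      derivative_natCast, derivative_one, ih]
    have : gaussPoly (j + 1) = derivative (gaussPoly j) - 2 * X * gaussPoly j := rfl
    rw [this]
    push_cast
    ring

lemma gaussDeriv_add_two_zero (j : ℕ) :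
    gaussDeriv (j + 2) 0 = -2 * (j + 1) * gaussDeriv j 0 := by
  have h : (gaussPoly (j + 2)).eval 0 = -2 * (j + 1) * (gaussPoly j).eval 0 := by
    rw [gaussPoly, derivative_gaussPoly_succ]
    simp
  simp [gaussDeriv, h]

lemma gaussDeriv_odd_zero (k : ℕ) : gaussDeriv (2 * k + 1) 0 = 0 := by
  induction k with
  | zero => simp [gaussDeriv, gaussPoly]
  | succ k ih => rw [show 2 * (k + 1) + 1 = 2 * k + 1 + 2 by ring, gaussDeriv_add_two_zero, ih]; simp

lemma gaussDeriv_even_zero (k : ℕ) :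
    gaussDeriv (2 * k) 0 = (-1) ^ k * (2 * k).factorial / k.factorial := by
  induction k with
  | zero => simp [gaussDeriv, gaussPoly]
  | succ k ih =>
    rw [show 2 * (k + 1) = 2 * k + 2 by ring, gaussDeriv_add_two_zero, ih]
    simp only [Nat.factorial_succ]
    push_cast
    have : (k.factorial : ℝ) ≠ 0 := by positivity
    have : (k : ℝ) + 1 ≠ 0 := by positivity
    field_simp
    ring

lemma integrable_gaussDeriv (j : ℕ) : MeasureTheory.Integrable (gaussDeriv j) := by
  unfold gaussDeriv
  induction gaussPoly j using Polynomial.induction_on' with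
  | add p q hp hq =>
    simp only [Polynomial.eval_add, add_mul]
    exact hp.add hq
  | monomial n a =>
    have h := (integrable_rpow_mul_exp_neg_mul_sq one_pos (s := n)
      (by linarith [(Nat.cast_nonneg n : (0:ℝ) ≤ n)])).const_mul a
    simpa [mul_assoc] using h

lemma tendsto_gaussDeriv (j : ℕ) : Tendsto (gaussDeriv j) atTop (𝓝 0) := by
  have h := (gaussPoly j).tendsto_div_exp_atTop
  refine squeeze_zero_norm' ?_ (by simpa using h.norm)
  filter_upwards [eventually_ge_atTop 1] with x hx
  unfold gaussDeriv
  rw [div_eq_mul_inv, ← Real.exp_neg, norm_mul, Real.norm_eq_abs, Real.norm_eq_abs, Real.abs_exp]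
  gcongr
  nlinarith

/-! ### The error term -/

lemma summable_exp_neg_mul_sq {s x : ℝ} (hs : 0 < s) (hx : 0 ≤ x) :
    Summable fun n : ℕ => Real.exp (-s * (n + x) ^ 2) := by
  refine Summable.of_nonneg_of_le (fun n => (Real.exp_pos _).le) (fun n => ?_)
    (summable_pow_mul_exp_neg_nat_mul 0 hs)
  rw [pow_zero, one_mul]
  refine Real.exp_le_exp.2 ?_
  have h : (n:ℝ) ≤ (n + x) ^ 2 := by
    have : (n:ℝ) ≤ (n:ℝ) ^ 2 := by exact_mod_cast Nat.le_self_pow two_ne_zero n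
    nlinarith [mul_nonneg (Nat.cast_nonneg n : (0:ℝ) ≤ n) hx]
  nlinarith

/-- The sum `∑ exp (-s (n + x)²)` minus its expansion up to order `s ^ N`. -/
noncomputable def thetaErr (N : ℕ) (x s : ℝ) : ℝ :=
  (∑' n : ℕ, Real.exp (-s * (n + x) ^ 2)) - √π / (2 * √s)
    + ∑ k ∈ Finset.range (N + 1), (-s) ^ k / k.factorial * bernoulliFun (2 * k + 1) x / (2 * k + 1)

/-- The Euler-Maclaurin boundary terms at `0`: the odd derivatives of the Gaussian vanish there and
the even ones give the expansion coefficients. -/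
lemma sum_bernoulli_gaussDeriv (N : ℕ) (x σ : ℝ) :
    ∑ j ∈ Finset.range (2 * N), bernoulliFun (j + 1) x / (j + 1).factorial *
      (σ ^ j * gaussDeriv j 0) =
    ∑ k ∈ Finset.range N, (-σ ^ 2) ^ k / k.factorial * bernoulliFun (2 * k + 1) x / (2 * k + 1) := by
  induction N with
  | zero => simp
  | succ N ih =>
    rw [show 2 * (N + 1) = 2 * N + 1 + 1 by ring, Finset.sum_range_succ, Finset.sum_range_succ, ih,
      Finset.sum_range_succ, gaussDeriv_odd_zero, gaussDeriv_even_zero, Nat.factorial_succ (2 * N),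
      neg_pow (σ ^ 2), ← pow_mul]
    push_cast
    have : (N.factorial : ℝ) ≠ 0 := by positivity
    have : ((2 * N).factorial : ℝ) ≠ 0 := by positivity
    have : 2 * (N : ℝ) + 1 ≠ 0 := by positivity
    field_simp
    ring

lemma abs_thetaErr_le (N : ℕ) {x s : ℝ} (hx : x ∈ Set.Icc (0:ℝ) 1) (hs : 0 < s) :
    |thetaErr N x s| ≤ (∫ y in Set.Ioi (0:ℝ), |gaussDeriv (2 * N + 3) y|) * s ^ (N + 1) := by
  set σ := √s with hσ
  have hσ0 : 0 < σ := Real.sqrt_pos.2 hs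
  have hσ2 : σ ^ 2 = s := Real.sq_sqrt hs.le
  set G : ℕ → ℝ → ℝ := fun j y => σ ^ j * gaussDeriv j (σ * y) with hGdef
  have hG : ∀ j y, HasDerivAt (G j) (G (j + 1) y) y := by
    intro j y
    convert! (((hasDerivAt_gaussDeriv j (σ * y)).comp y
      ((hasDerivAt_id y).const_mul σ)).const_mul (σ ^ j)) using 1
    simp [hGdef]
    ring
  have hG0 : ∀ y, G 0 y = Real.exp (-s * y ^ 2) := by
    intro y
    simp [hGdef, gaussDeriv, gaussPoly, mul_pow, hσ2]
  have hbound : ∀ K : ℕ, ∫ y in (0:ℝ)..K, |G (2 * N + 2 + 1) y| ≤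
      (∫ y in Set.Ioi (0:ℝ), |gaussDeriv (2 * N + 3) y|) * s ^ (N + 1) := by
    intro K
    have h1 : ∀ y, |G (2 * N + 2 + 1) y| = σ ^ (2 * N + 3) * |gaussDeriv (2 * N + 3) (σ * y)| := by
      intro y
      simp only [hGdef, abs_mul, abs_of_pos (pow_pos hσ0 _)]
    simp only [h1]
    rw [intervalIntegral.integral_const_mul,
      intervalIntegral.integral_comp_mul_left (fun y => |gaussDeriv (2 * N + 3) y|) hσ0.ne',
      mul_zero, intervalIntegral.integral_of_le (by positivity), ← hσ2, ← pow_mul, smul_eq_mul,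
      ← mul_assoc, mul_comm]
    -- the substitution `y ↦ σ y` costs one factor `σ`
    have h2 : σ ^ (2 * N + 3) * σ⁻¹ = σ ^ (2 * (N + 1)) := by
      field_simp
      ring
    rw [h2]
    gcongr
    · exact MeasureTheory.ae_of_all _ fun y => abs_nonneg _
    · exact (integrable_gaussDeriv _).abs.integrableOn
    · exact Set.Ioc_subset_Ioi_self
  have hlim : Tendsto (fun K : ℕ => |∑ n ∈ Finset.range K, G 0 (n + x) - (∫ y in (0:ℝ)..K, G 0 y)
      - ∑ j ∈ Finset.range (2 * N + 2),
          bernoulliFun (j + 1) x / (j + 1).factorial * (G j K - G j 0)|) atTop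
      (𝓝 |thetaErr N x s|) := by
    have hA : Tendsto (fun K : ℕ => ∑ n ∈ Finset.range K, G 0 (n + x)) atTop
        (𝓝 (∑' n : ℕ, Real.exp (-s * (n + x) ^ 2))) := by
      simp only [hG0]
      exact (summable_exp_neg_mul_sq hs hx.1).hasSum.tendsto_sum_nat
    have hB : Tendsto (fun K : ℕ => ∫ y in (0:ℝ)..K, G 0 y) atTop (𝓝 (√π / (2 * √s))) := by
      have := MeasureTheory.intervalIntegral_tendsto_integral_Ioi 0
        (integrable_exp_neg_mul_sq hs).integrableOn (tendsto_natCast_atTop_atTop (R := ℝ))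
      rw [integral_gaussian_Ioi, Real.sqrt_div Real.pi_pos.le, div_div, mul_comm (√s)] at this
      simpa only [hG0] using this
    have hC : Tendsto (fun K : ℕ => ∑ j ∈ Finset.range (2 * N + 2),
          bernoulliFun (j + 1) x / (j + 1).factorial * (G j K - G j 0)) atTop
        (𝓝 (∑ j ∈ Finset.range (2 * N + 2),
          bernoulliFun (j + 1) x / (j + 1).factorial * (0 - G j 0))) := by
      refine tendsto_finsetSum _ fun j _ => ((Tendsto.sub_const ?_ _).const_mul _)
      simpa using ((tendsto_gaussDeriv j).comp
        (tendsto_natCast_atTop_atTop.const_mul_atTop hσ0)).const_mul (σ ^ j)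
    convert! ((hA.sub hB).sub hC).abs using 3
    unfold thetaErr
    rw [← hσ2, ← sum_bernoulli_gaussDeriv, sub_eq_add_neg (_ - _), ← Finset.sum_neg_distrib]
    simp [hGdef, mul_add]
  exact le_of_tendsto hlim (Eventually.of_forall fun K =>
    (abs_euler_maclaurin_le hG (2 * N + 2) K hx).trans (hbound K))

lemma bernoulliFun_add_one (n : ℕ) (x : ℝ) :
    bernoulliFun n (x + 1) = bernoulliFun n x + n * x ^ (n - 1) := by
  have h := congrArg (Polynomial.aeval x) (Polynomial.bernoulli_comp_one_add_X n)
  simp only [bernoulliFun, Polynomial.eval_map_algebraMap]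
  simpa [Polynomial.aeval_comp, add_comm] using h

lemma thetaErr_add_one (N : ℕ) {x s : ℝ} (hx : 0 ≤ x) (hs : 0 < s) :
    thetaErr N (x + 1) s = thetaErr N x s - (Real.exp (-s * x ^ 2)
      - ∑ k ∈ Finset.range (N + 1), (-s * x ^ 2) ^ k / k.factorial) := by
  unfold thetaErr
  rw [(summable_exp_neg_mul_sq hs hx).tsum_eq_zero_add]
  have h : ∀ k : ℕ, (-s) ^ k / k.factorial * bernoulliFun (2 * k + 1) (x + 1) / (2 * k + 1) =
      (-s) ^ k / k.factorial * bernoulliFun (2 * k + 1) x / (2 * k + 1)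
        + (-s * x ^ 2) ^ k / k.factorial := by
    intro k
    rw [bernoulliFun_add_one, mul_pow, ← pow_mul]
    have : 2 * (k : ℝ) + 1 ≠ 0 := by positivity
    push_cast
    field_simp
  simp only [h, Finset.sum_add_distrib]
  simp only [Nat.cast_add, Nat.cast_one, Nat.cast_zero, zero_add, add_assoc, add_comm (1:ℝ)]
  ring

lemma thetaErr_isBigO (N m : ℕ) {x : ℝ} (hx : x ∈ Set.Icc (0:ℝ) 1) :
    (fun s => thetaErr N (x + m) s) =O[𝓝[>] (0:ℝ)] fun s => s ^ (N + 1) := by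
  induction m with
  | zero =>
    refine IsBigO.of_bound (∫ y in Set.Ioi (0:ℝ), |gaussDeriv (2 * N + 3) y|) ?_
    filter_upwards [self_mem_nhdsWithin] with s hs
    have hs : 0 < s := hs
    simpa [abs_of_pos hs] using abs_thetaErr_le N hx hs
  | succ m ih =>
    have hxm : 0 ≤ x + m := add_nonneg hx.1 (Nat.cast_nonneg m)
    have hT : (fun s => Real.exp (-s * (x + m) ^ 2)
        - ∑ k ∈ Finset.range (N + 1), (-s * (x + m) ^ 2) ^ k / k.factorial) =O[𝓝[>] (0:ℝ)]
        fun s => s ^ (N + 1) := by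
      have ht : Tendsto (fun s : ℝ => -s * (x + m) ^ 2) (𝓝[>] 0) (𝓝 0) := by
        have : Continuous (fun s : ℝ => -s * (x + m) ^ 2) := by fun_prop
        exact (this.tendsto' 0 0 (by simp)).mono_left nhdsWithin_le_nhds
      refine ((Real.exp_sub_sum_range_isBigO_pow (N + 1)).comp_tendsto ht).trans ?_
      refine IsBigO.of_bound (((x + m) ^ 2) ^ (N + 1)) (Eventually.of_forall fun s => ?_)
      simp [mul_pow, mul_comm]
    refine (ih.sub hT).congr' ?_ EventuallyEq.rfl
    filter_upwards [self_mem_nhdsWithin] with s hs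
    rw [Nat.cast_succ, ← add_assoc, thetaErr_add_one N hxm hs]

/-- Asymptotic expansion of the Jacobi partial theta function at `z = 0`:
for real `d > 0`, a positive integer `ℓ` and `N ∈ ℕ`, as `t → 0⁺`,
`∑_{n ≥ 0} exp (-t (ℓn + d)²) = √π/(2ℓ√t)
  - ∑_{k=0}^{N} ((-ℓ²t)^k/k!) B_{2k+1}(d/ℓ)/(2k+1) + O(t^{N+1})`,
where `B_j` is the `j`-th Bernoulli polynomial. -/
theorem stmt_8 (d : ℝ) (hd : 0 < d) (ℓ : ℕ) (hℓ : 0 < ℓ) (N : ℕ) :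
    (fun t : ℝ =>
        (∑' n : ℕ, Real.exp (-t * ((ℓ:ℝ) * n + d)^2))
          - Real.sqrt Real.pi / (2 * (ℓ:ℝ) * Real.sqrt t)
          + ∑ k ∈ Finset.range (N+1),
              ((-(ℓ:ℝ)^2 * t)^k / (Nat.factorial k))
                * Polynomial.aeval (d / (ℓ:ℝ)) (Polynomial.bernoulli (2*k + 1))
                / (2*k + 1))
      =O[𝓝[>] (0:ℝ)] fun t : ℝ => t^(N+1) := by
  have hl : (0:ℝ) < ℓ := Nat.cast_pos.2 hℓ
  have ha : 0 ≤ d / ℓ := by positivity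
  -- split `d / ℓ` into its integer and fractional parts
  have hfr : d / ℓ - ⌊d / ℓ⌋₊ ∈ Set.Icc (0:ℝ) 1 :=
    ⟨sub_nonneg.2 (Nat.floor_le ha), by linarith [Nat.lt_floor_add_one (d / (ℓ:ℝ))]⟩
  have h := thetaErr_isBigO N ⌊d / ℓ⌋₊ hfr
  simp only [sub_add_cancel] at h
  have ht : Tendsto (fun t : ℝ => (ℓ:ℝ) ^ 2 * t) (𝓝[>] 0) (𝓝[>] 0) := by
    refine tendsto_nhdsWithin_iff.2 ⟨?_, ?_⟩
    · have : Continuous (fun t : ℝ => (ℓ:ℝ) ^ 2 * t) := by fun_prop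
      exact (this.tendsto' 0 0 (by simp)).mono_left nhdsWithin_le_nhds
    · filter_upwards [self_mem_nhdsWithin] with t ht
      have : 0 < t := ht
      exact Set.mem_Ioi.2 (by positivity)
  refine ((h.comp_tendsto ht).congr_left fun t => ?_).trans
    (IsBigO.of_bound (((ℓ:ℝ) ^ 2) ^ (N + 1)) (Eventually.of_forall fun t => ?_))
  · simp only [Function.comp, thetaErr, bernoulliFun, Polynomial.eval_map_algebraMap]
    have hsum : ∀ n : ℕ, Real.exp (-((ℓ:ℝ) ^ 2 * t) * (n + d / ℓ) ^ 2) =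
        Real.exp (-t * ((ℓ:ℝ) * n + d) ^ 2) := by
      intro n
      congr 1
      field_simp
    rw [Real.sqrt_mul (by positivity), Real.sqrt_sq hl.le, ← mul_assoc]
    simp only [hsum]
    simp only [neg_mul]
  · simp [mul_pow]
end

section
/- There exists a constant C > 0 such that for every ν ∈ (0, 1), every k ∈ ℤ and every integer p ≥ 1, |((k − ν)·tanh(k − ν))^p − |k − ν|^p| ≤ C·p·(|k| + 1)^p·exp(−2|k|). -/
open Real

/-!
Put `a = |k - ν|` and `t = tanh a ∈ [0, 1]`. Since `x tanh x` is even, the left-hand side is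
`a ^ p * (1 - t ^ p)`, and Bernoulli's inequality gives `1 - t ^ p ≤ p * (1 - t)`. Moreover
`1 - tanh a ≤ 2 exp (-2 a)` and `| |k| - a | ≤ 1`, so `C = 2 exp 2` works.
-/

lemma one_sub_tanh_le (a : ℝ) : 1 - Real.tanh a ≤ 2 * Real.exp (-2 * a) := by
  have h1 := Real.exp_pos a
  have h2 := Real.exp_pos (-a)
  have h3 : Real.exp (-2 * a) = Real.exp (-a) * Real.exp (-a) := by
    rw [← Real.exp_add]; ring_nf
  have h4 : Real.exp a * Real.exp (-a) = 1 := by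
    rw [← Real.exp_add]; simp
  have h5 : 1 - Real.tanh a = 2 * Real.exp (-a) / (Real.exp a + Real.exp (-a)) := by
    rw [Real.tanh_eq]
    field_simp
    ring
  rw [h5, h3, div_le_iff₀ (by positivity)]
  have h6 : 0 < Real.exp (-a) * Real.exp (-a) * Real.exp (-a) := by positivity
  linear_combination 2 * h6 - 2 * Real.exp (-a) * h4

lemma mul_tanh_eq_abs (x : ℝ) : x * Real.tanh x = |x| * Real.tanh |x| := by
  rcases abs_choice x with h | h <;> rw [h]
  rw [Real.tanh_neg]; ring

/-- Uniform estimate for the Steklov eigenvalues `λ_k⁻(ν) = (k-ν) tanh (k-ν)` of the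
magnetic D-to-N map on the cylinder: there is `C > 0` such that for all `ν ∈ (0,1)`,
`k ∈ ℤ` and integers `p ≥ 1`,
`|((k-ν) tanh (k-ν))^p - |k-ν|^p| ≤ C p (|k|+1)^p exp (-2|k|)`. -/
theorem stmt_10 :
    ∃ C : ℝ, 0 < C ∧ ∀ ν ∈ Set.Ioo (0:ℝ) 1, ∀ k : ℤ, ∀ p : ℕ, 1 ≤ p →
      |(((k:ℝ) - ν) * Real.tanh ((k:ℝ) - ν))^p - |(k:ℝ) - ν|^p|
        ≤ C * p * (|(k:ℝ)| + 1)^p * Real.exp (-2 * |(k:ℝ)|) := by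
  refine ⟨2 * Real.exp 2, by positivity, ?_⟩
  rintro ν ⟨hν0, hν1⟩ k p -
  rw [mul_tanh_eq_abs]
  have hν : |ν| ≤ 1 := abs_le.2 ⟨by linarith, hν1.le⟩
  have hup : |(k:ℝ) - ν| ≤ |(k:ℝ)| + 1 := (abs_sub _ _).trans (by linarith)
  have hlow : |(k:ℝ)| - 1 ≤ |(k:ℝ) - ν| := by
    linarith [abs_sub_abs_le_abs_sub (k:ℝ) ν]
  have ha : 0 ≤ |(k:ℝ) - ν| := abs_nonneg _
  generalize |(k:ℝ) - ν| = a at *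
  have ht0 : 0 ≤ Real.tanh a := by
    rw [Real.tanh_eq_sinh_div_cosh]
    exact div_nonneg (Real.sinh_nonneg_iff.2 ha) (Real.cosh_pos a).le
  have ht1 : Real.tanh a ≤ 1 := (Real.tanh_lt_one a).le
  have hbern : 1 - Real.tanh a ^ p ≤ p * (1 - Real.tanh a) := by
    have := one_add_mul_le_pow (a := Real.tanh a - 1) (by linarith) p
    rw [add_sub_cancel] at this
    linarith
  have hexp : Real.exp (-2 * a) ≤ Real.exp 2 * Real.exp (-2 * |(k:ℝ)|) := by
    rw [← Real.exp_add]
    exact Real.exp_le_exp.2 (by linarith)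
  have htail : 1 - Real.tanh a ≤ 2 * (Real.exp 2 * Real.exp (-2 * |(k:ℝ)|)) := by
    linarith [one_sub_tanh_le a]
  have hle : Real.tanh a ^ p ≤ 1 := pow_le_one₀ ht0 ht1
  have habs : |(a * Real.tanh a) ^ p - a ^ p| = a ^ p * (1 - Real.tanh a ^ p) := by
    rw [mul_pow, abs_sub_comm, abs_of_nonneg]
    · ring
    · nlinarith [pow_nonneg ha p]
  calc |(a * Real.tanh a) ^ p - a ^ p| = a ^ p * (1 - Real.tanh a ^ p) := habs
    _ ≤ (|(k:ℝ)| + 1) ^ p * (p * (2 * (Real.exp 2 * Real.exp (-2 * |(k:ℝ)|)))) := by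
        refine mul_le_mul (pow_le_pow_left₀ ha hup p) (hbern.trans ?_) (by linarith)
          (by positivity)
        gcongr
    _ = 2 * Real.exp 2 * p * (|(k:ℝ)| + 1) ^ p * Real.exp (-2 * |(k:ℝ)|) := by ring
end

section
/- Let ν ∈ (0, 1) and t ∈ (0, 2). Then ∑_{k ∈ ℤ} (exp(−t·|k − ν|·tanh|k − ν|) − exp(−t·|k − ν|)) = ∑_{p ≥ 1} a_p⁻·t^p, where for each integer p ≥ 1, a_p⁻ = ((−1)^p/p!)·∑_{k ∈ ℤ} ((|k − ν|·tanh|k − ν|)^p − |k − ν|^p); moreover all series appearing converge absolutely. -/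
/-!
Write `x = |k - ν|` and `y = x tanh x`, so that `0 ≤ y ≤ x`. Expanding both exponentials, the
`k`-th term of the heat trace is the sum over `p` of `heatTerm t x p = ((-t)^p / p!) (y^p - x^p)`,
whose `p = 0` term vanishes. Everything follows from Fubini once the double family is absolutely
summable over `ℤ × ℕ`. Since `y ≤ x`, all `|heatTerm t x p|` equal `(t^p / p!) (x^p - y^p)`, which
sum over `p` to `exp (t x) - exp (t y) ≤ t (x - y) exp (t x)`. As `x - y ≤ 2 x exp (-2 x)`, this is at
most `2 t x exp (-(2 - t) x)` (`exp_sub_exp_le`), which is summable over `k` exactly because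
`t < 2` (`summable_abs_mul_exp`).
-/

open Real

/-- The term of order `p` in the expansion of `exp (-t x tanh x) - exp (-t x)` in powers of `t`. -/
noncomputable def heatTerm (t x : ℝ) (p : ℕ) : ℝ :=
  ((-1) ^ p / (Nat.factorial p)) * ((x * Real.tanh x) ^ p - x ^ p) * t ^ p

lemma mul_tanh_nonneg {x : ℝ} (hx : 0 ≤ x) : 0 ≤ x * Real.tanh x := by
  rw [Real.tanh_eq_sinh_div_cosh]
  exact mul_nonneg hx (div_nonneg (Real.sinh_nonneg_iff.2 hx) (Real.cosh_pos x).le)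

lemma mul_tanh_le {x : ℝ} (hx : 0 ≤ x) : x * Real.tanh x ≤ x :=
  mul_le_of_le_one_right hx (Real.tanh_lt_one x).le

lemma sub_mul_tanh_le {x : ℝ} (hx : 0 ≤ x) :
    x - x * Real.tanh x ≤ 2 * x * Real.exp (-2 * x) := by
  have h : 1 - Real.tanh x ≤ 2 * Real.exp (-2 * x) := by
    have hE : Real.exp (-2 * x) = Real.exp (-x) * Real.exp (-x) := by
      rw [← Real.exp_add]; ring_nf
    have h1 : Real.exp x * Real.exp (-x) = 1 := by
      rw [← Real.exp_add]; simp
    rw [Real.tanh_eq, hE, one_sub_div (by positivity), div_le_iff₀ (by positivity)]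
    have h2 := Real.exp_pos (-x)
    have h3 : 0 ≤ Real.exp (-x) ^ 3 := by positivity
    linear_combination 2 * h3 - 2 * Real.exp (-x) * h1
  nlinarith [mul_le_mul_of_nonneg_left h hx]

lemma exp_sub_exp_le {t x : ℝ} (ht : 0 ≤ t) (hx : 0 ≤ x) :
    Real.exp (t * x) - Real.exp (t * (x * Real.tanh x))
      ≤ 2 * t * (x * Real.exp (-(2 - t) * x)) := by
  set y := x * Real.tanh x with hy
  have h1 : Real.exp (t * y) = Real.exp (t * x) * Real.exp (t * y - t * x) := by
    rw [← Real.exp_add]; ring_nf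
  have h2 := Real.add_one_le_exp (t * y - t * x)
  have h3 : Real.exp (-(2 - t) * x) = Real.exp (t * x) * Real.exp (-2 * x) := by
    rw [← Real.exp_add]; ring_nf
  have h4 := sub_mul_tanh_le hx
  rw [← hy] at h4
  calc Real.exp (t * x) - Real.exp (t * y)
      = Real.exp (t * x) * (1 - Real.exp (t * y - t * x)) := by rw [h1]; ring
    _ ≤ Real.exp (t * x) * (t * (2 * x * Real.exp (-2 * x))) := by
        gcongr
        nlinarith [mul_le_mul_of_nonneg_left h4 ht]
    _ = _ := by rw [h3]; ring

lemma summable_exp_abs_int {c : ℝ} (hc : 0 < c) :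
    Summable fun k : ℤ => Real.exp (-c * |(k : ℝ)|) := by
  have h : Summable fun n : ℕ => Real.exp (-c * n) := by
    have := Real.summable_exp_nat_mul_iff.2 (neg_lt_zero.2 hc)
    exact this.congr fun n => by ring_nf
  exact Summable.of_nat_of_neg (by simpa using h) (by simpa using h)

lemma summable_abs_mul_exp {c : ℝ} (hc : 0 < c) (ν : ℝ) :
    Summable fun k : ℤ => |(k : ℝ) - ν| * Real.exp (-c * |(k : ℝ) - ν|) := by
  have h := (summable_exp_abs_int (half_pos hc)).mul_left (2 / c * Real.exp (c / 2 * |ν|))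
  refine Summable.of_nonneg_of_le (fun k => by positivity) (fun k => ?_) h
  set x := |(k : ℝ) - ν| with hx
  -- Half of the decay rate absorbs the linear factor.
  have h1 : x ≤ 2 / c * Real.exp (c / 2 * x) := by
    have := Real.add_one_le_exp (c / 2 * x)
    rw [div_mul_eq_mul_div, le_div_iff₀ hc]
    linarith
  have h2 : |(k : ℝ)| ≤ x + |ν| := by
    simpa using abs_add_le ((k : ℝ) - ν) ν
  calc x * Real.exp (-c * x) ≤ 2 / c * Real.exp (c / 2 * x) * Real.exp (-c * x) := by gcongr
    _ = 2 / c * Real.exp (-(c / 2) * x) := by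
        rw [mul_assoc, ← Real.exp_add]; ring_nf
    _ ≤ 2 / c * Real.exp (c / 2 * |ν| + -(c / 2) * |(k : ℝ)|) := by
        gcongr
        nlinarith
    _ = _ := by rw [Real.exp_add]; ring

lemma hasSum_exp_series (s : ℝ) :
    HasSum (fun p : ℕ => s ^ p / (Nat.factorial p)) (Real.exp s) := by
  rw [Real.exp_eq_exp_ℝ]
  exact NormedSpace.expSeries_div_hasSum_exp s

lemma hasSum_heatTerm (t x : ℝ) :
    HasSum (heatTerm t x) (Real.exp (-t * (x * Real.tanh x)) - Real.exp (-t * x)) := by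
  refine ((hasSum_exp_series _).sub (hasSum_exp_series _)).congr_fun ?_
  intro p
  simp only [heatTerm, mul_pow, neg_pow t]
  ring

lemma hasSum_abs_heatTerm {t x : ℝ} (ht : 0 ≤ t) (hx : 0 ≤ x) :
    HasSum (fun p => |heatTerm t x p|)
      (Real.exp (t * x) - Real.exp (t * (x * Real.tanh x))) := by
  refine ((hasSum_exp_series _).sub (hasSum_exp_series _)).congr_fun ?_
  intro p
  have h : (x * Real.tanh x) ^ p ≤ x ^ p :=
    pow_le_pow_left₀ (mul_tanh_nonneg hx) (mul_tanh_le hx) p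
  rw [heatTerm, abs_mul, abs_mul, abs_div, abs_pow, abs_neg, abs_one, one_pow, Nat.abs_cast (Nat.factorial p),
    abs_of_nonpos (sub_nonpos.2 h), abs_of_nonneg (pow_nonneg ht p), mul_pow t x,
    mul_pow t (x * Real.tanh x)]
  ring

/-- Absolute summability of the double family, the hypothesis of Fubini. -/
lemma summable_heatTerm {t : ℝ} (ht : 0 < t) (ht2 : t < 2) (ν : ℝ) :
    Summable fun q : ℤ × ℕ => heatTerm t |(q.1 : ℝ) - ν| q.2 := by
  rw [← summable_abs_iff, summable_prod_of_nonneg (fun _ => abs_nonneg _)]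
  refine ⟨fun k => (hasSum_abs_heatTerm ht.le (abs_nonneg ((k : ℝ) - ν))).summable, ?_⟩
  refine Summable.of_nonneg_of_le (fun k => tsum_nonneg fun _ => abs_nonneg _) (fun k => ?_)
    ((summable_abs_mul_exp (sub_pos.2 ht2) ν).mul_left (2 * t))
  rw [(hasSum_abs_heatTerm ht.le (abs_nonneg ((k : ℝ) - ν))).tsum_eq]
  exact exp_sub_exp_le ht.le (abs_nonneg _)

/-- For `ν ∈ (0,1)` and `t ∈ (0,2)`, the relative heat trace over the eigenvalues
`λ_k⁻(ν) = |k-ν| tanh |k-ν|` of the magnetic D-to-N map on the cylinder expands as a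
convergent power series in `t`:
`∑_{k ∈ ℤ} (e^{-t|k-ν| tanh |k-ν|} - e^{-t|k-ν|}) = ∑_{p ≥ 1} a_p⁻ t^p`, with
`a_p⁻ = ((-1)^p/p!) ∑_{k ∈ ℤ} ((|k-ν| tanh |k-ν|)^p - |k-ν|^p)`, and all the series
involved converge absolutely. -/
theorem stmt_11 (ν t : ℝ) (hν : ν ∈ Set.Ioo (0:ℝ) 1) (ht : t ∈ Set.Ioo (0:ℝ) 2)
    (a : ℕ → ℝ)
    (ha : ∀ p : ℕ, a p = ((-1)^p / (Nat.factorial p))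
        * ∑' k : ℤ, ((|(k:ℝ) - ν| * Real.tanh |(k:ℝ) - ν|)^p - |(k:ℝ) - ν|^p)) :
    (Summable fun k : ℤ =>
      |Real.exp (-t * (|(k:ℝ) - ν| * Real.tanh |(k:ℝ) - ν|))
        - Real.exp (-t * |(k:ℝ) - ν|)|) ∧
    (∀ p : ℕ, 1 ≤ p → Summable fun k : ℤ =>
      |(|(k:ℝ) - ν| * Real.tanh |(k:ℝ) - ν|)^p - |(k:ℝ) - ν|^p|) ∧
    (Summable fun p : ℕ => |a (p+1) * t^(p+1)|) ∧
    ∑' k : ℤ,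
        (Real.exp (-t * (|(k:ℝ) - ν| * Real.tanh |(k:ℝ) - ν|))
          - Real.exp (-t * |(k:ℝ) - ν|))
      = ∑' p : ℕ, a (p+1) * t^(p+1) := by
  obtain ⟨ht0, ht2⟩ := ht
  have hF := summable_heatTerm ht0 ht2 ν
  have hk : ∀ k : ℤ, ∑' p, heatTerm t |(k : ℝ) - ν| p
      = Real.exp (-t * (|(k:ℝ) - ν| * Real.tanh |(k:ℝ) - ν|)) - Real.exp (-t * |(k:ℝ) - ν|) :=
    fun k => (hasSum_heatTerm t _).tsum_eq
  have hp : ∀ p, ∑' k : ℤ, heatTerm t |(k : ℝ) - ν| p = a p * t ^ p := by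
    intro p
    simp only [heatTerm]
    rw [tsum_mul_right, tsum_mul_left, ha]
  have hs := hF.prod_symm.prod
  have hA : Summable fun p => a p * t ^ p := hs.congr fun p => hp p
  refine ⟨?_, ?_, ?_, ?_⟩
  · exact (hF.prod.congr fun k => hk k).abs
  · intro p _
    have h : Summable fun k : ℤ => heatTerm t |(k : ℝ) - ν| p := hF.prod_symm.prod_factor p
    simp only [heatTerm] at h
    -- Positivity of `t` makes the prefactor invertible.
    rw [summable_mul_right_iff (pow_ne_zero p ht0.ne'), summable_mul_left_iff (by positivity)] at h
    exact h.abs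
  · exact ((summable_nat_add_iff 1).2 hA).abs
  · have h0 : a 0 * t ^ 0 = 0 := by simp [ha]
    have hcomm := Summable.tsum_comm (f := fun (k : ℤ) (p : ℕ) => heatTerm t |(k : ℝ) - ν| p) hF
    simp only [hk, hp] at hcomm
    rw [← hcomm, hA.tsum_eq_zero_add, h0, zero_add]
end

section
/- Let ν ∈ (0, 1). Then, as t → 0⁺, ∑_{k ∈ ℤ} (exp(−t·(k − ν)·coth(k − ν)) + exp(−t·(k − ν)·tanh(k − ν))) = 4/t + 2·(1/6 − ν + ν² − ǎ₁(ν))·t + O(t²), where ǎ₁(ν) = ∑_{k ∈ ℤ} |k − ν|·(coth(2|k − ν|) − 1). -/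
/-!
Put `x = |k - ν|`. Both eigenvalues `x coth x` and `x tanh x` are exponentially close to `x`, and
`coth x + tanh x = 2 coth (2x)`. Since `s ↦ e^{-s} + s` has derivative of size at most `s` on
`[0, ∞)`, replacing both eigenvalues by `x` changes the pair of exponentials by
`-2 t x (coth (2x) - 1)` up to an error `t² C e^{-x}` (`pair_bound`), with `C` uniform for
`x ≥ min ν (1 - ν)`. Summing over `k` reduces the trace to `2 ∑ e^{-t|k-ν|}`. This is two
geometric series, `2 (e^{tν} + e^{t(1-ν)}) / (e^t - 1)` (`hasSum_exp_abs`), whose expansion up to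
`O(t²)` follows from Taylor's formula for `exp` (`model_bound`).
-/

open Real Filter Asymptotics Topology

/-- The real hyperbolic cotangent. -/
noncomputable def Real.coth (x : ℝ) : ℝ := Real.cosh x / Real.sinh x

lemma abs_exp_neg_sub_le {a b : ℝ} (ha : 0 ≤ a) (hb : 0 ≤ b) :
    |exp (-b) - exp (-a) + (b - a)| ≤ |b - a| * (a + b) := by
  have key : ∀ a b : ℝ, 0 ≤ a → a ≤ b →
      |exp (-b) - exp (-a) + (b - a)| ≤ |b - a| * (a + b) := by
    intro a b ha hab
    have h1 : exp (-b) = exp (-a) * exp (-(b - a)) := by rw [← exp_add]; congr 1; ring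
    have h2 : exp (-a) = exp (-b) * exp (b - a) := by rw [← exp_add]; congr 1; ring
    have h3 := add_one_le_exp (-(b - a))
    have h4 := add_one_le_exp (b - a)
    have h5 := add_one_le_exp (-b)
    have h6 : exp (-a) ≤ 1 := exp_le_one_iff.2 (by linarith)
    have hd : 0 ≤ b - a := by linarith
    have h7 : exp (-a) * (-(b - a) + 1) ≤ exp (-b) := by
      rw [h1]; exact mul_le_mul_of_nonneg_left h3 (exp_pos _).le
    have h8 : exp (-b) * ((b - a) + 1) ≤ exp (-a) := by
      rw [h2]; exact mul_le_mul_of_nonneg_left h4 (exp_pos _).le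
    rw [abs_of_nonneg hd, abs_le]
    constructor
    · nlinarith [mul_nonneg hd ha, mul_nonneg hd (ha.trans hab)]
    · nlinarith [mul_nonneg hd ha]
  rcases le_total a b with h | h
  · exact key a b ha h
  · have := key b a hb h
    rw [abs_sub_comm a b, add_comm b a] at this
    rwa [← abs_neg, show -(exp (-b) - exp (-a) + (b - a)) = exp (-a) - exp (-b) + (a - b) by ring]

lemma coth_sub_one_eq {x : ℝ} (hx : 0 < x) :
    Real.coth x - 1 = 2 * exp (-2 * x) / (1 - exp (-2 * x)) := by
  have hs : sinh x ≠ 0 := (sinh_pos_iff.2 hx).ne'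
  have h1 : 1 - exp (-2 * x) ≠ 0 := by
    have : exp (-2 * x) < 1 := exp_lt_one_iff.2 (by linarith)
    linarith
  have h2 : exp (-2 * x) = exp (-x) * exp (-x) := by rw [← exp_add]; congr 1; ring
  have h3 : exp x * exp (-x) = 1 := by rw [← exp_add]; simp
  rw [Real.coth, div_sub_one hs, div_eq_div_iff hs h1, h2, cosh_eq, sinh_eq]
  linear_combination (-exp (-x)) * h3

lemma one_sub_tanh_eq (x : ℝ) :
    1 - Real.tanh x = 2 * exp (-2 * x) / (1 + exp (-2 * x)) := by
  have hs : cosh x ≠ 0 := (cosh_pos x).ne'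
  have h1 : 1 + exp (-2 * x) ≠ 0 := by positivity
  have h2 : exp (-2 * x) = exp (-x) * exp (-x) := by rw [← exp_add]; congr 1; ring
  have h3 : exp x * exp (-x) = 1 := by rw [← exp_add]; simp
  rw [tanh_eq_sinh_div_cosh, one_sub_div hs, div_eq_div_iff hs h1, h2, cosh_eq, sinh_eq]
  linear_combination (-exp (-x)) * h3

lemma coth_add_tanh {x : ℝ} (hx : 0 < x) :
    Real.coth x + Real.tanh x = 2 * Real.coth (2 * x) := by
  have hs : sinh x ≠ 0 := (sinh_pos_iff.2 hx).ne'
  have hc : cosh x ≠ 0 := (cosh_pos x).ne'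
  rw [Real.coth, Real.coth, tanh_eq_sinh_div_cosh, sinh_two_mul, cosh_two_mul]
  field_simp

lemma coth_sub_one_nonneg {x : ℝ} (hx : 0 < x) : 0 ≤ Real.coth x - 1 := by
  rw [coth_sub_one_eq hx]
  have : exp (-2 * x) < 1 := exp_lt_one_iff.2 (by linarith)
  have : 0 < 1 - exp (-2 * x) := by linarith
  positivity

lemma coth_sub_one_le {δ x : ℝ} (hδ : 0 < δ) (hx : δ ≤ x) :
    Real.coth x - 1 ≤ 2 / (1 - exp (-2 * δ)) * exp (-2 * x) := by
  rw [coth_sub_one_eq (hδ.trans_le hx), mul_div_right_comm]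
  have h0 : exp (-2 * δ) < 1 := exp_lt_one_iff.2 (by linarith)
  have h1 : exp (-2 * x) ≤ exp (-2 * δ) := exp_le_exp.2 (by linarith)
  have h2 : 0 < 1 - exp (-2 * δ) := by linarith
  gcongr

lemma sq_mul_exp_le {x : ℝ} (hx : 0 ≤ x) : x ^ 2 * exp (-2 * x) ≤ 2 * exp (-x) := by
  have h1 := quadratic_le_exp_of_nonneg hx
  have h2 : exp (-2 * x) = exp (-x) * exp (-x) := by rw [← exp_add]; congr 1; ring
  have h3 : exp x * exp (-x) = 1 := by rw [← exp_add]; simp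
  have h4 : x ^ 2 * exp (-x) ≤ 2 := by
    have : x ^ 2 * exp (-x) ≤ (2 * exp x) * exp (-x) := by gcongr; linarith
    linarith
  rw [h2, ← mul_assoc]
  gcongr

/-- Summand of `ǎ₁(ν)`: exponential decay, uniform away from `0`. -/
lemma term_bound {δ x : ℝ} (hδ : 0 < δ) (hx : δ ≤ x) :
    |x * (Real.coth (2 * x) - 1)| ≤ 2 / (1 - exp (-2 * δ)) * exp (-x) := by
  have hx0 : 0 < x := hδ.trans_le hx
  have h0 : exp (-2 * δ) < 1 := exp_lt_one_iff.2 (by linarith)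
  have h2 : 0 < 1 - exp (-2 * δ) := by linarith
  rw [abs_of_nonneg (mul_nonneg hx0.le (coth_sub_one_nonneg (by linarith)))]
  have h3 := coth_sub_one_le (x := 2 * x) hδ (by linarith)
  have h4 : x * exp (-2 * (2 * x)) ≤ exp (-x) := by
    have : exp (-2 * (2 * x)) = exp (-x) * exp (-3 * x) := by rw [← exp_add]; congr 1; ring
    have h5 : exp (-3 * x) ≤ exp (-x) := exp_le_exp.2 (by linarith)
    have h6 : exp x * exp (-x) = 1 := by rw [← exp_add]; simp
    have h7 : x * exp (-3 * x) ≤ 1 := by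
      calc x * exp (-3 * x) ≤ exp x * exp (-x) := by
            gcongr
            linarith [add_one_le_exp x]
        _ = 1 := h6
    rw [this]
    nlinarith [exp_pos (-x)]
  calc x * (Real.coth (2 * x) - 1)
      ≤ x * (2 / (1 - exp (-2 * δ)) * exp (-2 * (2 * x))) := by gcongr
    _ = 2 / (1 - exp (-2 * δ)) * (x * exp (-2 * (2 * x))) := by ring
    _ ≤ _ := by gcongr

/-- Replacing the eigenvalues `x coth x`, `x tanh x` by `x`, with the first-order correction, costs
`O(t² e^{-x})` uniformly for `x ≥ δ`. -/
lemma pair_bound {δ : ℝ} (hδ : 0 < δ) : ∃ C : ℝ, 0 ≤ C ∧ ∀ x t : ℝ, δ ≤ x → 0 ≤ t →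
    |exp (-t * (x * Real.coth x)) + exp (-t * (x * Real.tanh x)) - 2 * exp (-t * x)
      + 2 * t * (x * (Real.coth (2 * x) - 1))| ≤ t ^ 2 * (C * exp (-x)) := by
  have h0 : exp (-2 * δ) < 1 := exp_lt_one_iff.2 (by linarith)
  have h2 : 0 < 1 - exp (-2 * δ) := by linarith
  obtain ⟨K, hK⟩ : ∃ K, K = 2 / (1 - exp (-2 * δ)) := ⟨_, rfl⟩
  have hK0 : 0 ≤ K := by rw [hK]; positivity
  refine ⟨K * (2 + K) * 2 + 8, by positivity, fun x t hx ht => ?_⟩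
  have hx0 : 0 < x := hδ.trans_le hx
  have hc0 := coth_sub_one_nonneg hx0
  have hc1 := coth_sub_one_le hδ hx
  rw [← hK] at hc1
  have he : exp (-2 * x) ≤ 1 := exp_le_one_iff.2 (by linarith)
  have he0 := exp_pos (-2 * x)
  have hcK : Real.coth x - 1 ≤ K := by nlinarith
  have ht1 : 0 ≤ 1 - Real.tanh x := by rw [one_sub_tanh_eq]; positivity
  have ht2 : 1 - Real.tanh x ≤ 2 * exp (-2 * x) := by
    rw [one_sub_tanh_eq]
    exact div_le_self (by positivity) (by linarith)
  have ht3 : 0 ≤ Real.tanh x := by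
    rw [tanh_eq_sinh_div_cosh]
    exact div_nonneg (sinh_pos_iff.2 hx0).le (cosh_pos x).le
  have hsq := sq_mul_exp_le hx0.le
  have hA := abs_exp_neg_sub_le (a := t * x) (b := t * (x * Real.coth x)) (by positivity)
    (mul_nonneg ht (mul_nonneg hx0.le (by linarith)))
  have hB := abs_exp_neg_sub_le (a := t * x) (b := t * (x * Real.tanh x)) (by positivity)
    (by positivity)
  have hA' : |t * (x * Real.coth x) - t * x| * (t * x + t * (x * Real.coth x))
      ≤ t ^ 2 * (K * (2 + K) * 2 * exp (-x)) := by
    have e : t * (x * Real.coth x) - t * x = t * x * (Real.coth x - 1) := by ring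
    rw [e, abs_of_nonneg (mul_nonneg (mul_nonneg ht hx0.le) hc0)]
    calc t * x * (Real.coth x - 1) * (t * x + t * (x * Real.coth x))
        = t ^ 2 * x ^ 2 * ((Real.coth x - 1) * (2 + (Real.coth x - 1))) := by ring
      _ ≤ t ^ 2 * x ^ 2 * ((K * exp (-2 * x)) * (2 + K)) := by gcongr
      _ = t ^ 2 * (K * (2 + K)) * (x ^ 2 * exp (-2 * x)) := by ring
      _ ≤ t ^ 2 * (K * (2 + K)) * (2 * exp (-x)) := by gcongr
      _ = _ := by ring
  have hB' : |t * (x * Real.tanh x) - t * x| * (t * x + t * (x * Real.tanh x))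
      ≤ t ^ 2 * (8 * exp (-x)) := by
    have e : t * x - t * (x * Real.tanh x) = t * x * (1 - Real.tanh x) := by ring
    rw [abs_sub_comm, e, abs_of_nonneg (mul_nonneg (mul_nonneg ht hx0.le) ht1)]
    calc t * x * (1 - Real.tanh x) * (t * x + t * (x * Real.tanh x))
        = t ^ 2 * x ^ 2 * ((1 - Real.tanh x) * (1 + Real.tanh x)) := by ring
      _ ≤ t ^ 2 * x ^ 2 * ((2 * exp (-2 * x)) * 2) := by gcongr; linarith
      _ = t ^ 2 * 4 * (x ^ 2 * exp (-2 * x)) := by ring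
      _ ≤ t ^ 2 * 4 * (2 * exp (-x)) := by gcongr
      _ = _ := by ring
  have hsum := coth_add_tanh hx0
  have split : exp (-t * (x * Real.coth x)) + exp (-t * (x * Real.tanh x)) - 2 * exp (-t * x)
      + 2 * t * (x * (Real.coth (2 * x) - 1))
      = (exp (-(t * (x * Real.coth x))) - exp (-(t * x)) + (t * (x * Real.coth x) - t * x))
      + (exp (-(t * (x * Real.tanh x))) - exp (-(t * x)) + (t * (x * Real.tanh x) - t * x)) := by
    simp only [neg_mul]
    linear_combination (-t * x) * hsum
  rw [split]
  refine (abs_add_le _ _).trans ?_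
  calc _ ≤ t ^ 2 * (K * (2 + K) * 2 * exp (-x)) + t ^ 2 * (8 * exp (-x)) :=
        add_le_add (hA.trans hA') (hB.trans hB')
    _ = _ := by ring

lemma hasSum_exp_abs {ν t : ℝ} (hν : ν ∈ Set.Ioo (0:ℝ) 1) (ht : 0 < t) :
    HasSum (fun k : ℤ => exp (-t * |(k:ℝ) - ν|))
      ((exp (t * ν) + exp (t * (1 - ν))) / (exp t - 1)) := by
  obtain ⟨h0, h1⟩ := hν
  have hq1 : exp (-t) < 1 := exp_lt_one_iff.2 (by linarith)
  have hg := hasSum_geometric_of_lt_one (exp_pos (-t)).le hq1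
  have hpos : HasSum (fun n : ℕ => exp (-t * |((-(n:ℤ) : ℤ):ℝ) - ν|))
      (exp (-t * ν) * (1 - exp (-t))⁻¹) := by
    refine (hg.mul_left (exp (-t * ν))).congr_fun (fun n => ?_)
    have : |((-(n:ℤ) : ℤ):ℝ) - ν| = n + ν := by
      push_cast
      rw [abs_of_nonpos (by have := n.cast_nonneg (α := ℝ); linarith)]; ring
    rw [this, ← exp_nat_mul, ← exp_add]; congr 1; ring
  have hneg : HasSum (fun n : ℕ => exp (-t * |((-(-((n:ℤ) + 1)) : ℤ):ℝ) - ν|))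
      (exp (-t * (1 - ν)) * (1 - exp (-t))⁻¹) := by
    refine (hg.mul_left (exp (-t * (1 - ν)))).congr_fun (fun n => ?_)
    have : |((-(-((n:ℤ) + 1)) : ℤ):ℝ) - ν| = n + (1 - ν) := by
      push_cast
      rw [abs_of_nonneg (by have := n.cast_nonneg (α := ℝ); linarith)]; ring
    rw [this, ← exp_nat_mul, ← exp_add]; congr 1; ring
  -- Reflecting `k ↦ -k` makes the two half-lines `k ≤ 0` and `k ≥ 1` match the standard split of ℤ.
  have h := HasSum.of_nat_of_neg_add_one (f := fun k : ℤ => exp (-t * |((-k : ℤ):ℝ) - ν|)) hpos hneg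
  have h' := (Equiv.neg ℤ).hasSum_iff (f := fun k : ℤ => exp (-t * |(k:ℝ) - ν|))
    (a := exp (-t * ν) * (1 - exp (-t))⁻¹ + exp (-t * (1 - ν)) * (1 - exp (-t))⁻¹)
  have h2 := h'.1 h
  convert h2 using 1
  have e1 : 1 - exp (-t) ≠ 0 := by linarith
  have e2 : exp t - 1 ≠ 0 := by have := one_lt_exp_iff.2 ht; linarith
  have e3 : exp (-t * ν) * exp t = exp (t * (1 - ν)) := by rw [← exp_add]; congr 1; ring
  have e4 : exp (-t * (1 - ν)) * exp t = exp (t * ν) := by rw [← exp_add]; congr 1; ring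
  have e5 : exp (-t) * exp t = 1 := by rw [← exp_add]; simp
  rw [← add_mul, ← div_eq_mul_inv, div_eq_div_iff e2 e1, ← e3, ← e4]
  linear_combination (-exp (-t * ν) - exp (-t * (1 - ν))) * e5

lemma model_bound {ν t : ℝ} (hν : ν ∈ Set.Ioo (0:ℝ) 1) (ht : 0 < t) (ht1 : t ≤ 1) :
    |(exp (t * ν) + exp (t * (1 - ν))) / (exp t - 1) - 2 / t - (1/6 - ν + ν^2) * t|
      ≤ 6 * t ^ 2 := by
  obtain ⟨h0, h1⟩ := hν
  have taylor3 : ∀ s : ℝ, 0 ≤ s → s ≤ 1 →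
      |exp (t * s) - (1 + t * s + (t * s) ^ 2 / 2)| ≤ t ^ 3 := by
    intro s hs0 hs1
    have hts : 0 ≤ t * s := by positivity
    have hts' : t * s ≤ t := by nlinarith
    have := Real.exp_bound (x := t * s) (by rw [abs_of_nonneg hts]; linarith) (n := 3) (by norm_num)
    rw [abs_of_nonneg hts] at this
    norm_num [Finset.sum_range_succ, Nat.factorial] at this
    refine this.trans ?_
    have : (t * s) ^ 3 ≤ t ^ 3 := by gcongr
    have : 0 ≤ (t * s) ^ 3 := by positivity
    linarith
  have r1 := taylor3 ν h0.le h1.le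
  have r2 := taylor3 (1 - ν) (by linarith) (by linarith)
  have r3 : |exp t - (1 + t + t ^ 2 / 2 + t ^ 3 / 6)| ≤ t ^ 4 := by
    have := Real.exp_bound (x := t) (by rw [abs_of_nonneg ht.le]; linarith) (n := 4) (by norm_num)
    rw [abs_of_nonneg ht.le] at this
    norm_num [Finset.sum_range_succ, Nat.factorial] at this
    refine this.trans ?_
    have : 0 ≤ t ^ 4 := by positivity
    linarith
  obtain ⟨a, ha⟩ : ∃ a, a = exp (t * ν) - (1 + t * ν + (t * ν) ^ 2 / 2) := ⟨_, rfl⟩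
  obtain ⟨b, hb⟩ : ∃ b, b = exp (t * (1 - ν)) -
    (1 + t * (1 - ν) + (t * (1 - ν)) ^ 2 / 2) := ⟨_, rfl⟩
  obtain ⟨c, hc⟩ : ∃ c, c = exp t - (1 + t + t ^ 2 / 2 + t ^ 3 / 6) := ⟨_, rfl⟩
  obtain ⟨β, hβ⟩ : ∃ β, β = 1/6 - ν + ν^2 := ⟨_, rfl⟩
  rw [← ha] at r1
  rw [← hb] at r2
  rw [← hc] at r3
  have hβ1 : |β| ≤ 1 := by rw [hβ, abs_le]; constructor <;> nlinarith
  have hE : t ≤ exp t - 1 := by linarith [add_one_le_exp t]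
  have hE0 : 0 < exp t - 1 := by linarith
  rw [← hβ]
  -- The coefficients of `t`, `t²`, `t³` in the numerator all cancel.
  have hnum : (exp (t * ν) + exp (t * (1 - ν))) / (exp t - 1) - 2 / t - β * t
      = (t * a + t * b - 2 * c - β * t ^ 2 * (t ^ 2 / 2 + t ^ 3 / 6 + c)) / (t * (exp t - 1)) := by
    field_simp
    rw [ha, hb, hc, hβ]
    ring
  rw [hnum, abs_div, abs_of_pos (mul_pos ht hE0), div_le_iff₀ (mul_pos ht hE0)]
  have hq : |t ^ 2 / 2 + t ^ 3 / 6 + c| ≤ 2 * t ^ 2 := by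
    have h3 : t ^ 3 ≤ t ^ 2 := pow_le_pow_of_le_one ht.le ht1 (by norm_num)
    have h4 : t ^ 4 ≤ t ^ 2 := pow_le_pow_of_le_one ht.le ht1 (by norm_num)
    have h5 : 0 ≤ t ^ 3 := by positivity
    rw [abs_le] at r3 ⊢
    constructor <;> nlinarith
  have hβq : |β * t ^ 2 * (t ^ 2 / 2 + t ^ 3 / 6 + c)| ≤ 2 * t ^ 4 := by
    rw [abs_mul, abs_mul, abs_of_nonneg (sq_nonneg t)]
    calc |β| * t ^ 2 * |t ^ 2 / 2 + t ^ 3 / 6 + c| ≤ 1 * t ^ 2 * (2 * t ^ 2) := by gcongr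
      _ = 2 * t ^ 4 := by ring
  have hta : |t * a| ≤ t ^ 4 := by
    rw [abs_mul, abs_of_pos ht]
    calc t * |a| ≤ t * t ^ 3 := by gcongr
      _ = t ^ 4 := by ring
  have htb : |t * b| ≤ t ^ 4 := by
    rw [abs_mul, abs_of_pos ht]
    calc t * |b| ≤ t * t ^ 3 := by gcongr
      _ = t ^ 4 := by ring
  have hfin : 6 * t ^ 4 ≤ 6 * t ^ 2 * (t * (exp t - 1)) := by
    calc 6 * t ^ 4 = 6 * t ^ 2 * (t * t) := by ring
      _ ≤ _ := by gcongr
  refine le_trans ?_ hfin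
  rw [abs_le] at *
  constructor <;> linarith

lemma mul_coth_abs (y : ℝ) : y * Real.coth y = |y| * Real.coth |y| := by
  rcases abs_choice y with h | h <;> rw [h]
  simp [Real.coth, cosh_neg, sinh_neg, div_neg]

lemma mul_tanh_abs (y : ℝ) : y * Real.tanh y = |y| * Real.tanh |y| := by
  rcases abs_choice y with h | h <;> rw [h]
  simp

lemma min_le_abs_sub {ν : ℝ} (k : ℤ) : min ν (1 - ν) ≤ |(k:ℝ) - ν| := by
  rcases le_or_gt k 0 with h | h
  · have : (k:ℝ) ≤ 0 := by exact_mod_cast h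
    exact (min_le_left _ _).trans (le_trans (by linarith) (neg_le_abs _))
  · have : (1:ℝ) ≤ k := by exact_mod_cast h
    exact (min_le_right _ _).trans (le_trans (by linarith) (le_abs_self _))

/-- Heat trace expansion of the magnetic D-to-N map on the cylinder `(-1,1) × S¹`
with Aharonov–Bohm flux `ν ∈ (0,1)`: the series defining
`ǎ₁(ν) = ∑_{k ∈ ℤ} |k-ν| (coth (2|k-ν|) - 1)` converges, and as `t → 0⁺`,
`∑_{k ∈ ℤ} (e^{-t(k-ν) coth (k-ν)} + e^{-t(k-ν) tanh (k-ν)})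
  = 4/t + 2 (1/6 - ν + ν² - ǎ₁(ν)) t + O(t²)`. -/
theorem stmt_12 (ν : ℝ) (hν : ν ∈ Set.Ioo (0:ℝ) 1) :
    (Summable fun k : ℤ => |(k:ℝ) - ν| * (Real.coth (2 * |(k:ℝ) - ν|) - 1)) ∧
    (fun t : ℝ =>
        (∑' k : ℤ,
          (Real.exp (-t * (((k:ℝ) - ν) * Real.coth ((k:ℝ) - ν)))
            + Real.exp (-t * (((k:ℝ) - ν) * Real.tanh ((k:ℝ) - ν)))))
          - 4/t
          - 2 * (1/6 - ν + ν^2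
              - ∑' k : ℤ, |(k:ℝ) - ν| * (Real.coth (2 * |(k:ℝ) - ν|) - 1)) * t)
      =O[𝓝[>] (0:ℝ)] fun t : ℝ => t^2 := by
  have hδ : 0 < min ν (1 - ν) := lt_min hν.1 (by linarith [hν.2])
  have hE : Summable fun k : ℤ => exp (-|(k:ℝ) - ν|) := by
    simpa using (hasSum_exp_abs hν one_pos).summable
  have hS : Summable fun k : ℤ => |(k:ℝ) - ν| * (Real.coth (2 * |(k:ℝ) - ν|) - 1) :=
    Summable.of_norm_bounded (hE.mul_left _) fun k => term_bound hδ (min_le_abs_sub k)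
  refine ⟨hS, ?_⟩
  obtain ⟨C, -, hC⟩ := pair_bound hδ
  refine IsBigO.of_bound (C * (∑' k : ℤ, exp (-|(k:ℝ) - ν|)) + 12) ?_
  filter_upwards [Ioc_mem_nhdsGT (zero_lt_one' ℝ)] with t ht
  obtain ⟨ht0, ht1⟩ := ht
  simp only [mul_coth_abs ((_ : ℝ) - ν), mul_tanh_abs ((_ : ℝ) - ν)]
  have hM := hasSum_exp_abs hν ht0
  have hmodel := model_bound hν ht0 ht1
  obtain ⟨A, hA⟩ : ∃ A, A = ∑' k : ℤ, |(k:ℝ) - ν| * (Real.coth (2 * |(k:ℝ) - ν|) - 1) := ⟨_, rfl⟩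
  have hSA : HasSum (fun k : ℤ => |(k:ℝ) - ν| * (Real.coth (2 * |(k:ℝ) - ν|) - 1)) A :=
    hA ▸ hS.hasSum
  rw [← hA]
  -- The remainder after removing the model trace and the first-order correction.
  obtain ⟨R, hR⟩ : ∃ R : ℤ → ℝ, R = fun k : ℤ =>
      exp (-t * (|(k:ℝ) - ν| * Real.coth |(k:ℝ) - ν|))
      + exp (-t * (|(k:ℝ) - ν| * Real.tanh |(k:ℝ) - ν|)) - 2 * exp (-t * |(k:ℝ) - ν|)
      + 2 * t * (|(k:ℝ) - ν| * (Real.coth (2 * |(k:ℝ) - ν|) - 1)) := ⟨_, rfl⟩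
  have hRb : ∀ k : ℤ, ‖R k‖ ≤ t ^ 2 * (C * exp (-|(k:ℝ) - ν|)) := fun k => by
    rw [hR]; exact hC _ t (min_le_abs_sub k) ht0.le
  have hB := (hE.hasSum.mul_left C).mul_left (t ^ 2)
  have hRs : Summable R := Summable.of_norm_bounded hB.summable hRb
  have hRn : |∑' k, R k| ≤ t ^ 2 * (C * ∑' k : ℤ, exp (-|(k:ℝ) - ν|)) :=
    tsum_of_norm_bounded hB hRb
  have htot := ((hRs.hasSum.add (hM.mul_left 2)).sub (hSA.mul_left (2 * t))).tsum_eq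
  have hfun : (∑' k : ℤ, (exp (-t * (|(k:ℝ) - ν| * Real.coth |(k:ℝ) - ν|))
      + exp (-t * (|(k:ℝ) - ν| * Real.tanh |(k:ℝ) - ν|))))
      = ∑' k : ℤ, (R k + 2 * exp (-t * |(k:ℝ) - ν|)
        - 2 * t * (|(k:ℝ) - ν| * (Real.coth (2 * |(k:ℝ) - ν|) - 1))) := by
    refine tsum_congr fun k => ?_
    rw [hR]; ring
  rw [hfun, htot, norm_of_nonneg (sq_nonneg t), norm_eq_abs]
  have h4 : 4 / t = 2 * (2 / t) := by ring
  rw [h4]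
  rw [abs_le] at *
  constructor <;> linarith
end

section
/- Let a > 0, R = e^{−a}, and ν ∈ [0, 1). For m ∈ ℤ set λ_m^± = (|m − ν| / (2(R^{|m−ν|} − R^{−|m−ν|})))·(−(1 + 1/R)(R^{|m−ν|} + R^{−|m−ν|}) ∓ √((1 − 1/R)²·(R^{|m−ν|} + R^{−|m−ν|})² + 16/R)). Then there exists C > 0 such that for all m ∈ ℤ, |λ_m^+ − |m − ν|/R| ≤ C·(|m| + 1)·exp(−2a|m|) and |λ_m^− − |m − ν|| ≤ C·(|m| + 1)·exp(−2a|m|). -/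
open Real

/-!
Write `x = |m - ν|`, `q = R ^ x = e^{-ax}`, `b = 1/R > 1`, `S = q⁻¹ + q` and `D = q⁻¹ - q`. Then
`λ^± = x / (2D) * ((1 + b) S ± √((b - 1)² S² + 16 b))`, and the square root is `(b - 1) S + ε` with
`0 ≤ ε ≤ 8 b q / (b - 1)` (`sqrt_estimate`). As `S - D = 2q`, this gives
`λ^+ - b x = x / (2D) * (4 b q + ε)` and `λ^- - x = x / (2D) * (4 q - ε)`, so both errors are at most a
constant times `x q / D`. From `1 + 2ax ≤ e^{2ax}` one gets `x q / D ≤ (x + 1/(2a)) e^{-2ax}`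
(`weight_estimate`), a bound that stays finite as `x → 0`, so small `x` needs no separate treatment.
Finally `|m| - 1 ≤ x ≤ |m| + 1`.
-/

/-- The square root differs from its leading part `(b - 1) S` by a nonnegative `O(q)`. -/
lemma sqrt_estimate {b q S : ℝ} (hb : 1 < b) (hq : 0 < q) (hS : 1 ≤ S * q) :
    (b - 1) * S ≤ √((1 - b) ^ 2 * S ^ 2 + 16 * b) ∧
      √((1 - b) ^ 2 * S ^ 2 + 16 * b) ≤ (b - 1) * S + 8 * b / (b - 1) * q := by
  have hb1 : 0 < b - 1 := by linarith
  constructor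
  · apply Real.le_sqrt_of_sq_le
    nlinarith
  · have hSpos : 0 < S := by
      by_contra h
      nlinarith
    apply Real.sqrt_le_iff.mpr
    refine ⟨by positivity, ?_⟩
    have h1 : ((b - 1) * S + 8 * b / (b - 1) * q) ^ 2
        = (b - 1) ^ 2 * S ^ 2 + 16 * b * (S * q) + (8 * b / (b - 1) * q) ^ 2 := by
      field_simp
      ring
    rw [h1]
    nlinarith [sq_nonneg (8 * b / (b - 1) * q)]

lemma weight_estimate {a x : ℝ} (ha : 0 < a) (hx : 0 < x) :
    x / (exp (a * x) - exp (-(a * x))) * exp (-(a * x))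
      ≤ (x + 1 / (2 * a)) * exp (-2 * a * x) := by
  have hax : 0 < a * x := mul_pos ha hx
  have hD : 0 < exp (a * x) - exp (-(a * x)) :=
    sub_pos.mpr (exp_lt_exp.mpr (by linarith))
  have hpq : exp (a * x) * exp (-(a * x)) = 1 := by
    rw [← exp_add]
    simp
  have hq2 : exp (-2 * a * x) = exp (-(a * x)) ^ 2 := by
    rw [← exp_nat_mul]
    congr 1
    push_cast
    ring
  have hp2 : 2 * a * x + 1 ≤ exp (a * x) ^ 2 := by
    rw [← exp_nat_mul]
    refine (Real.add_one_le_exp _).trans (le_of_eq ?_)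
    congr 1
    push_cast
    ring
  have hq := exp_pos (-(a * x))
  rw [hq2, div_mul_eq_mul_div, div_le_iff₀ hD]
  generalize exp (a * x) = p at *
  generalize exp (-(a * x)) = q at *
  have h1 : q ^ 2 * (2 * a * x + 1) ≤ 1 := by
    calc q ^ 2 * (2 * a * x + 1) ≤ q ^ 2 * p ^ 2 := by gcongr
      _ = (p * q) ^ 2 := by ring
      _ = 1 := by rw [hpq, one_pow]
  have h2 : (x + 1 / (2 * a)) * q ^ 2 * (p - q) - x * q
      = q * (1 - q ^ 2 * (2 * a * x + 1)) / (2 * a) := by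
    have h3 : (x + 1 / (2 * a)) * q ^ 2 * (p - q)
        = (x + 1 / (2 * a)) * q * (p * q - q ^ 2) := by ring
    rw [h3, hpq]
    field_simp
    ring
  have h4 : 0 ≤ q * (1 - q ^ 2 * (2 * a * x + 1)) / (2 * a) := by
    have : 0 ≤ 1 - q ^ 2 * (2 * a * x + 1) := by linarith
    positivity
  linarith

/-- The eigenvalue estimate in terms of `x = |m - ν|` alone, with `p = R ^ (-x)`, `q = R ^ x`. At
`x = 0` both terms of each difference vanish (the quotient is the junk value `0 / 0 = 0`). -/
lemma eigenvalue_estimate {a b x p q : ℝ} (ha : 0 < a) (hb : 1 < b) (hx : 0 ≤ x)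
    (hp : p = exp (a * x)) (hq : q = exp (-(a * x))) :
    |x / (2 * (q - p)) * (-(1 + b) * (q + p) - √((1 - b) ^ 2 * (q + p) ^ 2 + 16 * b)) - x * b|
        ≤ (2 * b + 4 * b / (b - 1)) * ((x + 1 / (2 * a)) * exp (-2 * a * x)) ∧
      |x / (2 * (q - p)) * (-(1 + b) * (q + p) + √((1 - b) ^ 2 * (q + p) ^ 2 + 16 * b)) - x|
        ≤ (2 * b + 4 * b / (b - 1)) * ((x + 1 / (2 * a)) * exp (-2 * a * x)) := by
  have hb1 : 0 < b - 1 := by linarith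
  rcases hx.eq_or_lt with rfl | hx
  · have : 0 ≤ (2 * b + 4 * b / (b - 1)) * ((0 + 1 / (2 * a)) * exp (-2 * a * 0)) := by
      positivity
    simpa using this
  have hw := weight_estimate ha hx
  rw [← hp, ← hq] at hw
  have hD : 0 < p - q := by
    rw [hp, hq]
    exact sub_pos.mpr (exp_lt_exp.mpr (by linarith [mul_pos ha hx]))
  have hqpos : 0 < q := hq ▸ exp_pos _
  have hpq : p * q = 1 := by
    rw [hp, hq, ← exp_add]
    simp
  obtain ⟨hs1, hs2⟩ := sqrt_estimate (S := q + p) hb hqpos (by nlinarith)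
  generalize √((1 - b) ^ 2 * (q + p) ^ 2 + 16 * b) = s at *
  have hD' : q - p ≠ 0 := by linarith
  have hD'' : p - q ≠ 0 := hD.ne'
  have e1 : x / (2 * (q - p)) * (-(1 + b) * (q + p) - s) - x * b
      = x / (p - q) * ((4 * b * q + (s - (b - 1) * (q + p))) / 2) := by
    rw [show q - p = -(p - q) by ring]
    field_simp
    ring
  have e2 : x / (2 * (q - p)) * (-(1 + b) * (q + p) + s) - x
      = x / (p - q) * ((4 * q - (s - (b - 1) * (q + p))) / 2) := by
    rw [show q - p = -(p - q) by ring]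
    field_simp
    ring
  have hxD : 0 ≤ x / (p - q) := by positivity
  have key : ∀ t : ℝ, |t| ≤ (2 * b + 4 * b / (b - 1)) * q →
      |x / (p - q) * t| ≤ (2 * b + 4 * b / (b - 1)) * ((x + 1 / (2 * a)) * exp (-2 * a * x)) := by
    intro t ht
    rw [abs_mul, abs_of_nonneg hxD]
    calc x / (p - q) * |t| ≤ x / (p - q) * ((2 * b + 4 * b / (b - 1)) * q) := by gcongr
      _ = (2 * b + 4 * b / (b - 1)) * (x / (p - q) * q) := by ring
      _ ≤ _ := by gcongr
  have h8 : 8 * b / (b - 1) * q = 2 * (4 * b / (b - 1) * q) := by ring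
  have h4 : 0 ≤ 4 * b / (b - 1) * q := by positivity
  have hbq : q ≤ b * q := by nlinarith
  rw [e1, e2]
  constructor <;> apply key <;> rw [abs_le] <;> constructor <;> linarith

/-- Asymptotics of the Steklov eigenvalues of the Aharonov–Bohm magnetic D-to-N map
on the annulus `{R < r < 1}`, `R = e^{-a}`: the two eigenvalues `λ_m^±` of the reduced
`2×2` D-to-N matrix satisfy `|λ_m^+ - |m-ν|/R| ≤ C (|m|+1) e^{-2a|m|}` and
`|λ_m^- - |m-ν|| ≤ C (|m|+1) e^{-2a|m|}` for some `C > 0`. -/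
theorem stmt_13 (a : ℝ) (ha : 0 < a) (R : ℝ) (hR : R = Real.exp (-a))
    (ν : ℝ) (hν : ν ∈ Set.Ico (0:ℝ) 1)
    (lamP lamM : ℤ → ℝ)
    (hlamP : ∀ m : ℤ, lamP m =
      (|(m:ℝ) - ν| / (2 * (R ^ |(m:ℝ) - ν| - R ^ (-|(m:ℝ) - ν|))))
        * (-(1 + 1/R) * (R ^ |(m:ℝ) - ν| + R ^ (-|(m:ℝ) - ν|))
            - Real.sqrt ((1 - 1/R)^2 * (R ^ |(m:ℝ) - ν| + R ^ (-|(m:ℝ) - ν|))^2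
                + 16/R)))
    (hlamM : ∀ m : ℤ, lamM m =
      (|(m:ℝ) - ν| / (2 * (R ^ |(m:ℝ) - ν| - R ^ (-|(m:ℝ) - ν|))))
        * (-(1 + 1/R) * (R ^ |(m:ℝ) - ν| + R ^ (-|(m:ℝ) - ν|))
            + Real.sqrt ((1 - 1/R)^2 * (R ^ |(m:ℝ) - ν| + R ^ (-|(m:ℝ) - ν|))^2
                + 16/R))) :
    ∃ C : ℝ, 0 < C ∧ ∀ m : ℤ,
      abs (lamP m - |(m:ℝ) - ν| / R) ≤ C * (|(m:ℝ)| + 1) * Real.exp (-2 * a * |(m:ℝ)|) ∧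
      abs (lamM m - |(m:ℝ) - ν|) ≤ C * (|(m:ℝ)| + 1) * Real.exp (-2 * a * |(m:ℝ)|) := by
  have hRpos : 0 < R := hR ▸ exp_pos _
  have hR1 : R < 1 := by
    rw [hR]
    simpa using ha
  have hb : 1 < 1 / R := by
    rw [lt_div_iff₀ hRpos]
    linarith
  have hb1 : 0 < 1 / R - 1 := by linarith
  refine ⟨(2 * (1 / R) + 4 * (1 / R) / (1 / R - 1)) * (1 + 1 / (2 * a)) * exp (2 * a),
    by positivity, fun m => ?_⟩
  have hx1 : |(m : ℝ) - ν| ≤ |(m : ℝ)| + 1 := by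
    have h := abs_sub (m : ℝ) ν
    rw [abs_of_nonneg hν.1] at h
    linarith [hν.2]
  have hx2 : |(m : ℝ)| - 1 ≤ |(m : ℝ) - ν| := by
    have h := abs_sub_abs_le_abs_sub (m : ℝ) ν
    rw [abs_of_nonneg hν.1] at h
    linarith [hν.2]
  have hx0 : 0 ≤ |(m : ℝ) - ν| := abs_nonneg _
  have hm0 : 0 ≤ |(m : ℝ)| := abs_nonneg _
  rw [hlamP m, hlamM m]
  generalize |(m : ℝ) - ν| = x at *
  generalize |(m : ℝ)| = n at *
  have hq : R ^ x = exp (-(a * x)) := by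
    rw [hR, ← Real.exp_mul]
    congr 1
    ring
  have hp : R ^ (-x) = exp (a * x) := by
    rw [hR, ← Real.exp_mul]
    congr 1
    ring
  have hexp : exp (-2 * a * x) ≤ exp (2 * a) * exp (-2 * a * n) := by
    rw [← exp_add]
    apply exp_le_exp.mpr
    nlinarith
  have hlin : x + 1 / (2 * a) ≤ (1 + 1 / (2 * a)) * (n + 1) := by
    have : 0 ≤ 1 / (2 * a) * n := by positivity
    linarith
  have hfin : (2 * (1 / R) + 4 * (1 / R) / (1 / R - 1)) * ((x + 1 / (2 * a)) * exp (-2 * a * x))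
      ≤ (2 * (1 / R) + 4 * (1 / R) / (1 / R - 1)) * (1 + 1 / (2 * a)) * exp (2 * a) * (n + 1)
        * exp (-2 * a * n) := by
    calc _ ≤ (2 * (1 / R) + 4 * (1 / R) / (1 / R - 1)) *
          (((1 + 1 / (2 * a)) * (n + 1)) * (exp (2 * a) * exp (-2 * a * n))) := by gcongr
      _ = _ := by ring
  obtain ⟨h1, h2⟩ := eigenvalue_estimate ha hb hx0 hp hq
  rw [show (16 : ℝ) / R = 16 * (1 / R) by ring, show x / R = x * (1 / R) by ring]
  exact ⟨h1.trans hfin, h2.trans hfin⟩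
end

section
/- Let a > 0, R = e^{−a}, and ν ∈ (0, 1). For m ∈ ℤ let λ_m^± = (|m − ν| / (2(R^{|m−ν|} − R^{−|m−ν|})))·(−(1 + 1/R)(R^{|m−ν|} + R^{−|m−ν|}) ∓ √((1 − 1/R)²·(R^{|m−ν|} + R^{−|m−ν|})² + 16/R)). Then, as t → 0⁺, ∑_{m ∈ ℤ} (exp(−t·λ_m^+) + exp(−t·λ_m^−)) = (2 + 2R)/t + ((1 + R − 6ν − 6Rν + 6ν² + 6Rν²)/(6R) + a₁(R, ν))·t + O(t²), where a₁(R, ν) = −(1 + 1/R)·∑_{m ∈ ℤ} |m − ν|·(coth(a|m − ν|) − 1). -/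
/-!
Write `x = |m - ν|`, `L = 1 + 1/R`, `K = 1/R - 1`. Since `R = e^{-a}`, the eigenvalues are
`x (L cosh(ax) ± √(K² cosh²(ax) + L² - K²)) / (2 sinh(ax))`, which differ from the linear model values
`(L ± K)/2 · x`, i.e. `x/R` and `x`, by `O(e^{-ax})` (`branch_bound`).

For the model values the trace is a sum of two geometric series (`hasSum_flux`), namely
`(e^{-sν} + e^{-s(1-ν)})/(1 - e^{-s}) = 2/s + (1/6 - ν + ν²) s + O(s²)` (`flux_expand`), with `s = t/R`
and `s = t`. Passing from the model to the true eigenvalues changes the trace by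
`-t ∑ (λ - μ) + O(t²)` (`pert`). The two corrections add up to the coth series because
`λ⁺ + λ⁻ = L x coth(ax)`.
-/

open Real Filter Asymptotics Topology

theorem core_ineq_aux {u v : ℝ} (hv : 0 ≤ v) (huv : v ≤ u) :
    |exp (-u) - exp (-v) + (u - v)| ≤ (u + v) * |u - v| := by
  have h1 : exp (-u) = exp (-v) * exp (-(u - v)) := by rw [← exp_add]; ring_nf
  have h2 : exp (-v) = exp (-u) * exp (u - v) := by rw [← exp_add]; ring_nf
  have e1 := add_one_le_exp (-(u - v))
  have e2 := add_one_le_exp (u - v)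
  have e3 := add_one_le_exp (-u)
  have e4 : exp (-v) ≤ 1 := by rw [exp_le_one_iff]; linarith
  have p1 := exp_pos (-v)
  have p2 := exp_pos (-u)
  rw [abs_of_nonneg (sub_nonneg.2 huv), abs_of_nonneg]
  · nlinarith [mul_le_mul_of_nonneg_left e2 p2.le, mul_nonneg (sub_nonneg.2 huv) hv,
      mul_nonneg (sub_nonneg.2 huv) (sub_nonneg.2 e3)]
  · nlinarith [mul_le_mul_of_nonneg_left e1 p1.le, mul_nonneg (sub_nonneg.2 huv) (sub_nonneg.2 e4)]

/-- The derivative of `y ↦ exp (-t y) + t y` lies between `0` and `t² y` for `y ≥ 0`. -/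
theorem core_ineq {x y t : ℝ} (hx : 0 ≤ x) (hy : 0 ≤ y) (ht : 0 ≤ t) :
    |exp (-t * x) - exp (-t * y) + t * (x - y)| ≤ t ^ 2 * ((x + y) * |x - y|) := by
  have hs : t ^ 2 * ((x + y) * |x - y|) = (t * x + t * y) * |t * x - t * y| := by
    rw [← mul_sub, abs_mul, abs_of_nonneg ht]; ring
  rw [hs, neg_mul, neg_mul, mul_sub]
  rcases le_total (t * y) (t * x) with h | h
  · exact core_ineq_aux (by positivity) h
  · have := core_ineq_aux (u := t * y) (v := t * x) (by positivity) h
    rw [abs_sub_comm (t * x), add_comm (t * x), ← abs_neg]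
    convert this using 2; ring

/-- Perturbation of a heat trace: replacing the exponents `mu` by `lam` changes the trace by
`-t ∑ (lam - mu)`, up to an error `O(t²)` that is uniform in `t ≥ 0`. -/
theorem pert {ι : Type*} {lam mu : ι → ℝ} (hl : ∀ i, 0 ≤ lam i) (hm : ∀ i, 0 ≤ mu i)
    (h1 : Summable fun i => lam i - mu i)
    (h2 : Summable fun i => (lam i + mu i) * |lam i - mu i|)
    {t : ℝ} (ht : 0 ≤ t) (hS : Summable fun i => exp (-t * mu i)) :
    (Summable fun i => exp (-t * lam i)) ∧
    |∑' i, exp (-t * lam i) - ∑' i, exp (-t * mu i) + t * ∑' i, (lam i - mu i)|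
      ≤ t ^ 2 * ∑' i, (lam i + mu i) * |lam i - mu i| := by
  have hb := fun i => core_ineq (hl i) (hm i) ht
  have hd : Summable fun i => exp (-t * lam i) - exp (-t * mu i) + t * (lam i - mu i) :=
    Summable.of_norm_bounded (h2.mul_left (t ^ 2)) hb
  have hE : Summable fun i => exp (-t * lam i) := by
    refine ((hd.add hS).sub (h1.mul_left t)).congr fun i => ?_
    ring
  refine ⟨hE, ?_⟩
  have := tsum_of_norm_bounded (f := fun i => exp (-t * lam i) - exp (-t * mu i) + t * (lam i - mu i))
    (h2.mul_left (t ^ 2)).hasSum hb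
  rwa [(hE.sub hS).tsum_add (h1.mul_left t), hE.tsum_sub hS, tsum_mul_left, tsum_mul_left,
    Real.norm_eq_abs] at this

theorem abs_int_sub_flux_pos {ν : ℝ} (h0 : 0 < ν) (h1 : ν < 1) (m : ℤ) :
    0 < |(m:ℝ) - ν| := by
  rw [abs_pos, sub_ne_zero]
  intro h
  rw [← h] at h0 h1
  norm_cast at h0 h1
  omega

/-- The model trace in closed form: the terms `m ≤ 0` and `m ≥ 1` are two geometric series. -/
theorem hasSum_flux {ν t : ℝ} (h0 : 0 < ν) (h1 : ν < 1) (ht : 0 < t) :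
    HasSum (fun m : ℤ => exp (-t * |(m:ℝ) - ν|))
      ((exp (-t * ν) + exp (-t * (1 - ν))) / (1 - exp (-t))) := by
  have hg := hasSum_geometric_of_lt_one (exp_pos (-t)).le (by rw [exp_lt_one_iff]; linarith)
  have hsplit : ∀ (c : ℝ) (n : ℕ), exp (-t * (n + c)) = exp (-t * c) * exp (-t) ^ n := by
    intro c n
    rw [← exp_nat_mul, ← exp_add]; ring_nf
  -- After `m ↦ -m` the split at zero becomes `m ≤ 0` versus `m ≥ 1`.
  rw [← (Equiv.neg ℤ).hasSum_iff]
  have := HasSum.of_nat_of_neg_add_one (f := (fun m : ℤ => exp (-t * |(m:ℝ) - ν|)) ∘ (Equiv.neg ℤ))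
    (m := exp (-t * ν) * (1 - exp (-t))⁻¹) (m' := exp (-t * (1 - ν)) * (1 - exp (-t))⁻¹) ?_ ?_
  · convert this using 1; ring
  · refine Eq.mp (congrArg (fun f => HasSum f _) (funext fun n => ?_)) (hg.mul_left (exp (-t * ν)))
    rw [← hsplit]
    have : |-(n:ℝ) - ν| = n + ν := by rw [abs_of_nonpos] <;> linarith [n.cast_nonneg (α := ℝ)]
    simp [this]
  · refine Eq.mp (congrArg (fun f => HasSum f _) (funext fun n => ?_)) (hg.mul_left (exp (-t * (1 - ν))))
    rw [← hsplit]
    have : |(n:ℝ) + 1 - ν| = n + (1 - ν) := by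
      rw [abs_of_nonneg] <;> linarith [n.cast_nonneg (α := ℝ)]
    simp [← this]

/-- Small-time expansion of the model trace, from the Taylor polynomials of the exponentials; the
constant `6` is not sharp. -/
theorem flux_expand {ν t : ℝ} (h0 : 0 < ν) (h1 : ν < 1) (ht : 0 < t) (ht1 : t ≤ 1) :
    |(exp (-t * ν) + exp (-t * (1 - ν))) / (1 - exp (-t)) - 2 / t - (1 / 6 - ν + ν ^ 2) * t|
      ≤ 6 * t ^ 2 := by
  have cub : ∀ c : ℝ, 0 < c → c < 1 →
      |exp (-t * c) - (1 - t * c + t ^ 2 * c ^ 2 / 2)| ≤ t ^ 3 / 3 := by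
    intro c hc hc1
    have hle : t * c ≤ 1 := by nlinarith
    have hp : 0 < t * c := by positivity
    have := Real.exp_bound (x := -t * c) (by rw [neg_mul, abs_neg, abs_of_pos hp]; exact hle)
      (n := 3) (by norm_num)
    rw [neg_mul, abs_neg, abs_of_pos hp] at this
    norm_num [Finset.sum_range_succ, Nat.factorial] at this
    have h3 : (t * c) ^ 3 ≤ t ^ 3 := by
      apply pow_le_pow_left₀ hp.le; nlinarith
    rw [neg_mul, abs_le] at *
    constructor <;> nlinarith [pow_pos ht 3]
  have quart : |exp (-t) - (1 - t + t ^ 2 / 2 - t ^ 3 / 6)| ≤ t ^ 4 / 6 := by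
    have := Real.exp_bound (x := -t) (by rwa [abs_neg, abs_of_pos ht]) (n := 4) (by norm_num)
    rw [abs_neg, abs_of_pos ht] at this
    norm_num [Finset.sum_range_succ, Nat.factorial] at this
    rw [abs_le] at *
    constructor <;> nlinarith [pow_pos ht 4]
  have hlow : t / 2 ≤ 1 - exp (-t) := by
    have := (abs_le.1 quart).2
    have h4 : t ^ 4 ≤ t ^ 3 := pow_le_pow_of_le_one ht.le ht1 (by norm_num)
    nlinarith
  set p := 1 / 6 - ν + ν ^ 2 with hp
  set e := exp (-t)
  set E₁ := exp (-t * ν)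
  set E₂ := exp (-t * (1 - ν))
  have hpabs : |p| ≤ 1 / 6 := by
    rw [abs_le]; constructor <;> nlinarith [sq_nonneg (ν - 1 / 2)]
  obtain ⟨r₁, hr₁⟩ : ∃ r, r = e - (1 - t + t ^ 2 / 2 - t ^ 3 / 6) := ⟨_, rfl⟩
  obtain ⟨r₂, hr₂⟩ : ∃ r, r = E₁ - (1 - t * ν + t ^ 2 * ν ^ 2 / 2) := ⟨_, rfl⟩
  obtain ⟨r₃, hr₃⟩ : ∃ r, r = E₂ - (1 - t * (1 - ν) + t ^ 2 * (1 - ν) ^ 2 / 2) := ⟨_, rfl⟩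
  have b₂ := cub ν h0 h1
  have b₃ := cub (1 - ν) (by linarith) (by linarith)
  rw [← hr₁] at quart
  rw [← hr₂] at b₂
  rw [← hr₃] at b₃
  have hpos : 0 < t * (1 - e) := by nlinarith
  have hne : 1 - e ≠ 0 := by nlinarith
  have key : (E₁ + E₂) / (1 - e) - 2 / t - p * t =
      (t * (r₂ + r₃) + r₁ * (2 + p * t ^ 2) + p * (t ^ 4 / 2 - t ^ 5 / 6)) / (t * (1 - e)) := by
    rw [eq_div_iff hpos.ne']
    have : ((E₁ + E₂) / (1 - e) - 2 / t - p * t) * (t * (1 - e))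
        = t * (E₁ + E₂) - (1 - e) * (2 + p * t ^ 2) := by
      field_simp
      ring
    rw [this, hr₁, hr₂, hr₃, hp]
    ring
  rw [key, abs_div, abs_of_pos hpos, div_le_iff₀ hpos]
  have t2 : t ^ 2 ≤ 1 := pow_le_one₀ ht.le ht1
  have t5 : t ^ 5 ≤ t ^ 4 := pow_le_pow_of_le_one ht.le ht1 (by norm_num)
  have c₁ : |t * (r₂ + r₃)| ≤ t * (t ^ 3 / 3 + t ^ 3 / 3) := by
    rw [abs_mul, abs_of_pos ht]
    gcongr
    exact (abs_add_le _ _).trans (add_le_add b₂ b₃)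
  have c₂ : |r₁ * (2 + p * t ^ 2)| ≤ t ^ 4 / 6 * 3 := by
    rw [abs_mul]
    gcongr
    have := abs_le.1 hpabs
    rw [abs_le]; constructor <;> nlinarith [sq_nonneg t]
  have c₃ : |p * (t ^ 4 / 2 - t ^ 5 / 6)| ≤ 1 / 6 * t ^ 4 := by
    rw [abs_mul]
    gcongr
    rw [abs_le]; constructor <;> nlinarith [pow_pos ht 4, pow_pos ht 5]
  calc _ ≤ t * (t ^ 3 / 3 + t ^ 3 / 3) + t ^ 4 / 6 * 3 + 1 / 6 * t ^ 4 :=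
        (abs_add_le _ _).trans (add_le_add ((abs_add_le _ _).trans (add_le_add c₁ c₂)) c₃)
    _ ≤ 6 * t ^ 2 * (t * (t / 2)) := by nlinarith [pow_pos ht 4]
    _ ≤ 6 * t ^ 2 * (t * (1 - e)) := by gcongr

/-- For `L = 1 + 1/R`, `K = 1/R - 1`, `σ = ±1` this says that a Steklov eigenvalue, in hyperbolic
form, is nonnegative and exponentially close to its linear asymptote `(L + σ K)/2 * x`. -/
theorem branch_bound {a x K L σ : ℝ} (ha : 0 < a) (hx : 0 < x) (hK : 0 < K) (hKL : K < L)
    (hσ : |σ| ≤ 1) :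
    0 ≤ x / (2 * sinh (a * x)) *
        (L * cosh (a * x) + σ * √(K ^ 2 * cosh (a * x) ^ 2 + (L ^ 2 - K ^ 2))) ∧
    |x / (2 * sinh (a * x)) *
        (L * cosh (a * x) + σ * √(K ^ 2 * cosh (a * x) ^ 2 + (L ^ 2 - K ^ 2)))
        - (L + σ * K) / 2 * x| ≤ (L + L ^ 2 / K) / a * exp (-a * x) := by
  have hL : 0 < L := hK.trans hKL
  have hax : 0 < a * x := by positivity
  have hs : 0 < sinh (a * x) := sinh_pos_iff.2 hax
  have hsx : a * x ≤ sinh (a * x) := self_le_sinh_iff.2 hax.le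
  have hc : 0 < cosh (a * x) := cosh_pos _
  have hcs := cosh_sq (a * x)
  have hsc := sinh_lt_cosh (a * x)
  have hce : exp (a * x) / 2 ≤ cosh (a * x) := by
    rw [cosh_eq]; linarith [exp_pos (-(a * x))]
  set c := cosh (a * x)
  set s := sinh (a * x)
  have hKL2 : 0 < L ^ 2 - K ^ 2 := by nlinarith
  have harg : 0 ≤ K ^ 2 * c ^ 2 + (L ^ 2 - K ^ 2) := by positivity
  have hQ0 := sqrt_nonneg (K ^ 2 * c ^ 2 + (L ^ 2 - K ^ 2))
  have hQ2 := sq_sqrt harg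
  set Q := √(K ^ 2 * c ^ 2 + (L ^ 2 - K ^ 2))
  have hQup : Q ≤ L * c := by
    apply le_of_sq_le_sq _ (by positivity)
    nlinarith
  have hQlow : K * c ≤ Q := by
    apply le_of_sq_le_sq _ hQ0
    nlinarith
  obtain ⟨hσ1, hσ2⟩ := abs_le.1 hσ
  refine ⟨mul_nonneg (by positivity) (by nlinarith), ?_⟩
  -- `c - s` and `Q - K s` are small because `c² - s² = 1` and `Q² - K² s² = L²`.
  have hd1 : c - s ≤ 1 / c := by
    rw [le_div_iff₀ hc]; nlinarith
  have hd2 : Q - K * s ≤ L ^ 2 / (K * c) := by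
    rw [le_div_iff₀ (by positivity)]
    nlinarith [mul_pos hK hs, mul_lt_mul_of_pos_left hsc hK]
  have hd3 : 0 ≤ Q - K * s := by nlinarith
  have e1 : x / (2 * s) * (L * c + σ * Q) - (L + σ * K) / 2 * x
      = x / (2 * s) * (L * (c - s) + σ * (Q - K * s)) := by
    field_simp; ring
  have hxs : x / (2 * s) ≤ 1 / (2 * a) := by
    rw [div_le_div_iff₀ (by positivity) (by positivity)]; nlinarith
  have hinv : 1 / c ≤ 2 * exp (-a * x) := by
    rw [div_le_iff₀ hc, neg_mul]
    have : exp (-(a * x)) * exp (a * x) = 1 := by rw [← exp_add]; simp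
    nlinarith [exp_pos (-(a * x))]
  rw [e1, abs_mul, abs_of_pos (by positivity : 0 < x / (2 * s))]
  have hb : |L * (c - s) + σ * (Q - K * s)| ≤ (L + L ^ 2 / K) * (1 / c) := by
    have h1 : |L * (c - s)| ≤ L * (1 / c) := by
      rw [abs_of_nonneg (mul_nonneg hL.le (by linarith))]; gcongr
    have h2 : |σ * (Q - K * s)| ≤ L ^ 2 / (K * c) := by
      rw [abs_mul, abs_of_nonneg hd3]
      nlinarith
    calc _ ≤ L * (1 / c) + L ^ 2 / (K * c) := (abs_add_le _ _).trans (add_le_add h1 h2)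
      _ = _ := by field_simp
  calc _ ≤ 1 / (2 * a) * ((L + L ^ 2 / K) * (2 * exp (-a * x))) := by
        gcongr
        exact hb.trans (by gcongr)
    _ = _ := by field_simp

/-- Heat trace expansion of one branch of the spectrum, in the notation of `branch_bound`. -/
theorem branch_trace {a K L σ ν : ℝ} (ha : 0 < a) (hK : 0 < K) (hKL : K < L)
    (hσ : |σ| ≤ 1) (h0 : 0 < ν) (h1 : ν < 1) (lam : ℤ → ℝ)
    (hlam : ∀ m : ℤ, lam m = |(m:ℝ) - ν| / (2 * sinh (a * |(m:ℝ) - ν|)) *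
        (L * cosh (a * |(m:ℝ) - ν|) +
          σ * √(K ^ 2 * cosh (a * |(m:ℝ) - ν|) ^ 2 + (L ^ 2 - K ^ 2)))) :
    (Summable fun m : ℤ => lam m - (L + σ * K) / 2 * |(m:ℝ) - ν|) ∧
    (∀ t : ℝ, 0 < t → Summable fun m : ℤ => exp (-t * lam m)) ∧
    (fun t : ℝ => ∑' m : ℤ, exp (-t * lam m) - 2 / ((L + σ * K) / 2 * t)
        - (1 / 6 - ν + ν ^ 2) * ((L + σ * K) / 2 * t)
        + t * ∑' m : ℤ, (lam m - (L + σ * K) / 2 * |(m:ℝ) - ν|))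
      =O[𝓝[>] (0:ℝ)] fun t : ℝ => t ^ 2 := by
  have hL : 0 < L := hK.trans hKL
  obtain ⟨hσ1, hσ2⟩ := abs_le.1 hσ
  have hκ : 0 < (L + σ * K) / 2 := by nlinarith
  have hκL : (L + σ * K) / 2 ≤ L := by nlinarith
  have hxpos := abs_int_sub_flux_pos h0 h1
  have hB := fun m : ℤ => branch_bound ha (hxpos m) hK hKL hσ
  simp only [← hlam] at hB
  set κ := (L + σ * K) / 2
  set C := (L + L ^ 2 / K) / a
  have hC : 0 < C := by positivity
  have hsum : ∀ b : ℝ, 0 < b → Summable fun m : ℤ => exp (-b * |(m:ℝ) - ν|) :=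
    fun b hb => (hasSum_flux h0 h1 hb).summable
  have S1 : Summable fun m : ℤ => lam m - κ * |(m:ℝ) - ν| :=
    Summable.of_norm_bounded ((hsum a ha).mul_left C) fun m => (hB m).2
  have S2 : Summable fun m : ℤ => (lam m + κ * |(m:ℝ) - ν|) * |lam m - κ * (|(m:ℝ) - ν|)| := by
    refine Summable.of_norm_bounded ((hsum (a / 2) (by positivity)).mul_left
      ((2 * L * (2 / a) + C) * C)) fun m => ?_
    obtain ⟨hl, hd⟩ := hB m
    have hx := hxpos m
    set x := |(m:ℝ) - ν|
    have hy : 0 ≤ κ * x := by positivity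
    rw [Real.norm_eq_abs, abs_of_nonneg (by positivity)]
    have he : exp (-a * x) = exp (-(a / 2) * x) * exp (-(a / 2) * x) := by
      rw [← exp_add]; ring_nf
    have he1 : exp (-(a / 2) * x) ≤ 1 := by
      rw [exp_le_one_iff]; nlinarith [mul_pos ha hx]
    have hp := exp_pos (-(a / 2) * x)
    have hxe : x * exp (-(a / 2) * x) ≤ 2 / a := by
      have h2 := add_one_le_exp (a / 2 * x)
      have h3 : exp (a / 2 * x) * exp (-(a / 2) * x) = 1 := by
        rw [← exp_add]; ring_nf; simp
      rw [le_div_iff₀ ha]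
      nlinarith
    set E := exp (-(a / 2) * x)
    rw [he] at hd
    have hsumb : lam m + κ * x ≤ 2 * L * x + C * (E * E) := by
      have := (abs_le.1 hd).2
      nlinarith
    -- Half of the exponential decay absorbs the linear growth of `lam m + κ x`.
    calc (lam m + κ * x) * |lam m - κ * x|
        ≤ (2 * L * x + C * (E * E)) * (C * (E * E)) := by gcongr
      _ = (2 * L * (x * E) + C * (E * E * E)) * C * E := by ring
      _ ≤ (2 * L * (2 / a) + C * (1 * 1 * 1)) * C * E := by gcongr
      _ = _ := by ring
  have hmul : ∀ t m, -t * (κ * |((m : ℤ):ℝ) - ν|) = -(κ * t) * |(m:ℝ) - ν| := by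
    intros; ring
  have hP := fun (t : ℝ) (ht : 0 < t) => pert (fun m => (hB m).1)
    (fun m => (mul_pos hκ (hxpos m)).le) S1 S2 ht.le
    (by simp only [hmul]; exact hsum _ (by positivity))
  refine ⟨S1, fun t ht => (hP t ht).1, ?_⟩
  refine IsBigO.of_bound (∑' m : ℤ, (lam m + κ * |(m:ℝ) - ν|) * |lam m - κ * (|(m:ℝ) - ν|)|
    + 6 * κ ^ 2) ?_
  filter_upwards [Ioc_mem_nhdsGT (show (0:ℝ) < 1 / κ by positivity)] with t ⟨ht, ht1⟩
  have hκt : κ * t ≤ 1 := by rw [le_div_iff₀ hκ] at ht1; linarith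
  have q1 := (hP t ht).2
  have q2 := flux_expand h0 h1 (mul_pos hκ ht) hκt
  rw [← (hasSum_flux h0 h1 (mul_pos hκ ht)).tsum_eq] at q2
  simp only [hmul] at q1
  rw [Real.norm_eq_abs, Real.norm_eq_abs, abs_of_pos (pow_pos ht 2)]
  calc _ ≤ _ := (congrArg abs (by ring)).trans_le ((abs_add_le _ _).trans (add_le_add q1 q2))
    _ = _ := by ring

/-- Heat trace expansion of the Aharonov–Bohm magnetic D-to-N map on the annulus
`{R < r < 1}`, `R = e^{-a}`, with flux `ν ∈ (0,1)`: the series defining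
`a₁(R,ν) = -(1 + 1/R) ∑_{m ∈ ℤ} |m-ν| (coth (a|m-ν|) - 1)` converges, and as `t → 0⁺`,
`∑_{m ∈ ℤ} (e^{-t λ_m⁺} + e^{-t λ_m⁻}) = (2+2R)/t
  + ((1 + R - 6ν - 6Rν + 6ν² + 6Rν²)/(6R) + a₁(R,ν)) t + O(t²)`. -/
theorem stmt_14 (a : ℝ) (ha : 0 < a) (R : ℝ) (hR : R = Real.exp (-a))
    (ν : ℝ) (hν : ν ∈ Set.Ioo (0:ℝ) 1)
    (lamP lamM : ℤ → ℝ)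
    (hlamP : ∀ m : ℤ, lamP m =
      (|(m:ℝ) - ν| / (2 * (R ^ |(m:ℝ) - ν| - R ^ (-|(m:ℝ) - ν|))))
        * (-(1 + 1/R) * (R ^ |(m:ℝ) - ν| + R ^ (-|(m:ℝ) - ν|))
            - Real.sqrt ((1 - 1/R)^2 * (R ^ |(m:ℝ) - ν| + R ^ (-|(m:ℝ) - ν|))^2
                + 16/R)))
    (hlamM : ∀ m : ℤ, lamM m =
      (|(m:ℝ) - ν| / (2 * (R ^ |(m:ℝ) - ν| - R ^ (-|(m:ℝ) - ν|))))
        * (-(1 + 1/R) * (R ^ |(m:ℝ) - ν| + R ^ (-|(m:ℝ) - ν|))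
            + Real.sqrt ((1 - 1/R)^2 * (R ^ |(m:ℝ) - ν| + R ^ (-|(m:ℝ) - ν|))^2
                + 16/R))) :
    (Summable fun m : ℤ => |(m:ℝ) - ν| * (Real.coth (a * |(m:ℝ) - ν|) - 1)) ∧
    (fun t : ℝ =>
        (∑' m : ℤ, (Real.exp (-t * lamP m) + Real.exp (-t * lamM m)))
          - (2 + 2*R)/t
          - ((1 + R - 6*ν - 6*R*ν + 6*ν^2 + 6*R*ν^2)/(6*R)
              + (-(1 + 1/R)
                  * ∑' m : ℤ, |(m:ℝ) - ν| * (Real.coth (a * |(m:ℝ) - ν|) - 1))) * t)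
      =O[𝓝[>] (0:ℝ)] fun t : ℝ => t^2 := by
  obtain ⟨h0, h1⟩ := hν
  have hR0 : 0 < R := hR ▸ exp_pos _
  have hR1 : R < 1 := by rw [hR, exp_lt_one_iff]; linarith
  have hRinv : 1 < 1 / R := by rw [lt_div_iff₀ hR0]; linarith
  have hK : 0 < 1 / R - 1 := by linarith
  have hKL : 1 / R - 1 < 1 + 1 / R := by linarith
  have hsinh : ∀ x : ℝ, R ^ x - R ^ (-x) = -(2 * sinh (a * x)) := by
    intro x
    rw [hR, ← exp_mul, ← exp_mul, sinh_eq]; ring_nf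
  have hcosh : ∀ x : ℝ, R ^ x + R ^ (-x) = 2 * cosh (a * x) := by
    intro x
    rw [hR, ← exp_mul, ← exp_mul, cosh_eq]; ring_nf
  have hsqrt : ∀ c : ℝ, √((1 - 1 / R) ^ 2 * (2 * c) ^ 2 + 16 / R)
      = 2 * √((1 / R - 1) ^ 2 * c ^ 2 + ((1 + 1 / R) ^ 2 - (1 / R - 1) ^ 2)) := by
    intro c
    have : (1 - 1 / R) ^ 2 * (2 * c) ^ 2 + 16 / R
        = 2 ^ 2 * ((1 / R - 1) ^ 2 * c ^ 2 + ((1 + 1 / R) ^ 2 - (1 / R - 1) ^ 2)) := by ring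
    rw [this, sqrt_mul (by norm_num), sqrt_sq (by norm_num)]
  have fP : ∀ m : ℤ, lamP m = |(m:ℝ) - ν| / (2 * sinh (a * |(m:ℝ) - ν|)) *
      ((1 + 1 / R) * cosh (a * |(m:ℝ) - ν|) + 1 * √((1 / R - 1) ^ 2 * cosh (a * |(m:ℝ) - ν|) ^ 2
        + ((1 + 1 / R) ^ 2 - (1 / R - 1) ^ 2))) := by
    intro m
    rw [hlamP, hsinh, hcosh, hsqrt, mul_neg, div_neg, ← mul_assoc 2 2, mul_assoc 2, ← div_div]
    ring
  have fM : ∀ m : ℤ, lamM m = |(m:ℝ) - ν| / (2 * sinh (a * |(m:ℝ) - ν|)) *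
      ((1 + 1 / R) * cosh (a * |(m:ℝ) - ν|) + (-1) * √((1 / R - 1) ^ 2 * cosh (a * |(m:ℝ) - ν|) ^ 2
        + ((1 + 1 / R) ^ 2 - (1 / R - 1) ^ 2))) := by
    intro m
    rw [hlamM, hsinh, hcosh, hsqrt]
    ring
  obtain ⟨SP, EP, OP⟩ := branch_trace ha hK hKL (by norm_num) h0 h1 lamP fP
  obtain ⟨SM, EM, OM⟩ := branch_trace ha hK hKL (by norm_num) h0 h1 lamM fM
  have hxpos := abs_int_sub_flux_pos h0 h1
  -- The limiting slopes of the two branches are `1/R` and `1`.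
  have k1 : (1 + 1 / R + 1 * (1 / R - 1)) / 2 = 1 / R := by ring
  have k2 : (1 + 1 / R + (-1) * (1 / R - 1)) / 2 = 1 := by ring
  simp only [k1] at SP OP
  simp only [k2] at SM OM
  have hcoth : ∀ m : ℤ, (1 + 1 / R) * (|(m:ℝ) - ν| * (Real.coth (a * |(m:ℝ) - ν|) - 1))
      = (lamP m - 1 / R * |(m:ℝ) - ν|)
        + (lamM m - 1 * |(m:ℝ) - ν|) := by
    intro m
    have hs : sinh (a * |(m:ℝ) - ν|) ≠ 0 := (sinh_pos_iff.2 (mul_pos ha (hxpos m))).ne'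
    rw [fP, fM, Real.coth]
    field_simp
    ring
  have hL : (1 + 1 / R) ≠ 0 := by linarith
  have Sc : Summable fun m : ℤ => |(m:ℝ) - ν| * (Real.coth (a * |(m:ℝ) - ν|) - 1) := by
    rw [← summable_mul_left_iff hL]
    exact (SP.add SM).congr fun m => (hcoth m).symm
  refine ⟨Sc, (OP.add OM).congr' ?_ EventuallyEq.rfl⟩
  filter_upwards [self_mem_nhdsWithin] with t (ht : 0 < t)
  have hT : (1 + 1 / R) * ∑' m : ℤ, |(m:ℝ) - ν| * (Real.coth (a * |(m:ℝ) - ν|) - 1)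
      = ∑' m : ℤ, (lamP m - 1 / R * |(m:ℝ) - ν|) + ∑' m : ℤ, (lamM m - 1 * |(m:ℝ) - ν|) := by
    rw [← tsum_mul_left, tsum_congr hcoth, SP.tsum_add SM]
  rw [(EP t ht).tsum_add (EM t ht), neg_mul, hT]
  generalize ∑' m : ℤ, (lamP m - 1 / R * |(m:ℝ) - ν|) = A
  generalize ∑' m : ℤ, (lamM m - 1 * |(m:ℝ) - ν|) = B
  field_simp
  ring
end

section
/- Let a > 0 and ν ∈ (0, 1). Then, as t → 0⁺, ∑_{m ∈ ℤ} exp(−t·|m − ν|·coth(a|m − ν|)) = 2/t + (1/6 − ν + ν² + ã₁(a, ν))·t + O(t²), where ã₁(a, ν) = −∑_{m ∈ ℤ} |m − ν|·(coth(a|m − ν|) − 1). -/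
/-!
Write `x = |m - ν|` and `d = x (coth (a x) - 1) ≥ 0`, so that the `m`-th eigenvalue is `x + d`.

* The unperturbed trace `∑ e^{-t x}` is a sum of geometric series, equal to
  `(e^{-tν} + e^{-t(1-ν)}) / (1 - e^{-t})` (`hasSum_exp_neg_abs`); Taylor expansion of the
  exponentials gives `2/t + (1/6 - ν + ν²) t + O(t²)` (`free_trace_expansion`).
* Since `sinh y ≥ y`, one has `0 ≤ coth y - 1 = e^{-y} / sinh y ≤ e^{-y} / y`, hence
  `0 ≤ d ≤ e^{-a x} / a`. So `∑ d` and `∑ d x` converge, again by comparison with geometric series.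
* Termwise, `|e^{-t(x+d)} - e^{-tx} + t d| ≤ t² (d² + d x)` (`exp_perturbation`). Summing over `m`,
  replacing `x` by `x + d` changes the trace by `-t ∑ d + O(t²)`.
-/

open Real Filter Asymptotics Topology

/-- The trace of the unperturbed operator, with eigenvalues `|m - ν|`, in closed form. -/
theorem hasSum_exp_neg_abs {ν t : ℝ} (hν : ν ∈ Set.Ioo (0:ℝ) 1) (ht : 0 < t) :
    HasSum (fun m : ℤ => Real.exp (-t * |(m:ℝ) - ν|))
      ((Real.exp (-t * ν) + Real.exp (-t * (1 - ν))) / (1 - Real.exp (-t))) := by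
  obtain ⟨h0, h1⟩ := hν
  have hq : Real.exp (-t) < 1 := by rw [Real.exp_lt_one_iff]; linarith
  have hgeo := hasSum_geometric_of_lt_one (Real.exp_pos (-t)).le hq
  have hpos : HasSum (fun n : ℕ => Real.exp (-t * |(((n:ℤ) + 1 : ℤ) : ℝ) - ν|))
      (Real.exp (-t * (1 - ν)) * (1 - Real.exp (-t))⁻¹) := by
    refine (hgeo.mul_left _).congr_fun ?_
    intro n
    have hn : (0:ℝ) ≤ n := n.cast_nonneg
    push_cast
    rw [abs_of_pos (by linarith), ← Real.exp_nat_mul, ← Real.exp_add]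
    congr 1; ring
  have hneg : HasSum (fun n : ℕ => Real.exp (-t * |((-((n:ℤ) + 1) : ℤ) : ℝ) - ν|))
      (Real.exp (-t * (1 + ν)) * (1 - Real.exp (-t))⁻¹) := by
    refine (hgeo.mul_left _).congr_fun ?_
    intro n
    have hn : (0:ℝ) ≤ n := n.cast_nonneg
    push_cast
    rw [abs_of_neg (by linarith), ← Real.exp_nat_mul, ← Real.exp_add]
    congr 1; ring
  have h := HasSum.of_add_one_of_neg_add_one
    (f := fun m : ℤ => Real.exp (-t * |(m:ℝ) - ν|)) hpos hneg
  convert h using 1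
  have e1 : Real.exp (-t * (1 + ν)) = Real.exp (-t) * Real.exp (-t * ν) := by
    rw [← Real.exp_add]; congr 1; ring
  have e2 : |((0:ℤ):ℝ) - ν| = ν := by
    rw [Int.cast_zero, zero_sub, abs_neg, abs_of_pos h0]
  have h3 : 1 - Real.exp (-t) ≠ 0 := by linarith
  rw [e1, e2]
  field_simp
  ring

theorem free_trace_expansion {ν t : ℝ} (hν : ν ∈ Set.Ioo (0:ℝ) 1) (ht : 0 < t) (ht1 : t ≤ 1) :
    |(Real.exp (-t * ν) + Real.exp (-t * (1 - ν))) / (1 - Real.exp (-t)) - 2 / t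
      - (1/6 - ν + ν^2) * t| ≤ 14 * t^2 := by
  obtain ⟨h0, h1⟩ := hν
  -- second-order Taylor polynomial of `exp (-t s)` for `s ∈ [0, 1]`
  have taylor2 : ∀ s : ℝ, 0 ≤ s → s ≤ 1 →
      |Real.exp (-t * s) - (1 - t * s + (t * s)^2 / 2)| ≤ t^3 := by
    intro s hs hs1
    have hts : t * s ≤ t := by nlinarith
    have hts0 : 0 ≤ t * s := by positivity
    have habs : |-t * s| = t * s := by rw [neg_mul, abs_neg, abs_of_nonneg hts0]
    have h := Real.exp_bound (x := -t * s) (by rw [habs]; linarith) (n := 3) (by norm_num)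
    rw [habs] at h
    rw [neg_mul] at h ⊢
    have hp : (t * s)^3 ≤ t^3 := by gcongr
    have hp0 : 0 ≤ (t * s)^3 := by positivity
    simp only [Finset.sum_range_succ, Finset.sum_range_zero, Nat.factorial] at h
    norm_num at h
    rw [abs_le] at h ⊢
    constructor <;> nlinarith [h.1, h.2]
  have hr1 := taylor2 ν h0.le h1.le
  have hr2 := taylor2 (1 - ν) (by linarith) (by linarith)
  have hr3 : |Real.exp (-t) - (1 - t + t^2 / 2 - t^3 / 6)| ≤ t^4 := by
    have habs : |-t| = t := by rw [abs_neg, abs_of_pos ht]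
    have h := Real.exp_bound (x := -t) (by rw [habs]; linarith) (n := 4) (by norm_num)
    rw [habs] at h
    have hp0 : 0 ≤ t^4 := by positivity
    simp only [Finset.sum_range_succ, Finset.sum_range_zero, Nat.factorial] at h
    norm_num at h
    rw [abs_le] at h ⊢
    constructor <;> nlinarith [h.1, h.2]
  have hden : t / 2 ≤ 1 - Real.exp (-t) := by
    have h2 : Real.exp (-t) * (1 + t) ≤ 1 := by
      calc Real.exp (-t) * (1 + t) ≤ Real.exp (-t) * Real.exp t := by
            gcongr; linarith [Real.add_one_le_exp t]
        _ = 1 := by rw [← Real.exp_add]; simp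
    nlinarith
  have hB : |1/6 - ν + ν^2| ≤ 1 := by rw [abs_le]; constructor <;> nlinarith
  set r1 := Real.exp (-t * ν) - (1 - t * ν + (t * ν)^2 / 2) with d1
  set r2 := Real.exp (-t * (1 - ν)) - (1 - t * (1 - ν) + (t * (1 - ν))^2 / 2) with d2
  set r3 := Real.exp (-t) - (1 - t + t^2 / 2 - t^3 / 6) with d3
  set B := 1/6 - ν + ν^2 with dB
  have hden0 : 0 < 1 - Real.exp (-t) := by linarith
  have hnum : t * (Real.exp (-t * ν) + Real.exp (-t * (1 - ν)))
      - 2 * (1 - Real.exp (-t)) - B * t^2 * (1 - Real.exp (-t))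
      = t * r1 + t * r2 + 2 * r3 + B * (t^4 / 2) + B * (-(t^5 / 6)) + B * (t^2 * r3) := by
    rw [d1, d2, d3, dB]; ring
  have h5 : t^5 ≤ t^4 := pow_le_pow_of_le_one ht.le ht1 (by norm_num)
  have h6 : t^6 ≤ t^4 := pow_le_pow_of_le_one ht.le ht1 (by norm_num)
  have hmulB : ∀ y : ℝ, |y| ≤ t^4 → |B * y| ≤ t^4 := by
    intro y hy
    rw [abs_mul]
    exact (mul_le_of_le_one_left (abs_nonneg y) hB).trans hy
  have ht4 : 0 ≤ t^4 := by positivity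
  have ht5 : 0 ≤ t^5 := by positivity
  have b1 : |t * r1| ≤ t^4 := by
    rw [abs_mul, abs_of_pos ht, pow_succ' t 3]; gcongr
  have b2 : |t * r2| ≤ t^4 := by
    rw [abs_mul, abs_of_pos ht, pow_succ' t 3]; gcongr
  have b4 := hmulB (t^4 / 2) (by rw [abs_of_nonneg (by positivity)]; linarith)
  have b5 := hmulB (-(t^5 / 6)) (by rw [abs_neg, abs_of_nonneg (by positivity)]; linarith)
  have b6 := hmulB (t^2 * r3) (by
    rw [abs_mul, abs_of_nonneg (by positivity : (0:ℝ) ≤ t^2)]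
    calc t^2 * |r3| ≤ t^2 * t^4 := by gcongr
      _ = t^6 := by ring
      _ ≤ t^4 := h6)
  have hN : |t * (Real.exp (-t * ν) + Real.exp (-t * (1 - ν)))
      - 2 * (1 - Real.exp (-t)) - B * t^2 * (1 - Real.exp (-t))| ≤ 7 * t^4 := by
    rw [hnum]
    have c1 := abs_le.mp b1
    have c2 := abs_le.mp b2
    have c3 := abs_le.mp hr3
    have c4 := abs_le.mp b4
    have c5 := abs_le.mp b5
    have c6 := abs_le.mp b6
    rw [abs_le]
    constructor <;> linarith only [c1.1, c1.2, c2.1, c2.2, c3.1, c3.2, c4.1, c4.2, c5.1, c5.2,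
      c6.1, c6.2]
  have hfrac : (Real.exp (-t * ν) + Real.exp (-t * (1 - ν))) / (1 - Real.exp (-t)) - 2 / t - B * t
      = (t * (Real.exp (-t * ν) + Real.exp (-t * (1 - ν)))
      - 2 * (1 - Real.exp (-t)) - B * t^2 * (1 - Real.exp (-t))) / (t * (1 - Real.exp (-t))) := by
    have := hden0.ne'
    field_simp
  rw [hfrac, abs_div, abs_of_pos (mul_pos ht hden0), div_le_iff₀ (mul_pos ht hden0)]
  refine hN.trans ?_
  have : 14 * t^2 * (t * (t / 2)) ≤ 14 * t^2 * (t * (1 - Real.exp (-t))) := by gcongr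
  nlinarith

theorem coth_sub_one {y : ℝ} (hy : 0 < y) : Real.coth y - 1 = Real.exp (-y) / Real.sinh y := by
  have hs : Real.sinh y ≠ 0 := (Real.sinh_pos_iff.mpr hy).ne'
  rw [Real.coth, div_sub_one hs, Real.cosh_sub_sinh]

theorem coth_sub_one_nonneg_s15 {y : ℝ} (hy : 0 < y) : 0 ≤ Real.coth y - 1 := by
  rw [coth_sub_one hy]
  exact div_nonneg (Real.exp_pos _).le (Real.sinh_pos_iff.mpr hy).le

theorem coth_sub_one_le_s15 {y : ℝ} (hy : 0 < y) : Real.coth y - 1 ≤ Real.exp (-y) / y := by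
  rw [coth_sub_one hy]
  gcongr
  exact Real.self_le_sinh_iff.mpr hy.le

/-- First-order effect on `exp (-t x)` of moving `x` to `x + d`. -/
theorem exp_perturbation {t x d : ℝ} (ht : 0 ≤ t) (hx : 0 ≤ x) (hd : 0 ≤ d) :
    |Real.exp (-t * (x + d)) - Real.exp (-t * x) + t * d| ≤ t^2 * (d^2 + d * x) := by
  have htd : 0 ≤ t * d := by positivity
  have htx : 0 ≤ t * x := by positivity
  have hsplit : Real.exp (-t * (x + d)) = Real.exp (-(t * x)) * Real.exp (-(t * d)) := by
    rw [← Real.exp_add]; congr 1; ring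
  have hE : Real.exp (-t * x) = Real.exp (-(t * x)) := by congr 1; ring
  -- `0 ≤ e^{-u} - 1 + u ≤ u²` for `u ≥ 0`; the upper bound comes from `e^{-u} ≤ 1 / (1 + u)`
  have hl : 0 ≤ Real.exp (-(t * d)) - 1 + t * d := by
    linarith [Real.add_one_le_exp (-(t * d))]
  have hu : Real.exp (-(t * d)) - 1 + t * d ≤ (t * d)^2 := by
    have h2 : Real.exp (-(t * d)) * (1 + t * d) ≤ 1 := by
      calc Real.exp (-(t * d)) * (1 + t * d) ≤ Real.exp (-(t * d)) * Real.exp (t * d) := by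
            gcongr; linarith [Real.add_one_le_exp (t * d)]
        _ = 1 := by rw [← Real.exp_add]; simp
    nlinarith [sq_nonneg (t * d), pow_nonneg htd 3]
  have hE1 : Real.exp (-(t * x)) ≤ 1 := by rw [Real.exp_le_one_iff]; linarith
  have hE0 := Real.exp_pos (-(t * x))
  have hE2 : 1 - t * x ≤ Real.exp (-(t * x)) := by linarith [Real.add_one_le_exp (-(t * x))]
  have hid : Real.exp (-t * (x + d)) - Real.exp (-t * x) + t * d
      = Real.exp (-(t * x)) * (Real.exp (-(t * d)) - 1 + t * d)
        + t * d * (1 - Real.exp (-(t * x))) := by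
    rw [hsplit, hE]; ring
  have p1 := mul_nonneg hE0.le hl
  have p2 := mul_nonneg htd (sub_nonneg.mpr hE1)
  have p3 := mul_le_of_le_one_left hl hE1
  have p4 : t * d * (1 - Real.exp (-(t * x))) ≤ t * d * (t * x) := by gcongr; linarith
  rw [hid, abs_of_nonneg (add_nonneg p1 p2)]
  nlinarith

/-- Heat trace expansion of the partial Aharonov–Bohm D-to-N map on the annulus
`{e^{-a} < r < 1}` with flux `ν ∈ (0,1)`: the series defining
`ã₁(a,ν) = -∑_{m ∈ ℤ} |m-ν| (coth (a|m-ν|) - 1)` converges, and as `t → 0⁺`,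
`∑_{m ∈ ℤ} e^{-t |m-ν| coth (a|m-ν|)} = 2/t + (1/6 - ν + ν² + ã₁(a,ν)) t + O(t²)`. -/
theorem stmt_15 (a ν : ℝ) (ha : 0 < a) (hν : ν ∈ Set.Ioo (0:ℝ) 1) :
    (Summable fun m : ℤ => |(m:ℝ) - ν| * (Real.coth (a * |(m:ℝ) - ν|) - 1)) ∧
    (fun t : ℝ =>
        (∑' m : ℤ, Real.exp (-t * (|(m:ℝ) - ν| * Real.coth (a * |(m:ℝ) - ν|))))
          - 2/t
          - (1/6 - ν + ν^2
              + (- ∑' m : ℤ, |(m:ℝ) - ν| * (Real.coth (a * |(m:ℝ) - ν|) - 1))) * t)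
      =O[𝓝[>] (0:ℝ)] fun t : ℝ => t^2 := by
  have hx : ∀ m : ℤ, 0 < |(m:ℝ) - ν| := by
    intro m
    rw [abs_pos, sub_ne_zero]
    rintro rfl
    obtain ⟨h0, h1⟩ := hν
    have h0' : (0:ℤ) < m := by exact_mod_cast h0
    have h1' : m < (1:ℤ) := by exact_mod_cast h1
    omega
  set x : ℤ → ℝ := fun m => |(m:ℝ) - ν| with hxdef
  set d : ℤ → ℝ := fun m => |(m:ℝ) - ν| * (Real.coth (a * |(m:ℝ) - ν|) - 1) with hddef
  have hd0 : ∀ m, 0 ≤ d m := fun m =>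
    mul_nonneg (hx m).le (coth_sub_one_nonneg_s15 (mul_pos ha (hx m)))
  have hd1 : ∀ m, d m ≤ Real.exp (-a * x m) / a := by
    intro m
    have hm : 0 < x m := hx m
    calc d m ≤ x m * (Real.exp (-(a * x m)) / (a * x m)) :=
          mul_le_mul_of_nonneg_left (coth_sub_one_le_s15 (mul_pos ha hm)) hm.le
      _ = Real.exp (-a * x m) / a := by rw [neg_mul]; field_simp
  have hsd : Summable d :=
    Summable.of_nonneg_of_le hd0 hd1 ((hasSum_exp_neg_abs hν ha).summable.div_const a)
  have hd2 : ∀ m, d m ≤ 1 / a := by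
    intro m
    refine (hd1 m).trans ?_
    gcongr
    rw [Real.exp_le_one_iff]
    nlinarith [mul_pos ha (hx m)]
  have hsdd : Summable fun m => (d m)^2 := by
    refine Summable.of_nonneg_of_le (fun m => sq_nonneg _) (fun m => ?_) (hsd.mul_left (1 / a))
    rw [sq]
    exact mul_le_mul_of_nonneg_right (hd2 m) (hd0 m)
  have hsdx : Summable fun m => d m * x m := by
    refine Summable.of_nonneg_of_le (fun m => mul_nonneg (hd0 m) (hx m).le) (fun m => ?_)
      ((hasSum_exp_neg_abs hν (half_pos ha)).summable.mul_left (2 / a^2))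
    have hm : 0 < x m := hx m
    -- half of the exponential decay absorbs the factor `x m`
    have h1 : a / 2 * x m ≤ Real.exp (a / 2 * x m) := by
      linarith [Real.add_one_le_exp (a / 2 * x m)]
    have h2 : x m ≤ 2 / a * Real.exp (a / 2 * x m) := by
      calc x m = 2 / a * (a / 2 * x m) := by field_simp
        _ ≤ _ := by gcongr
    calc d m * x m ≤ Real.exp (-a * x m) / a * (2 / a * Real.exp (a / 2 * x m)) :=
          mul_le_mul (hd1 m) h2 hm.le (by positivity)
      _ = 2 / a^2 * (Real.exp (-a * x m) * Real.exp (a / 2 * x m)) := by field_simp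
      _ = 2 / a^2 * Real.exp (-(a / 2) * x m) := by
          rw [← Real.exp_add]; congr 2; ring
  refine ⟨hsd, ?_⟩
  set C := ∑' m, ((d m)^2 + d m * x m) with hC
  have hCsum : HasSum (fun m => (d m)^2 + d m * x m) C := (hsdd.add hsdx).hasSum
  refine IsBigO.of_bound (14 + C) ?_
  filter_upwards [Ioc_mem_nhdsGT (zero_lt_one' ℝ)] with t ht
  obtain ⟨ht0, ht1⟩ := ht
  have hy : ∀ m : ℤ, |(m:ℝ) - ν| * Real.coth (a * |(m:ℝ) - ν|) = x m + d m := by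
    intro m; simp only [hxdef, hddef]; ring
  simp only [hy]
  have hfree : HasSum (fun m => Real.exp (-t * x m)) _ := hasSum_exp_neg_abs hν ht0
  have hsy : Summable fun m => Real.exp (-t * (x m + d m)) := by
    refine Summable.of_nonneg_of_le (fun m => (Real.exp_pos _).le) (fun m => ?_) hfree.summable
    rw [Real.exp_le_exp]
    nlinarith [mul_nonneg ht0.le (hd0 m)]
  have hpert := (hsy.hasSum.sub hfree).add (hsd.hasSum.mul_left t)
  have hpert_le : ‖∑' m, (Real.exp (-t * (x m + d m)) - Real.exp (-t * x m) + t * d m)‖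
      ≤ t^2 * C :=
    tsum_of_norm_bounded (hCsum.mul_left (t^2))
      (fun m => exp_perturbation ht0.le (hx m).le (hd0 m))
  rw [hpert.tsum_eq, Real.norm_eq_abs] at hpert_le
  have hmain := free_trace_expansion hν ht0 ht1
  rw [Real.norm_eq_abs, Real.norm_eq_abs, abs_of_nonneg (sq_nonneg t)]
  rw [abs_le] at hmain hpert_le ⊢
  constructor <;> linarith only [hmain.1, hmain.2, hpert_le.1, hpert_le.2]
end
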